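/- Let α be a countable ordinal with α > 1 and let (G_β) for 1 ≤ β < α be a family of nontrivial countable discrete amenable groups. Then there exist a complex Hilbert space 𝓗, a hyperfinite II₁ factor R on 𝓗, and a masa A ⊆ R such that: (i) the normalizer tower satisfies 𝒩^α(A) = R and 𝒩^β(A) ≠ 𝒩^{β+1}(A) for every β < α (so A has length exactly α); (ii) 𝒩¹(A) = N_R(A)'' is a factor distinct from R (i.e. A is semi-regular); (iii) for every β with 1 ≤ β < α, the unitary group U(𝒩^β(A)) is a normal subgroup of the normalizer group N_R(𝒩^β(A)), and the quotient group N_R(𝒩^β(A)) / U(𝒩^β(A)) is isomorphic to G_β. -/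

import Mathlib

noncomputable section

/-- A group `G` is amenable if it carries a left-invariant finitely additive
probability measure defined on all subsets of `G`. -/
def IsAmenable (G : Type*) [Group G] : Prop :=
  ∃ μ : Set G → ℝ,
    (∀ s : Set G, 0 ≤ μ s) ∧
    μ Set.univ = 1 ∧
    (∀ s t : Set G, s ∩ t = ∅ → μ (s ∪ t) = μ s + μ t) ∧
    (∀ (g : G) (s : Set G), μ ((fun x => g * x) '' s) = μ s)

variable {𝓗 : Type} [NormedAddCommGroup 𝓗] [InnerProductSpace ℂ 𝓗] [CompleteSpace 𝓗]

/-- The von Neumann algebra (double commutant) generated by a subset of `B(𝓗)`. -/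
def vNGen (S : Set (𝓗 →L[ℂ] 𝓗)) : Set (𝓗 →L[ℂ] 𝓗) :=
  Set.centralizer (Set.centralizer S)

/-- The set `N_M(B)` of unitaries of the von Neumann algebra `M` normalising the
subset `B`. -/
def normSet (M : VonNeumannAlgebra 𝓗) (B : Set (𝓗 →L[ℂ] 𝓗)) : Set (𝓗 →L[ℂ] 𝓗) :=
  {u | u ∈ M ∧ u ∈ unitary (𝓗 →L[ℂ] 𝓗) ∧ (fun x => u * x * star u) '' B = B}

/-- The normalizer tower `𝒩^α(A)` of a subset `A` of the von Neumann algebra `M`: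
`𝒩⁰(A) = A`, `𝒩^{β+1}(A) = (N_M(𝒩^β(A)))''`, and at limit ordinals
`𝒩^β(A) = (⋃_{γ<β} 𝒩^γ(A))''`. -/
def tower (M : VonNeumannAlgebra 𝓗) (A : Set (𝓗 →L[ℂ] 𝓗)) (o : Ordinal) :
    Set (𝓗 →L[ℂ] 𝓗) :=
  Ordinal.limitRecOn o A
    (fun _ B => vNGen (normSet M B))
    (fun o _ ih => vNGen (⋃ (γ : Ordinal) (h : γ < o), ih γ h))

/-- A subset of `B(𝓗)` is a factor if it meets its commutant exactly in the scalars. -/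
def IsFactorSet (C : Set (𝓗 →L[ℂ] 𝓗)) : Prop :=
  C ∩ Set.centralizer C = Set.range (fun z : ℂ => z • (1 : 𝓗 →L[ℂ] 𝓗))

/-- A von Neumann algebra `R` is hyperfinite if it is generated by an increasing
sequence of finite-dimensional *-subalgebras. -/
def IsHyperfinite (R : VonNeumannAlgebra 𝓗) : Prop :=
  ∃ Mseq : ℕ → StarSubalgebra ℂ (𝓗 →L[ℂ] 𝓗),
    Monotone Mseq ∧
    (∀ n, FiniteDimensional ℂ (Mseq n)) ∧
    (∀ n, (Mseq n : Set (𝓗 →L[ℂ] 𝓗)) ⊆ (R : Set (𝓗 →L[ℂ] 𝓗))) ∧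
    vNGen (⋃ n, (Mseq n : Set (𝓗 →L[ℂ] 𝓗))) = (R : Set (𝓗 →L[ℂ] 𝓗))

/-- `R` is a II₁ factor: a finite factor that is infinite-dimensional over `ℂ`. -/
def IsIIOneFactor (R : VonNeumannAlgebra 𝓗) : Prop :=
  IsFactorSet (R : Set (𝓗 →L[ℂ] 𝓗)) ∧
  (∀ v ∈ R, star v * v = 1 → v * star v = 1) ∧
  ¬ ∃ s : Finset (𝓗 →L[ℂ] 𝓗),
      (R : Set (𝓗 →L[ℂ] 𝓗)) ⊆ (Submodule.span ℂ (s : Set (𝓗 →L[ℂ] 𝓗)) : Set (𝓗 →L[ℂ] 𝓗))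

open scoped InnerProductSpace ComplexConjugate

section Ell2

/-- The Hilbert space `ℓ²(X)`. -/
abbrev Ell2 (X : Type) : Type := lp (fun _ : X => ℂ) 2

namespace Ell2

variable {X : Type}

open Classical in
/-- The canonical basis vector at `x`. -/
def basis (x : X) : Ell2 X := lp.single 2 x 1

open Classical in
theorem basis_apply (x y : X) : basis x y = if y = x then 1 else 0 := by
  rw [basis, lp.single_apply, Pi.single_apply]

theorem inner_basis_left (x : X) (ξ : Ell2 X) : ⟪basis x, ξ⟫_ℂ = ξ x := by
  classical
  have := lp.inner_single_left (𝕜 := ℂ) x (1 : ℂ) ξ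
  rw [basis]
  convert this using 1
  simp

theorem summable_norm_sq (ξ : Ell2 X) : Summable fun x => ‖ξ x‖ ^ 2 := by
  have := lp.memℓp ξ
  rw [memℓp_gen_iff (by norm_num)] at this
  simpa using this

theorem memℓp_two_iff {f : X → ℂ} : Memℓp f 2 ↔ Summable fun x => ‖f x‖ ^ 2 := by
  rw [memℓp_gen_iff (by norm_num)]
  simp

theorem norm_sq_eq_tsum (ξ : Ell2 X) : ‖ξ‖ ^ 2 = ∑' x, ‖ξ x‖ ^ 2 := by
  have := lp.norm_rpow_eq_tsum (p := 2) (by norm_num) ξ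
  simpa using this

theorem summable_comp_equiv (e : X ≃ X) (ξ : Ell2 X) : Summable fun x => ‖ξ (e x)‖ ^ 2 :=
  (e.summable_iff (f := fun x => ‖ξ x‖ ^ 2)).2 (summable_norm_sq ξ)

/-- The unitary operator on `ℓ²(X)` induced by a permutation of `X`. -/
def permOp (e : Equiv.Perm X) : Ell2 X →L[ℂ] Ell2 X :=
  LinearMap.mkContinuous
    { toFun := fun ξ => ⟨fun x => ξ (e.symm x), memℓp_two_iff.2 (summable_comp_equiv e.symm ξ)⟩
      map_add' := fun _ _ => rfl
      map_smul' := fun _ _ => rfl } 1 (by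
    intro ξ
    rw [one_mul]
    refine le_of_eq ((sq_eq_sq₀ (norm_nonneg _) (norm_nonneg _)).1 ?_)
    rw [norm_sq_eq_tsum, norm_sq_eq_tsum]
    exact e.symm.tsum_eq (fun x => ‖ξ x‖ ^ 2))

@[simp]
theorem permOp_apply (e : Equiv.Perm X) (ξ : Ell2 X) (x : X) : permOp e ξ x = ξ (e.symm x) := rfl

theorem indicator_norm_sq_le (S : Set X) (ξ : Ell2 X) (x : X) :
    ‖S.indicator ξ x‖ ^ 2 ≤ ‖ξ x‖ ^ 2 := by
  by_cases h : x ∈ S <;> simp [h]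

theorem summable_indicator (S : Set X) (ξ : Ell2 X) :
    Summable fun x => ‖S.indicator ξ x‖ ^ 2 :=
  Summable.of_nonneg_of_le (fun _ => sq_nonneg _) (indicator_norm_sq_le S ξ) (summable_norm_sq ξ)

/-- The projection of `ℓ²(X)` onto `ℓ²(S)`. -/
def proj (S : Set X) : Ell2 X →L[ℂ] Ell2 X :=
  LinearMap.mkContinuous
    { toFun := fun ξ => ⟨S.indicator ξ, memℓp_two_iff.2 (summable_indicator S ξ)⟩
      map_add' := fun ξ η => by
        apply lp.ext
        exact Set.indicator_add S ξ η
      map_smul' := fun c ξ => by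
        apply lp.ext
        exact Set.indicator_const_smul S c ξ } 1 (by
    intro ξ
    rw [one_mul]
    refine (sq_le_sq₀ (norm_nonneg _) (norm_nonneg _)).1 ?_
    rw [norm_sq_eq_tsum, norm_sq_eq_tsum]
    exact Summable.tsum_le_tsum (indicator_norm_sq_le S ξ) (summable_indicator S ξ)
      (summable_norm_sq ξ))

theorem proj_apply (S : Set X) (ξ : Ell2 X) (x : X) : proj S ξ x = S.indicator ξ x := rfl

/-- The matrix coefficients of an operator on `ℓ²(X)`. -/
def coef (T : Ell2 X →L[ℂ] Ell2 X) (x y : X) : ℂ := T (basis y) x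

theorem coef_eq_inner (T : Ell2 X →L[ℂ] Ell2 X) (x y : X) :
    coef T x y = ⟪basis x, T (basis y)⟫_ℂ := (inner_basis_left _ _).symm

theorem coef_star (T : Ell2 X →L[ℂ] Ell2 X) (x y : X) : coef (star T) x y = conj (coef T y x) := by
  rw [coef_eq_inner, coef_eq_inner, ContinuousLinearMap.star_eq_adjoint,
    ContinuousLinearMap.adjoint_inner_right, inner_conj_symm]

theorem apply_eq_inner (T : Ell2 X →L[ℂ] Ell2 X) (ξ : Ell2 X) (x : X) :
    T ξ x = ⟪star T (basis x), ξ⟫_ℂ := by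
  rw [← inner_basis_left, ContinuousLinearMap.star_eq_adjoint,
    ContinuousLinearMap.adjoint_inner_left]

theorem hasSum_apply (T : Ell2 X →L[ℂ] Ell2 X) (ξ : Ell2 X) (x : X) :
    HasSum (fun z => coef T x z * ξ z) (T ξ x) := by
  rw [apply_eq_inner]
  refine (lp.hasSum_inner (𝕜 := ℂ) (star T (basis x)) ξ).congr_fun fun z => ?_
  have := coef_star T z x
  rw [coef] at this
  rw [this, RCLike.inner_apply, RCLike.conj_conj, mul_comm]

theorem hasSum_coef_mul (S T : Ell2 X →L[ℂ] Ell2 X) (x y : X) :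
    HasSum (fun z => coef S x z * coef T z y) (coef (S * T) x y) :=
  hasSum_apply S (T (basis y)) x

theorem coef_mul (S T : Ell2 X →L[ℂ] Ell2 X) (x y : X) :
    coef (S * T) x y = ∑' z, coef S x z * coef T z y :=
  (hasSum_coef_mul S T x y).tsum_eq.symm

theorem coef_ext {S T : Ell2 X →L[ℂ] Ell2 X} (h : ∀ x y, coef S x y = coef T x y) : S = T := by
  ext ξ x
  refine (hasSum_apply S ξ x).unique ?_
  simp_rw [h]
  exact hasSum_apply T ξ x

open Classical in
theorem coef_one (x y : X) : coef (1 : Ell2 X →L[ℂ] Ell2 X) x y = if x = y then 1 else 0 :=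
  basis_apply y x

@[simp]
theorem coef_smul (c : ℂ) (T : Ell2 X →L[ℂ] Ell2 X) (x y : X) :
    coef (c • T) x y = c * coef T x y := rfl

@[simp]
theorem coef_add (S T : Ell2 X →L[ℂ] Ell2 X) (x y : X) :
    coef (S + T) x y = coef S x y + coef T x y := rfl

@[simp]
theorem coef_sub (S T : Ell2 X →L[ℂ] Ell2 X) (x y : X) :
    coef (S - T) x y = coef S x y - coef T x y := rfl

theorem permOp_basis (e : Equiv.Perm X) (x : X) : permOp e (basis x) = basis (e x) := by
  classical
  ext y
  simp only [permOp_apply, basis_apply, Equiv.symm_apply_eq]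

theorem coef_mul_permOp (e : Equiv.Perm X) (T : Ell2 X →L[ℂ] Ell2 X) (x y : X) :
    coef (T * permOp e) x y = coef T x (e y) := by
  rw [coef, mul_apply_eq_comp, permOp_basis, coef]

open Classical in
theorem coef_proj_mul (S : Set X) (T : Ell2 X →L[ℂ] Ell2 X) (x y : X) :
    coef (proj S * T) x y = if x ∈ S then coef T x y else 0 := by
  rw [coef, mul_apply_eq_comp, proj_apply, Set.indicator_apply, coef]

open Classical in
theorem proj_basis (S : Set X) (x : X) : proj S (basis x) = if x ∈ S then basis x else 0 := by
  ext y
  rw [proj_apply, Set.indicator_apply, basis_apply]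
  by_cases hx : x ∈ S <;> by_cases hy : y = x
  · subst hy; simp [hx, basis_apply]
  · simp [hx, hy, basis_apply]
  · subst hy; simp [hx]
  · simp [hx, hy]

open Classical in
theorem coef_mul_proj (S : Set X) (T : Ell2 X →L[ℂ] Ell2 X) (x y : X) :
    coef (T * proj S) x y = if y ∈ S then coef T x y else 0 := by
  rw [coef, mul_apply_eq_comp, proj_basis]
  split_ifs with h
  · rfl
  · simp

theorem permOp_mul (e f : Equiv.Perm X) : permOp (e * f) = permOp e * permOp f := rfl

theorem permOp_one : permOp (1 : Equiv.Perm X) = 1 := rfl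

theorem star_permOp (e : Equiv.Perm X) : star (permOp e) = permOp e⁻¹ := by
  classical
  refine coef_ext fun x y => ?_
  rw [coef_star, coef, coef, permOp_basis, permOp_basis, basis_apply, basis_apply]
  have h : y = e x ↔ x = e⁻¹ y := by rw [Equiv.Perm.eq_inv_iff_eq, eq_comm]
  simp only [apply_ite conj, map_one, map_zero, h]

theorem permOp_mem_unitary (e : Equiv.Perm X) :
    permOp e ∈ unitary (Ell2 X →L[ℂ] Ell2 X) := by
  rw [Unitary.mem_iff, star_permOp, ← permOp_mul, ← permOp_mul]
  simp [permOp_one]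

/-- A square-summable function which is constant on an infinite set vanishes there. -/
theorem eq_zero_of_infinite (ξ : Ell2 X) {s : Set X} (hs : s.Infinite) {c : ℂ}
    (h : ∀ x ∈ s, ξ x = c) : c = 0 := by
  have hsum := (summable_norm_sq ξ).subtype s
  have : Infinite s := hs.to_subtype
  have hc : Summable fun _ : s => ‖c‖ ^ 2 := by
    refine hsum.congr fun x => ?_
    simp [h x.val x.2]
  have := (summable_const_iff _).1 hc
  simpa using this

theorem norm_proj_sq (S : Set X) (ξ : Ell2 X) :
    ‖proj S ξ‖ ^ 2 = ∑' x, S.indicator (fun x => ‖ξ x‖ ^ 2) x := by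
  rw [norm_sq_eq_tsum]
  refine tsum_congr fun x => ?_
  rw [proj_apply]
  by_cases h : x ∈ S <;> simp [h]

theorem sum_norm_proj_sq_le {ι : Type*} (t : Finset ι) (S : ι → Set X)
    (hS : Pairwise fun i j => Disjoint (S i) (S j)) (ξ : Ell2 X) :
    ∑ i ∈ t, ‖proj (S i) ξ‖ ^ 2 ≤ ‖ξ‖ ^ 2 := by
  simp_rw [norm_proj_sq, norm_sq_eq_tsum]
  have hsum : ∀ i, Summable ((S i).indicator fun x => ‖ξ x‖ ^ 2) :=
    fun i => (summable_norm_sq ξ).indicator _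
  rw [← Summable.tsum_finsetSum fun i _ => hsum i]
  refine Summable.tsum_le_tsum (fun x => ?_) (summable_sum fun i _ => hsum i) (summable_norm_sq ξ)
  by_cases hx : ∃ i ∈ t, x ∈ S i
  · obtain ⟨i, hi, hxi⟩ := hx
    rw [Finset.sum_eq_single i]
    · simp [hxi]
    · intro j _ hj
      have := Set.disjoint_left.1 (hS hj.symm) hxi
      simp [this]
    · simp [hi]
  · push Not at hx
    rw [Finset.sum_eq_zero]
    · positivity
    · intro i hi
      simp [hx i hi]

end Ell2

end Ell2

open scoped InnerProductSpace ComplexConjugate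

namespace GroupVN

open Ell2

variable {Λ : Type} [Group Λ]

/-- Left translation on `ℓ²(Λ)`. -/
def left (g : Λ) : Ell2 Λ →L[ℂ] Ell2 Λ := permOp (Equiv.mulLeft g)

/-- Right translation `δ_x ↦ δ_{xg}` on `ℓ²(Λ)`. -/
def right (g : Λ) : Ell2 Λ →L[ℂ] Ell2 Λ := permOp (Equiv.mulRight g)

theorem left_basis (g x : Λ) : left g (basis x) = basis (g * x) := permOp_basis _ _

theorem right_basis (g x : Λ) : right g (basis x) = basis (x * g) := permOp_basis _ _

theorem left_apply (g : Λ) (ξ : Ell2 Λ) (x : Λ) : left g ξ x = ξ (g⁻¹ * x) := rfl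

theorem right_apply (g : Λ) (ξ : Ell2 Λ) (x : Λ) : right g ξ x = ξ (x * g⁻¹) := rfl

theorem coef_left_mul (g : Λ) (T : Ell2 Λ →L[ℂ] Ell2 Λ) (x y : Λ) :
    coef (left g * T) x y = coef T (g⁻¹ * x) y := rfl

theorem coef_right_mul (g : Λ) (T : Ell2 Λ →L[ℂ] Ell2 Λ) (x y : Λ) :
    coef (right g * T) x y = coef T (x * g⁻¹) y := rfl

theorem coef_mul_left (g : Λ) (T : Ell2 Λ →L[ℂ] Ell2 Λ) (x y : Λ) :
    coef (T * left g) x y = coef T x (g * y) := coef_mul_permOp _ _ _ _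

theorem coef_mul_right (g : Λ) (T : Ell2 Λ →L[ℂ] Ell2 Λ) (x y : Λ) :
    coef (T * right g) x y = coef T x (y * g) := coef_mul_permOp _ _ _ _

open Classical in
theorem coef_left (g x y : Λ) : coef (left g) x y = if x = g * y then 1 else 0 := by
  rw [coef, left_basis, basis_apply]

theorem left_mul (g h : Λ) : left (g * h) = left g * left h := by
  ext ξ x
  simp [left_apply, mul_assoc]

theorem left_one : left (1 : Λ) = 1 := by
  ext ξ x
  simp [left_apply]

theorem star_left (g : Λ) : star (left g) = left g⁻¹ := by
  rw [left, star_permOp, Equiv.Perm.inv_def, Equiv.mulLeft_symm, left]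

theorem star_right (g : Λ) : star (right g) = right g⁻¹ := by
  rw [right, star_permOp, Equiv.Perm.inv_def, Equiv.mulRight_symm, right]

theorem left_mem_unitary (g : Λ) : left g ∈ unitary (Ell2 Λ →L[ℂ] Ell2 Λ) :=
  permOp_mem_unitary _

theorem commute_left_iff {T : Ell2 Λ →L[ℂ] Ell2 Λ} {g : Λ} :
    left g * T = T * left g ↔ ∀ x y, coef T (g * x) (g * y) = coef T x y := by
  constructor
  · intro h x y
    rw [← coef_mul_left, ← h, coef_left_mul, inv_mul_cancel_left]
  · intro h
    refine coef_ext fun x y => ?_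
    rw [coef_mul_left, coef_left_mul, ← h, mul_inv_cancel_left]

theorem commute_right_iff {T : Ell2 Λ →L[ℂ] Ell2 Λ} {g : Λ} :
    right g * T = T * right g ↔ ∀ x y, coef T (x * g) (y * g) = coef T x y := by
  constructor
  · intro h x y
    rw [← coef_mul_right, ← h, coef_right_mul, mul_inv_cancel_right]
  · intro h
    refine coef_ext fun x y => ?_
    rw [coef_mul_right, coef_right_mul, ← h, inv_mul_cancel_right]

variable (Λ) in
/-- The group von Neumann algebra `L(Λ)`, as the commutant of the right translations. -/
def groupVN : VonNeumannAlgebra (Ell2 Λ) where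
  toStarSubalgebra := StarSubalgebra.centralizer ℂ (Set.range (right (Λ := Λ)))
  centralizer_centralizer' := by
    change Set.centralizer (Set.centralizer
      (StarSubalgebra.centralizer ℂ (Set.range (right (Λ := Λ))) :
        Set (Ell2 Λ →L[ℂ] Ell2 Λ))) = _
    rw [StarSubalgebra.coe_centralizer, Set.centralizer_centralizer_centralizer]
    rfl

theorem mem_groupVN {T : Ell2 Λ →L[ℂ] Ell2 Λ} :
    T ∈ groupVN Λ ↔ ∀ g x y, coef T (x * g) (y * g) = coef T x y := by
  have : T ∈ groupVN Λ ↔ T ∈ StarSubalgebra.centralizer ℂ (Set.range (right (Λ := Λ))) := Iff.rfl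
  rw [this, StarSubalgebra.mem_centralizer_iff]
  constructor
  · intro h g
    exact commute_right_iff.1 (h _ ⟨g, rfl⟩).1
  · rintro h _ ⟨g, rfl⟩
    exact ⟨commute_right_iff.2 (h g), by rw [star_right]; exact commute_right_iff.2 (h _)⟩

theorem coef_eq {T : Ell2 Λ →L[ℂ] Ell2 Λ} (hT : T ∈ groupVN Λ) (x y : Λ) :
    coef T x y = coef T (x * y⁻¹) 1 := by
  rw [← mem_groupVN.1 hT y (x * y⁻¹) 1]
  simp

theorem left_mem_groupVN (g : Λ) : left g ∈ groupVN Λ := by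
  rw [mem_groupVN]
  intro h x y
  classical
  simp [coef_left, ← mul_assoc]

/-- The subalgebra `L(H)` of `L(Λ)`: elements whose Fourier coefficients are supported in `H`. -/
def subVN (H : Subgroup Λ) : Set (Ell2 Λ →L[ℂ] Ell2 Λ) :=
  {T | T ∈ groupVN Λ ∧ ∀ g, g ∉ H → coef T g 1 = 0}

theorem coef_eq_zero {H : Subgroup Λ} {T : Ell2 Λ →L[ℂ] Ell2 Λ} (hT : T ∈ subVN H) {x y : Λ}
    (h : x * y⁻¹ ∉ H) : coef T x y = 0 := by
  rw [coef_eq hT.1, hT.2 _ h]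

theorem left_mem_subVN {H : Subgroup Λ} {g : Λ} : left g ∈ subVN H ↔ g ∈ H := by
  classical
  constructor
  · intro h
    by_contra hg
    simpa [coef_left] using h.2 g hg
  · intro h
    refine ⟨left_mem_groupVN g, fun k hk => ?_⟩
    rw [coef_left, if_neg]
    rintro rfl
    simp [h] at hk

theorem subVN_top : subVN (⊤ : Subgroup Λ) = (groupVN Λ : Set (Ell2 Λ →L[ℂ] Ell2 Λ)) := by
  ext T
  simp [subVN]

theorem star_mem_subVN {H : Subgroup Λ} {T : Ell2 Λ →L[ℂ] Ell2 Λ} (hT : T ∈ subVN H) :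
    star T ∈ subVN H := by
  refine ⟨star_mem hT.1, fun g hg => ?_⟩
  rw [coef_star, coef_eq_zero hT, map_zero]
  simpa using hg

theorem mul_mem_subVN {H : Subgroup Λ} {S T : Ell2 Λ →L[ℂ] Ell2 Λ} (hS : S ∈ subVN H)
    (hT : T ∈ subVN H) : S * T ∈ subVN H := by
  refine ⟨mul_mem hS.1 hT.1, fun g hg => ?_⟩
  rw [coef_mul]
  refine (tsum_congr fun z => ?_).trans tsum_zero
  by_cases hz : z ∈ H
  · rw [coef_eq_zero hS, zero_mul]
    intro h
    exact hg (by simpa using mul_mem h hz)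
  · rw [hT.2 z hz, mul_zero]

theorem smul_one_mem_subVN (H : Subgroup Λ) (c : ℂ) :
    c • (1 : Ell2 Λ →L[ℂ] Ell2 Λ) ∈ subVN H := by
  classical
  constructor
  · rw [mem_groupVN]
    intro g x y
    simp [coef_one]
  · intro g hg
    have : g ≠ 1 := by rintro rfl; exact hg H.one_mem
    simp [coef_one, this]

theorem vNGen_mono {𝓗 : Type} [NormedAddCommGroup 𝓗] [InnerProductSpace ℂ 𝓗] [CompleteSpace 𝓗]
    {S T : Set (𝓗 →L[ℂ] 𝓗)} (h : S ⊆ T) : vNGen S ⊆ vNGen T :=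
  Set.centralizer_subset (Set.centralizer_subset h)

theorem vNGen_vNGen {𝓗 : Type} [NormedAddCommGroup 𝓗] [InnerProductSpace ℂ 𝓗] [CompleteSpace 𝓗]
    (S : Set (𝓗 →L[ℂ] 𝓗)) : vNGen (vNGen S) = vNGen S := by
  rw [vNGen, vNGen, Set.centralizer_centralizer_centralizer]

theorem vNGen_left_subset (H : Subgroup Λ) : vNGen (left '' (H : Set Λ)) ⊆ subVN H := by
  classical
  intro T hT
  refine ⟨mem_groupVN.2 fun g => ?_, fun g hg => ?_⟩
  · refine commute_right_iff.1 (hT _ ?_)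
    rintro _ ⟨h, -, rfl⟩
    refine commute_left_iff.2 fun x y => ?_
    rw [coef, coef, right_basis, right_basis, basis_apply, basis_apply]
    simp [mul_assoc]
  · have : proj (H : Set Λ) * T = T * proj (H : Set Λ) := by
      refine hT _ ?_
      rintro _ ⟨h, hh, rfl⟩
      refine commute_left_iff.2 fun x y => ?_
      rw [← mul_one (proj _), coef_proj_mul, coef_proj_mul, coef_one, coef_one]
      have : h * x ∈ H ↔ x ∈ H := H.mul_mem_cancel_left hh
      simp [this]
    have h2 := congrArg (fun S => coef S g 1) this
    simp only [coef_proj_mul, coef_mul_proj] at h2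
    simpa [hg, H.one_mem] using h2.symm

theorem subVN_eq (H : Subgroup Λ) : subVN H = vNGen (left '' (H : Set Λ)) := by
  refine Set.Subset.antisymm (fun T hT S hS => ?_) (vNGen_left_subset H)
  have hS' : ∀ h ∈ H, ∀ x y, coef S (h * x) (h * y) = coef S x y := fun h hh =>
    commute_left_iff.1 (hS _ ⟨h, hh, rfl⟩)
  refine coef_ext fun k g => ?_
  rw [coef_mul, coef_mul, ← (Equiv.mulRight g).tsum_eq,
    ← ((Equiv.inv Λ).trans (Equiv.mulRight k)).tsum_eq (fun z => coef T k z * coef S z g)]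
  refine tsum_congr fun h => ?_
  simp only [Equiv.coe_mulRight, Equiv.trans_apply, Equiv.inv_apply]
  rw [coef_eq hT.1 (h * g) g, coef_eq hT.1 k]
  by_cases hh : h ∈ H
  · rw [← hS' h hh (h⁻¹ * k) g, mul_inv_cancel_left, mul_comm]
    simp
  · simp [hT.2 h hh]

theorem subVN_mono {H K : Subgroup Λ} (h : H ≤ K) : subVN H ⊆ subVN K :=
  fun _ hT => ⟨hT.1, fun g hg => hT.2 g fun hg' => hg (h hg')⟩

theorem subVN_injective : Function.Injective (subVN (Λ := Λ)) := fun H K h => by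
  ext g
  rw [← left_mem_subVN, h, left_mem_subVN]

theorem vNGen_subVN (H : Subgroup Λ) : vNGen (subVN H) = subVN H := by
  rw [subVN_eq, vNGen_vNGen]

theorem vNGen_iUnion_subVN {ι : Type*} (K : ι → Subgroup Λ) (H : Subgroup Λ)
    (hH : ∀ g, g ∈ H ↔ ∃ i, g ∈ K i) : vNGen (⋃ i, subVN (K i)) = subVN H := by
  refine Set.Subset.antisymm ?_ ?_
  · rw [← vNGen_subVN H]
    exact vNGen_mono (Set.iUnion_subset fun i => subVN_mono fun g hg => (hH g).2 ⟨i, hg⟩)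
  · rw [subVN_eq]
    refine vNGen_mono ?_
    rintro _ ⟨g, hg, rfl⟩
    obtain ⟨i, hi⟩ := (hH g).1 hg
    exact Set.mem_iUnion.2 ⟨i, left_mem_subVN.2 hi⟩

/-- Elements of `L(Λ)` commuting with `H` have no Fourier coefficient along infinite
`H`-conjugation orbits. -/
theorem coef_eq_zero_of_infinite {H : Subgroup Λ} {T : Ell2 Λ →L[ℂ] Ell2 Λ}
    (hT : ∀ h ∈ H, ∀ x, coef T (h * x * h⁻¹) 1 = coef T x 1)
    {g : Λ} (hg : Set.Infinite {x | ∃ h ∈ H, x = h * g * h⁻¹}) : coef T g 1 = 0 := by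
  refine eq_zero_of_infinite (T (basis 1)) hg ?_
  rintro _ ⟨h, hh, rfl⟩
  exact hT h hh g

theorem coef_conj {H : Subgroup Λ} {T : Ell2 Λ →L[ℂ] Ell2 Λ} (hT : T ∈ groupVN Λ)
    (hc : T ∈ Set.centralizer (left '' (H : Set Λ))) (h : Λ) (hh : h ∈ H) (x : Λ) :
    coef T (h * x * h⁻¹) 1 = coef T x 1 := by
  rw [← coef_eq hT (h * x) h, ← commute_left_iff.1 (hc _ ⟨h, hh, rfl⟩) x 1, mul_one]

theorem centralizer_subVN (H : Subgroup Λ) :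
    Set.centralizer (subVN H) = Set.centralizer (left '' (H : Set Λ)) := by
  rw [subVN_eq, vNGen, Set.centralizer_centralizer_centralizer]

/-- The algebra of an abelian subgroup with infinite relative conjugacy classes is a masa. -/
theorem subVN_masa (H : Subgroup Λ) (hcomm : ∀ g ∈ H, ∀ h ∈ H, g * h = h * g)
    (hinf : ∀ g ∉ H, Set.Infinite {x | ∃ h ∈ H, x = h * g * h⁻¹}) :
    Set.centralizer (subVN H) ∩ (groupVN Λ : Set _) = subVN H := by
  rw [centralizer_subVN]
  refine Set.Subset.antisymm (fun T hT => ⟨hT.2, fun g hg => ?_⟩) (fun T hT => ⟨?_, hT.1⟩)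
  · exact coef_eq_zero_of_infinite (coef_conj hT.2 hT.1) (hinf g hg)
  · rw [subVN_eq] at hT
    have : Set.centralizer (Set.centralizer (left '' (H : Set Λ))) ⊆
        Set.centralizer (left '' (H : Set Λ)) := by
      refine Set.centralizer_subset ?_
      rintro _ ⟨g, hg, rfl⟩ _ ⟨h, hh, rfl⟩
      rw [← left_mul, ← left_mul, hcomm g hg h hh]
    exact this hT

theorem eq_smul_one {T : Ell2 Λ →L[ℂ] Ell2 Λ} (hT : T ∈ groupVN Λ)
    (h : ∀ g, g ≠ 1 → coef T g 1 = 0) : T = coef T 1 1 • (1 : Ell2 Λ →L[ℂ] Ell2 Λ) := by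
  classical
  refine coef_ext fun x y => ?_
  rw [coef_smul, coef_one, coef_eq hT]
  by_cases hxy : x = y
  · simp [hxy]
  · rw [h _ (by rwa [Ne, mul_inv_eq_one]), if_neg hxy, mul_zero]

theorem isFactorSet_subVN (H : Subgroup Λ)
    (hinf : ∀ g : Λ, g ≠ 1 → Set.Infinite {x | ∃ h ∈ H, x = h * g * h⁻¹}) :
    IsFactorSet (subVN H) := by
  rw [IsFactorSet, centralizer_subVN]
  refine Set.Subset.antisymm (fun T hT => ⟨coef T 1 1, ?_⟩) ?_
  · exact (eq_smul_one hT.1.1 fun g hg =>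
      coef_eq_zero_of_infinite (coef_conj hT.1.1 hT.2) (hinf g hg)).symm
  · rintro _ ⟨c, rfl⟩
    refine ⟨smul_one_mem_subVN H c, fun S _ => ?_⟩
    simp

theorem groupVN_finite (v : Ell2 Λ →L[ℂ] Ell2 Λ) (hv : v ∈ groupVN Λ) (h : star v * v = 1) :
    v * star v = 1 := by
  classical
  have hw : v * star v ∈ groupVN Λ := mul_mem hv (star_mem hv)
  have htr : coef (v * star v) 1 1 = 1 := by
    have h1 : coef (star v * v) 1 1 = 1 := by rw [h, coef_one, if_pos rfl]
    rw [← h1, coef_mul, coef_mul, ← (Equiv.inv Λ).tsum_eq]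
    refine tsum_congr fun z => ?_
    rw [coef_star, coef_star, coef_eq hv 1]
    simp [mul_comm]
  have hdiag : ∀ x, coef (v * star v) x x = 1 := fun x => by
    rw [coef_eq hw, mul_inv_cancel, htr]
  set q : Ell2 Λ →L[ℂ] Ell2 Λ := 1 - v * star v with hq
  have hqq : star q * q = q := by
    have e : v * star v * (v * star v) = v * star v := by
      rw [mul_assoc, ← mul_assoc (star v), h, one_mul]
    simp only [hq, star_sub, star_one, star_mul, star_star]
    rw [mul_sub, sub_mul, sub_mul, e]
    simp
  have : q = 0 := by
    refine coef_ext fun x y => ?_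
    have h0 : coef (star q * q) y y = 0 := by
      rw [hqq, hq, coef_sub, hdiag, coef_one, if_pos rfl, sub_self]
    have h1 : ⟪q (basis y), q (basis y)⟫_ℂ = 0 := by
      rw [← h0, coef_eq_inner, mul_apply_eq_comp,
        ContinuousLinearMap.star_eq_adjoint, ContinuousLinearMap.adjoint_inner_right]
    rw [coef, inner_self_eq_zero.1 h1]
    rfl
  exact (sub_eq_zero.1 this).symm

theorem groupVN_infinite [Infinite Λ] :
    ¬ ∃ s : Finset (Ell2 Λ →L[ℂ] Ell2 Λ), (groupVN Λ : Set (Ell2 Λ →L[ℂ] Ell2 Λ)) ⊆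
      (Submodule.span ℂ (s : Set (Ell2 Λ →L[ℂ] Ell2 Λ)) : Set (Ell2 Λ →L[ℂ] Ell2 Λ)) := by
  rintro ⟨s, hs⟩
  have hl : LinearIndependent ℂ (left : Λ → Ell2 Λ →L[ℂ] Ell2 Λ) := by
    classical
    refine linearIndependent_iff'.2 fun t c h g hg => ?_
    have := congrArg (fun T => coef T g 1) h
    simpa [coef_eq_inner, inner_sum, inner_smul_right, left_basis, inner_basis_left, basis_apply, hg] using this
  have h2 : LinearIndependent ℂ (fun g : Λ =>
      (⟨left g, hs (left_mem_groupVN g)⟩ : Submodule.span ℂ (s : Set (Ell2 Λ →L[ℂ] Ell2 Λ)))) :=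
    LinearIndependent.of_comp (Submodule.subtype _) hl
  exact not_finite_iff_infinite.2 ‹Infinite Λ› h2.finite

theorem isIIOneFactor_groupVN [Infinite Λ]
    (hinf : ∀ g : Λ, g ≠ 1 → Set.Infinite {x | ∃ h : Λ, x = h * g * h⁻¹}) :
    IsIIOneFactor (groupVN Λ) := by
  refine ⟨?_, groupVN_finite, groupVN_infinite⟩
  rw [← subVN_top]
  refine isFactorSet_subVN _ ?_
  simpa using hinf

end GroupVN

namespace GroupVN

open Ell2

variable {Λ : Type} [Group Λ]

/-- The right coset `Hk`. -/
def rightCoset (H : Subgroup Λ) (k : Λ) : Set Λ := {x | x * k⁻¹ ∈ H}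

theorem norm_apply_of_mem_unitary {X : Type} {u : Ell2 X →L[ℂ] Ell2 X}
    (hu : u ∈ unitary (Ell2 X →L[ℂ] Ell2 X)) (ξ : Ell2 X) : ‖u ξ‖ = ‖ξ‖ :=
  ContinuousLinearMap.norm_map_of_mem_unitary hu ξ

theorem right_mem_unitary (g : Λ) : right g ∈ unitary (Ell2 Λ →L[ℂ] Ell2 Λ) :=
  permOp_mem_unitary _

theorem proj_mul_comm {H : Subgroup Λ} {T : Ell2 Λ →L[ℂ] Ell2 Λ} (hT : T ∈ subVN H) (k : Λ) :
    proj (rightCoset H k) * T = T * proj (rightCoset H k) := by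
  classical
  refine coef_ext fun x y => ?_
  rw [coef_proj_mul, coef_mul_proj]
  by_cases hxy : x * y⁻¹ ∈ H
  · have : x ∈ rightCoset H k ↔ y ∈ rightCoset H k := by
      have e : x * k⁻¹ = x * y⁻¹ * (y * k⁻¹) := by group
      rw [rightCoset, Set.mem_ofPred_eq, Set.mem_ofPred_eq, e, H.mul_mem_cancel_left hxy]
    simp [this]
  · simp [coef_eq_zero hT hxy]

theorem proj_mul_right (H : Subgroup Λ) (k g : Λ) :
    proj (rightCoset H k) * right g = right g * proj (rightCoset H (k * g⁻¹)) := by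
  classical
  ext ξ x
  simp only [mul_apply_eq_comp, proj_apply, right_apply, Set.indicator_apply, rightCoset,
    Set.mem_ofPred_eq]
  congr 2
  group

theorem rightCoset_mul (H : Subgroup Λ) {h : Λ} (hh : h ∈ H) (k : Λ) :
    rightCoset H (h * k) = rightCoset H k := by
  ext x
  simp only [rightCoset, Set.mem_ofPred_eq, mul_inv_rev, ← mul_assoc]
  exact H.mul_mem_cancel_right (H.inv_mem hh)

theorem disjoint_rightCoset {H : Subgroup Λ} {k l : Λ} (h : k * l⁻¹ ∉ H) :
    Disjoint (rightCoset H k) (rightCoset H l) := by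
  refine Set.disjoint_left.2 fun x hx hy => h ?_
  have := H.mul_mem (H.inv_mem hx) hy
  simpa [mul_assoc] using this

section Normalizer

variable {H : Subgroup Λ} {u : Ell2 Λ →L[ℂ] Ell2 Λ}

theorem conj_left_mem (hu : u ∈ normSet (groupVN Λ) (subVN H)) {h : Λ} (hh : h ∈ H) :
    u * left h * star u ∈ subVN H := by
  rw [← hu.2.2]
  exact ⟨left h, left_mem_subVN.2 hh, rfl⟩

theorem conj_left_mul (hu : u ∈ normSet (groupVN Λ) (subVN H)) (h : Λ) :
    u * left h * star u * u = u * left h := by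
  rw [mul_assoc, Unitary.star_mul_self_of_mem hu.2.1, mul_one]

theorem conj_left_unitary (hu : u ∈ normSet (groupVN Λ) (subVN H)) (h : Λ) :
    u * left h * star u ∈ unitary (Ell2 Λ →L[ℂ] Ell2 Λ) :=
  mul_mem (mul_mem hu.2.1 (left_mem_unitary h)) (Unitary.star_mem hu.2.1)

theorem apply_left_basis_one (hu : u ∈ groupVN Λ) (h : Λ) :
    (u * left h) (basis 1) = right h (u (basis 1)) := by
  have : right h * u = u * right h := commute_right_iff.2 (mem_groupVN.1 hu h)
  rw [← mul_apply_eq_comp, this, mul_apply_eq_comp, mul_apply_eq_comp, left_basis, right_basis,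
    mul_one, one_mul]

theorem norm_proj_rightCoset (hu : u ∈ normSet (groupVN Λ) (subVN H)) {h : Λ} (hh : h ∈ H)
    (k : Λ) :
    ‖proj (rightCoset H (k * h)) (u (basis 1))‖ = ‖proj (rightCoset H k) (u (basis 1))‖ := by
  have hh' := H.inv_mem hh
  have h1 : right h⁻¹ (proj (rightCoset H (k * h)) (u (basis 1))) =
      (u * left h⁻¹ * star u) (proj (rightCoset H k) (u (basis 1))) := by
    rw [← mul_apply_eq_comp (right _), ← mul_apply_eq_comp (_ * star u)]
    have e := proj_mul_right H k h⁻¹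
    rw [inv_inv] at e
    rw [← e, mul_apply_eq_comp, ← apply_left_basis_one hu.1,
      ← proj_mul_comm (conj_left_mem hu hh')]
    have e2 := congrArg (fun S => proj (rightCoset H k) (S (basis 1))) (conj_left_mul hu h⁻¹)
    exact e2.symm
  rw [← norm_apply_of_mem_unitary (right_mem_unitary h⁻¹), h1,
    norm_apply_of_mem_unitary (conj_left_unitary hu _)]

/-- If the double coset `HkH` contains infinitely many right cosets of `H`, then every unitary
normalizing `L(H)` has vanishing Fourier coefficient at `k`. -/
theorem coef_eq_zero_of_normSet (hu : u ∈ normSet (groupVN Λ) (subVN H)) {k : Λ} (h : ℕ → Λ)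
    (hH : ∀ i, h i ∈ H) (hk : ∀ i j, i ≠ j → k * h i * (h j)⁻¹ * k⁻¹ ∉ H) :
    coef u k 1 = 0 := by
  classical
  set ξ := u (basis 1) with hξ
  have hdisj : Pairwise fun i j =>
      Disjoint (rightCoset H (k * h i)) (rightCoset H (k * h j)) := fun i j hij =>
    disjoint_rightCoset (by simpa [mul_assoc] using hk i j hij)
  have hN : ∀ N : ℕ, N * ‖proj (rightCoset H k) ξ‖ ^ 2 ≤ ‖ξ‖ ^ 2 := fun N => by
    have := sum_norm_proj_sq_le (Finset.range N) _ hdisj ξ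
    simpa only [hξ, norm_proj_rightCoset hu (hH _), Finset.sum_const, Finset.card_range,
      nsmul_eq_mul] using this
  have h0 : ‖proj (rightCoset H k) ξ‖ ^ 2 = 0 := by
    by_contra hne
    have hpos : 0 < ‖proj (rightCoset H k) ξ‖ ^ 2 := lt_of_le_of_ne (sq_nonneg _) (Ne.symm hne)
    obtain ⟨N, hN'⟩ := exists_nat_gt (‖ξ‖ ^ 2 / ‖proj (rightCoset H k) ξ‖ ^ 2)
    rw [div_lt_iff₀ hpos] at hN'
    exact absurd (hN N) (not_le.2 hN')
  have h1 : proj (rightCoset H k) ξ = 0 := by simpa using h0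
  have h2 : proj (rightCoset H k) ξ k = ξ k := by
    rw [proj_apply, Set.indicator_of_mem]
    simp [rightCoset, H.one_mem]
  rw [h1] at h2
  exact h2.symm

theorem coef_eq_zero_of_infinite_rightCosets (hu : u ∈ normSet (groupVN Λ) (subVN H)) {k : Λ}
    (hinf : ((fun h => rightCoset H (k * h)) '' (H : Set Λ)).Infinite) : coef u k 1 = 0 := by
  choose h hh he using fun i => (hinf.natEmbedding _ i).2
  refine coef_eq_zero_of_normSet hu h hh fun i j hij hmem => hij ?_
  apply (hinf.natEmbedding _).injective
  rw [← Subtype.coe_inj, ← he, ← he]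
  have : k * h i = k * h i * (h j)⁻¹ * k⁻¹ * (k * h j) := by group
  simp only
  rw [this, rightCoset_mul H hmem]

/-- If `H` has infinite relative conjugacy classes, then so does `H ∩ k⁻¹Hk` whenever `HkH` is a
finite union of right cosets. -/
theorem infinite_conj_inter {k : Λ}
    (hfin : ((fun h => rightCoset H (k * h)) '' (H : Set Λ)).Finite) {x : Λ}
    (hx : Set.Infinite {y | ∃ h ∈ H, y = h * x * h⁻¹}) :
    Set.Infinite {y | ∃ h ∈ H ⊓ H.comap (MulAut.conj k).toMonoidHom, y = h * x * h⁻¹} := by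
  intro hf
  refine hx ?_
  obtain ⟨t, htH, hbij⟩ := Set.exists_subset_bijOn (H : Set Λ) fun h => rightCoset H (k * h)
  have ht := hbij.image_eq
  have htf : t.Finite := Set.Finite.of_finite_image (ht ▸ hfin) hbij.injOn
  refine ((htf.prod hf).image fun p : Λ × Λ => p.1⁻¹ * p.2 * p.1).subset ?_
  rintro _ ⟨h, hh, rfl⟩
  have h1 : rightCoset H (k * h⁻¹) ∈ (fun h => rightCoset H (k * h)) '' t := by
    rw [ht]
    exact ⟨h⁻¹, H.inv_mem hh, rfl⟩
  obtain ⟨s, hs, hse⟩ := h1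
  have h2 : k * h⁻¹ * (k * s)⁻¹ ∈ H := by
    have : k * h⁻¹ ∈ rightCoset H (k * h⁻¹) := by simp [rightCoset, H.one_mem]
    rw [← hse] at this
    exact this
  refine ⟨(s, (s * h) * x * (s * h)⁻¹), ⟨hs, s * h, ⟨H.mul_mem (htH hs) hh, ?_⟩, rfl⟩, ?_⟩
  · have := H.inv_mem h2
    simpa [mul_assoc] using this
  · simp [mul_assoc]

/-- A unitary normalizing `L(H)`, with `H` having infinite relative conjugacy classes, is
supported on a single right coset of `H`. -/
theorem mem_rightCoset_of_normSet
    (hinf : ∀ g : Λ, g ≠ 1 → Set.Infinite {x | ∃ h ∈ H, x = h * g * h⁻¹})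
    (hu : u ∈ normSet (groupVN Λ) (subVN H)) {k : Λ} (hk : coef u k 1 ≠ 0) {l : Λ}
    (hl : coef u l 1 ≠ 0) : l ∈ rightCoset H k := by
  classical
  set P := proj (rightCoset H k) with hP
  set Q := star u * P * u with hQ
  have hfin : ((fun h => rightCoset H (k * h)) '' (H : Set Λ)).Finite := by
    by_contra h
    exact hk (coef_eq_zero_of_infinite_rightCosets hu h)
  have hQl : ∀ h ∈ H, left h * Q = Q * left h := fun h hh => by
    have e1 : star u * (u * left h * star u) = left h * star u := by
      rw [← mul_assoc, ← mul_assoc, Unitary.star_mul_self_of_mem hu.2.1, one_mul]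
    calc left h * Q = star u * (u * left h * star u) * P * u := by rw [e1, hQ]; simp only [mul_assoc]
      _ = star u * ((u * left h * star u) * P) * u := by simp only [mul_assoc]
      _ = star u * (P * (u * left h * star u)) * u := by
        rw [hP, proj_mul_comm (conj_left_mem hu hh)]
      _ = star u * P * (u * left h * star u * u) := by simp only [mul_assoc]
      _ = Q * left h := by rw [conj_left_mul hu, hQ]; simp only [mul_assoc]
  have hQr : ∀ h ∈ H.comap (MulAut.conj k).toMonoidHom, right h * Q = Q * right h := fun h hh => by
    have e : ∀ v ∈ groupVN Λ, right h * v = v * right h := fun v hv =>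
      commute_right_iff.2 (mem_groupVN.1 hv h)
    have eP : P * right h = right h * P := by
      rw [hP, proj_mul_right]
      have : k * h⁻¹ = k * h⁻¹ * k⁻¹ * k := by group
      rw [this, rightCoset_mul]
      have := H.inv_mem hh
      simpa [mul_assoc] using this
    rw [hQ, ← mul_assoc, ← mul_assoc, e _ (star_mem hu.1), mul_assoc (star u), ← eP, mul_assoc,
      mul_assoc, mul_assoc, e _ hu.1]
    simp only [mul_assoc]
  have hQ0 : ∀ x, x ≠ 1 → coef Q x 1 = 0 := fun x hx => by
    refine coef_eq_zero_of_infinite (H := H ⊓ H.comap (MulAut.conj k).toMonoidHom) ?_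
      (infinite_conj_inter hfin (hinf x hx))
    intro h hh y
    have h1 := commute_right_iff.1 (hQr h hh.2) (h * y * h⁻¹) 1
    have h2 := commute_left_iff.1 (hQl h hh.1) y 1
    rw [← h1, ← h2]
    simp
  have hQ1 : Q (basis 1) = coef Q 1 1 • basis 1 := by
    ext x
    by_cases hx : x = 1
    · subst hx
      simp [coef, basis_apply]
    · have := hQ0 x hx
      rw [coef] at this
      rw [this]
      simp [basis_apply, hx]
  have hPu : P (u (basis 1)) = coef Q 1 1 • u (basis 1) := by
    rw [← map_smul, ← hQ1, ← mul_apply_eq_comp u, hQ, ← mul_assoc, ← mul_assoc,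
      Unitary.mul_star_self_of_mem hu.2.1, one_mul]
    rfl
  have hc : coef Q 1 1 = 1 := by
    have := congrArg (fun ξ : Ell2 Λ => ξ k) hPu
    simp only [hP, proj_apply] at this
    rw [Set.indicator_of_mem (by simp [rightCoset, H.one_mem])] at this
    have h2 : coef u k 1 = coef Q 1 1 * coef u k 1 := this
    exact (mul_right_cancel₀ hk (by rw [one_mul]; exact h2)).symm
  by_contra hlk
  rw [hc, one_smul] at hPu
  have := congrArg (fun ξ : Ell2 Λ => ξ l) hPu
  simp only [hP, proj_apply] at this
  rw [Set.indicator_of_notMem hlk] at this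
  exact hl this.symm

theorem exists_coef_ne_zero (hu : u ∈ unitary (Ell2 Λ →L[ℂ] Ell2 Λ)) : ∃ k, coef u k 1 ≠ 0 := by
  classical
  by_contra! h
  have h1 : u (basis 1) = 0 := by
    ext x
    exact h x
  have h2 := norm_apply_of_mem_unitary hu (basis 1)
  rw [h1, norm_zero, eq_comm, norm_eq_zero] at h2
  have := basis_apply (1 : Λ) 1
  simp [h2] at this

theorem conj_mem_subVN {k : Λ} (hk : k ∈ Subgroup.normalizer (H : Set Λ)) {x : Ell2 Λ →L[ℂ] Ell2 Λ}
    (hx : x ∈ subVN H) : left k * x * star (left k) ∈ subVN H := by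
  refine ⟨mul_mem (mul_mem (left_mem_groupVN k) hx.1) (star_mem (left_mem_groupVN k)), ?_⟩
  intro g hg
  rw [star_left, coef_mul_left, coef_left_mul, coef_eq_zero hx]
  rw [Subgroup.mem_normalizer_iff'] at hk
  intro h
  apply hg
  have := (hk (k⁻¹ * g)).1 (by simpa using h)
  simpa using this

theorem left_mem_normSet {k : Λ} (hk : k ∈ Subgroup.normalizer (H : Set Λ)) :
    left k ∈ normSet (groupVN Λ) (subVN H) := by
  refine ⟨left_mem_groupVN k, left_mem_unitary k, ?_⟩
  ext x
  constructor
  · rintro ⟨y, hy, rfl⟩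
    exact conj_mem_subVN hk hy
  · intro hx
    refine ⟨_, conj_mem_subVN (inv_mem hk) hx, ?_⟩
    simp only [star_left, inv_inv]
    calc left k * (left k⁻¹ * x * left k) * left k⁻¹
        = (left k * left k⁻¹) * x * (left k * left k⁻¹) := by simp only [mul_assoc]
      _ = x := by rw [← left_mul]; simp [left_one]

theorem mem_normalizer_of_normSet
    (hinf : ∀ g : Λ, g ≠ 1 → Set.Infinite {x | ∃ h ∈ H, x = h * g * h⁻¹})
    (hu : u ∈ normSet (groupVN Λ) (subVN H)) {k : Λ} (hk : coef u k 1 ≠ 0) :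
    k ∈ Subgroup.normalizer (H : Set Λ) := by
  set w := u * left k⁻¹ with hw
  have hwH : w ∈ subVN H := by
    refine ⟨mul_mem hu.1 (left_mem_groupVN _), fun g hg => ?_⟩
    by_contra hne
    rw [hw, coef_mul_left, mul_one, coef_eq hu.1, inv_inv] at hne
    apply hg
    have := mem_rightCoset_of_normSet hinf hu hk hne
    simpa [rightCoset] using this
  have hww : star w * w = 1 := Unitary.star_mul_self_of_mem
    (mul_mem hu.2.1 (left_mem_unitary _))
  have huw : u = w * left k := by rw [hw, mul_assoc, ← left_mul]; simp [left_one]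
  have hku : left k = star w * u := by rw [huw, ← mul_assoc, hww, one_mul]
  rw [Subgroup.mem_normalizer_iff]
  intro g
  have e : ∀ y, left k * y * star (left k) = star w * (u * y * star u) * w := fun y => by
    rw [hku]
    simp only [star_mul, star_star, mul_assoc]
  have e2 : left (k * g * k⁻¹) = star w * (u * left g * star u) * w := by
    rw [← e, star_left, left_mul, left_mul]
  constructor
  · intro hg
    rw [← left_mem_subVN, e2]
    exact mul_mem_subVN (mul_mem_subVN (star_mem_subVN hwH) (conj_left_mem hu hg)) hwH
  · intro hg
    rw [← left_mem_subVN] at hg ⊢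
    have h3 : w * left (k * g * k⁻¹) * star w = u * left g * star u := by
      have hww' : w * star w = 1 := Unitary.mul_star_self_of_mem
        (mul_mem hu.2.1 (left_mem_unitary _))
      rw [e2]
      calc w * (star w * (u * left g * star u) * w) * star w
          = (w * star w) * (u * left g * star u) * (w * star w) := by simp only [mul_assoc]
        _ = _ := by rw [hww', one_mul, mul_one]
    have h4 : u * left g * star u ∈ subVN H := by
      rw [← h3]
      exact mul_mem_subVN (mul_mem_subVN hwH hg) (star_mem_subVN hwH)
    rw [← hu.2.2] at h4
    obtain ⟨y, hy, hye⟩ := h4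
    have : y = left g := by
      have h5 := congrArg (fun z => star u * z * u) hye
      have hs : ∀ z, star u * (u * z * star u) * u = z := fun z => by
        calc star u * (u * z * star u) * u = (star u * u) * z * (star u * u) := by
              simp only [mul_assoc]
          _ = z := by rw [Unitary.star_mul_self_of_mem hu.2.1, one_mul, mul_one]
      simpa only [hs] using h5
    rwa [← this]

end Normalizer

theorem mul_mem_normSet {H : Subgroup Λ} {u v : Ell2 Λ →L[ℂ] Ell2 Λ}
    (hu : u ∈ normSet (groupVN Λ) (subVN H)) (hv : v ∈ normSet (groupVN Λ) (subVN H)) :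
    u * v ∈ normSet (groupVN Λ) (subVN H) := by
  refine ⟨mul_mem hu.1 hv.1, mul_mem hu.2.1 hv.2.1, ?_⟩
  have : (fun x => u * v * x * star (u * v)) = (fun x => u * x * star u) ∘
      fun x => v * x * star v := by
    ext1 x
    simp [mul_assoc]
  rw [this, Set.image_comp, hv.2.2, hu.2.2]

theorem vNGen_normSet_of_le {H K : Subgroup Λ} (hK : K ≤ Subgroup.normalizer (H : Set Λ))
    (h : ∀ u ∈ normSet (groupVN Λ) (subVN H), ∀ k ∉ K, coef u k 1 = 0) :
    vNGen (normSet (groupVN Λ) (subVN H)) = subVN K := by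
  refine Set.Subset.antisymm ?_ ?_
  · rw [← vNGen_subVN K]
    exact vNGen_mono fun u hu => ⟨hu.1, h u hu⟩
  · rw [subVN_eq]
    refine vNGen_mono ?_
    rintro _ ⟨g, hg, rfl⟩
    exact left_mem_normSet (hK hg)

theorem vNGen_normSet {H : Subgroup Λ}
    (hinf : ∀ g : Λ, g ≠ 1 → Set.Infinite {x | ∃ h ∈ H, x = h * g * h⁻¹}) :
    vNGen (normSet (groupVN Λ) (subVN H)) = subVN (Subgroup.normalizer (H : Set Λ)) :=
  vNGen_normSet_of_le le_rfl fun _ hu _ hk => by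
    by_contra hne
    exact hk (mem_normalizer_of_normSet hinf hu hne)

open Classical in
/-- The quotient map from the unitary normalizer of `L(H)` induced by a homomorphism on the
normalizer of `H` with kernel `H`. -/
def normSetMap {Q : Type} [Group Q] (K : Subgroup Λ) (ψ : K →* Q) (u : Ell2 Λ →L[ℂ] Ell2 Λ) : Q :=
  if h : ∃ k : K, coef u k 1 ≠ 0 then ψ h.choose else 1

section NormSetMap

variable {Q : Type} [Group Q] {H K : Subgroup Λ} {ψ : K →* Q}
  (hinf : ∀ g : Λ, g ≠ 1 → Set.Infinite {x | ∃ h ∈ H, x = h * g * h⁻¹})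
  (hK : Subgroup.normalizer (H : Set Λ) = K) (hψ : ∀ k : K, ψ k = 1 ↔ (k : Λ) ∈ H)
include hinf hψ

theorem normSetMap_eq {u : Ell2 Λ →L[ℂ] Ell2 Λ} (hu : u ∈ normSet (groupVN Λ) (subVN H)) {k : K}
    (hk : coef u k 1 ≠ 0) : normSetMap K ψ u = ψ k := by
  have h : ∃ k : K, coef u k 1 ≠ 0 := ⟨k, hk⟩
  rw [normSetMap, dif_pos h]
  have := mem_rightCoset_of_normSet hinf hu hk h.choose_spec
  rw [← mul_inv_eq_one, ← map_inv, ← map_mul, hψ]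
  exact this

omit hψ in
include hK in
theorem exists_coef_ne_zero_of_normSet {u : Ell2 Λ →L[ℂ] Ell2 Λ}
    (hu : u ∈ normSet (groupVN Λ) (subVN H)) : ∃ k : K, coef u k 1 ≠ 0 := by
  obtain ⟨k, hk⟩ := exists_coef_ne_zero hu.2.1
  exact ⟨⟨k, hK ▸ mem_normalizer_of_normSet hinf hu hk⟩, hk⟩

include hK in
theorem normSetMap_mul {u v : Ell2 Λ →L[ℂ] Ell2 Λ}
    (hu : u ∈ normSet (groupVN Λ) (subVN H)) (hv : v ∈ normSet (groupVN Λ) (subVN H)) :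
    normSetMap K ψ (u * v) = normSetMap K ψ u * normSetMap K ψ v := by
  have huv := mul_mem_normSet hu hv
  obtain ⟨m, hm⟩ := exists_coef_ne_zero_of_normSet hinf hK huv
  have : ∃ z, coef u m z * coef v z 1 ≠ 0 := by
    by_contra! h
    rw [coef_mul, tsum_congr h, tsum_zero] at hm
    exact hm rfl
  obtain ⟨z, hz⟩ := this
  have h1 := left_ne_zero_of_mul hz
  have h2 := right_ne_zero_of_mul hz
  have hzK : z ∈ K := hK ▸ mem_normalizer_of_normSet hinf hv h2
  rw [coef_eq hu.1] at h1
  rw [normSetMap_eq hinf hψ huv hm, normSetMap_eq hinf hψ hv (k := ⟨z, hzK⟩) h2,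
    normSetMap_eq hinf hψ hu (k := m * ⟨z, hzK⟩⁻¹) h1, ← map_mul, inv_mul_cancel_right]

include hK in
theorem normSetMap_eq_one_iff {u : Ell2 Λ →L[ℂ] Ell2 Λ}
    (hu : u ∈ normSet (groupVN Λ) (subVN H)) : normSetMap K ψ u = 1 ↔ u ∈ subVN H := by
  obtain ⟨m, hm⟩ := exists_coef_ne_zero_of_normSet hinf hK hu
  rw [normSetMap_eq hinf hψ hu hm, hψ]
  constructor
  · intro hmH
    refine ⟨hu.1, fun g hg => ?_⟩
    by_contra hne
    refine hg ?_
    have := H.mul_mem (mem_rightCoset_of_normSet hinf hu hm hne) hmH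
    simpa using this
  · intro h
    by_contra hmH
    exact hm (h.2 _ hmH)

include hK in
theorem exists_normSetMap_eq (hsurj : Function.Surjective ψ) (q : Q) :
    ∃ u ∈ normSet (groupVN Λ) (subVN H), normSetMap K ψ u = q := by
  classical
  obtain ⟨k, rfl⟩ := hsurj q
  have hk : left (k : Λ) ∈ normSet (groupVN Λ) (subVN H) := left_mem_normSet (by rw [hK]; exact k.2)
  exact ⟨_, hk, normSetMap_eq hinf hψ hk (by simp [coef_left])⟩

end NormSetMap

end GroupVN

/-- A tower of subgroups of `Λ`, indexed by ordinals up to `α`, producing a masa of length `α` in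
the group von Neumann algebra of `Λ`. -/
structure SubgroupTower (α : Ordinal) (G : Ordinal → Type) [∀ β, Group (G β)]
    (Λ : Type) [Group Λ] where
  /-- The subgroups of the tower. -/
  group : Ordinal → Subgroup Λ
  comm : ∀ g ∈ group 0, ∀ h ∈ group 0, g * h = h * g
  infinite_conj_zero : ∀ g ∉ group 0, Set.Infinite {x | ∃ h ∈ group 0, x = h * g * h⁻¹}
  one_le_normalizer : group 1 ≤ Subgroup.normalizer (group 0 : Set Λ)
  exists_seq : ∀ k ∉ group 1, ∃ h : ℕ → Λ, (∀ i, h i ∈ group 0) ∧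
    ∀ i j, i ≠ j → k * h i * (h j)⁻¹ * k⁻¹ ∉ group 0
  zero_ne_one : group 0 ≠ group 1
  infinite_conj : ∀ g, g ≠ 1 → Set.Infinite {x | ∃ h ∈ group 1, x = h * g * h⁻¹}
  one_le : ∀ β, 1 ≤ β → group 1 ≤ group β
  normalizer_eq : ∀ β, 1 ≤ β → β < α → Subgroup.normalizer (group β : Set Λ) = group (β + 1)
  exists_hom : ∀ β, 1 ≤ β → β < α → ∃ ψ : group (β + 1) →* G β,
    Function.Surjective ψ ∧ ∀ k, ψ k = 1 ↔ (k : Λ) ∈ group β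
  limit : ∀ β, Order.IsSuccLimit β → β ≤ α → ∀ g, g ∈ group β ↔ ∃ γ < β, g ∈ group γ
  top : group α = ⊤

namespace SubgroupTower

open GroupVN

variable {α : Ordinal} {G : Ordinal → Type} [∀ β, Group (G β)] {Λ : Type} [Group Λ]
  (t : SubgroupTower α G Λ)

theorem infinite_conj' {β : Ordinal} (hβ : 1 ≤ β) (g : Λ) (hg : g ≠ 1) :
    Set.Infinite {x | ∃ h ∈ t.group β, x = h * g * h⁻¹} :=
  (t.infinite_conj g hg).mono (by rintro _ ⟨h, hh, e⟩; exact ⟨h, t.one_le β hβ hh, e⟩)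

theorem tower_one {𝓗 : Type} [NormedAddCommGroup 𝓗] [InnerProductSpace ℂ 𝓗] [CompleteSpace 𝓗]
    (R : VonNeumannAlgebra 𝓗) (A : Set (𝓗 →L[ℂ] 𝓗)) : tower R A 1 = vNGen (normSet R A) := by
  rw [← zero_add (1 : Ordinal), tower, Ordinal.limitRecOn_add_one, Ordinal.limitRecOn_zero]

theorem vNGen_normSet_zero :
    vNGen (normSet (groupVN Λ) (subVN (t.group 0))) = subVN (t.group 1) := by
  refine vNGen_normSet_of_le t.one_le_normalizer fun u hu k hk => ?_
  obtain ⟨h, h1, h2⟩ := t.exists_seq k hk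
  exact coef_eq_zero_of_normSet hu h h1 h2

theorem tower_one_eq : tower (groupVN Λ) (subVN (t.group 0)) 1 = subVN (t.group 1) := by
  rw [tower_one, t.vNGen_normSet_zero]

theorem tower_eq (β : Ordinal) (hβ : β ≤ α) :
    tower (groupVN Λ) (subVN (t.group 0)) β = subVN (t.group β) := by
  induction β using Ordinal.limitRecOn with
  | zero => simp [tower]
  | add_one β ih =>
    have hlt : β < α := lt_of_lt_of_le (Order.lt_add_one_iff.2 le_rfl) hβ
    rw [tower, Ordinal.limitRecOn_add_one]
    have := ih hlt.le
    rw [tower] at this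
    rw [this]
    rcases eq_or_ne β 0 with rfl | h0
    · rw [zero_add, t.vNGen_normSet_zero]
    · have h1 : 1 ≤ β := Order.one_le_iff_pos.2 (pos_of_ne_zero h0)
      rw [vNGen_normSet (t.infinite_conj' h1), t.normalizer_eq β h1 hlt]
  | limit β hl ih =>
    rw [tower, Ordinal.limitRecOn_limit _ _ _ _ hl]
    rw [← vNGen_iUnion_subVN (fun γ : Set.Iio β => t.group γ) (t.group β)
      (fun g => by simp [t.limit β hl hβ g])]
    congr 1
    ext x
    simp only [Set.mem_iUnion, Subtype.exists, Set.mem_Iio]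
    refine exists_congr fun γ => exists_congr fun hγ => ?_
    have := ih γ hγ (hγ.le.trans hβ)
    rw [tower] at this
    rw [this]

theorem group_ne {β : Ordinal} (hβ : β < α) [Nontrivial (G β)] : t.group β ≠ t.group (β + 1) := by
  intro h
  rcases eq_or_ne β 0 with rfl | h0
  · rw [zero_add] at h
    exact t.zero_ne_one h
  · obtain ⟨ψ, hs, hk⟩ := t.exists_hom β (Order.one_le_iff_pos.2 (pos_of_ne_zero h0)) hβ
    obtain ⟨g, hg⟩ := exists_ne (1 : G β)
    obtain ⟨k, rfl⟩ := hs g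
    refine hg ((hk k).2 ?_)
    rw [h]
    exact k.2

include t in
theorem infinite (h : ∃ g : Λ, g ≠ 1) : Infinite Λ := by
  obtain ⟨g, hg⟩ := h
  exact Set.infinite_univ_iff.1 ((t.infinite_conj g hg).mono (Set.subset_univ _))

include t in
theorem exists_masa (hα : 1 < α) (hG : ∀ β, 1 ≤ β → β < α → Nontrivial (G β))
    (hyp : IsHyperfinite (groupVN Λ)) :
    ∃ (𝓗 : Type) (_ : NormedAddCommGroup 𝓗) (_ : InnerProductSpace ℂ 𝓗)
      (_ : CompleteSpace 𝓗) (R : VonNeumannAlgebra 𝓗) (A : Set (𝓗 →L[ℂ] 𝓗)),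
      IsHyperfinite R ∧ IsIIOneFactor R ∧
      A ⊆ (R : Set (𝓗 →L[ℂ] 𝓗)) ∧ Set.centralizer A ∩ (R : Set (𝓗 →L[ℂ] 𝓗)) = A ∧
      tower R A α = (R : Set (𝓗 →L[ℂ] 𝓗)) ∧
      (∀ β : Ordinal, β < α → tower R A β ≠ tower R A (β + 1)) ∧
      tower R A 1 = vNGen (normSet R A) ∧
      IsFactorSet (tower R A 1) ∧ tower R A 1 ≠ (R : Set (𝓗 →L[ℂ] 𝓗)) ∧
      (∀ β : Ordinal, 1 ≤ β → β < α →
        (∀ u ∈ normSet R (tower R A β), ∀ a ∈ tower R A β,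
          a ∈ unitary (𝓗 →L[ℂ] 𝓗) → u * a * star u ∈ tower R A β) ∧
        ∃ φ : (𝓗 →L[ℂ] 𝓗) → G β,
          (∀ u ∈ normSet R (tower R A β), ∀ v ∈ normSet R (tower R A β),
            φ (u * v) = φ u * φ v) ∧
          (∀ g : G β, ∃ u ∈ normSet R (tower R A β), φ u = g) ∧
          (∀ u ∈ normSet R (tower R A β), (φ u = 1 ↔ u ∈ tower R A β))) := by
  have h01 : ∃ g : Λ, g ≠ 1 := by
    by_contra! h
    refine t.zero_ne_one (Subgroup.ext fun g => ?_)
    rw [h g]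
    simp
  have := t.infinite h01
  refine ⟨Ell2 Λ, inferInstance, inferInstance, inferInstance, groupVN Λ, subVN (t.group 0), hyp,
    isIIOneFactor_groupVN fun g hg => (t.infinite_conj g hg).mono (by
      rintro _ ⟨h, _, e⟩; exact ⟨h, e⟩),
    fun _ h => h.1, subVN_masa _ t.comm t.infinite_conj_zero, ?_, ?_, ?_, ?_, ?_, ?_⟩
  · rw [t.tower_eq α le_rfl, t.top, subVN_top]
  · intro β hβ h
    rw [t.tower_eq β hβ.le, t.tower_eq _ (Order.add_one_le_iff.2 hβ)] at h
    rcases eq_or_ne β 0 with rfl | h0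
    · rw [zero_add] at h
      exact t.zero_ne_one (subVN_injective h)
    · have := hG β (Order.one_le_iff_pos.2 (pos_of_ne_zero h0)) hβ
      exact t.group_ne hβ (subVN_injective h)
  · exact tower_one _ _
  · rw [t.tower_one_eq]
    exact isFactorSet_subVN _ t.infinite_conj
  · rw [t.tower_one_eq, ← subVN_top]
    intro h
    have := hG 1 le_rfl hα
    refine t.group_ne hα ?_
    have h1 := subVN_injective h
    rw [h1, eq_comm, eq_top_iff, ← h1]
    exact t.one_le _ (by simp)
  · intro β h1 hβ
    rw [t.tower_eq β hβ.le]
    refine ⟨fun u hu a ha _ => ?_, ?_⟩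
    · rw [← hu.2.2]
      exact ⟨a, ha, rfl⟩
    · obtain ⟨ψ, hs, hk⟩ := t.exists_hom β h1 hβ
      have hinf := t.infinite_conj' h1
      have hK := t.normalizer_eq β h1 hβ
      exact ⟨normSetMap _ ψ, fun u hu v hv => normSetMap_mul hinf hK hk hu hv,
        fun q => exists_normSetMap_eq hinf hK hk hs q,
        fun u hu => normSetMap_eq_one_iff hinf hK hk hu⟩

end SubgroupTower

namespace IteratedWreath

variable {I : Type} [LinearOrder I] (G : I → Type) [∀ i, Group (G i)]

/-- Finitely supported families of group elements. -/
def Fam : Type := {x : ∀ i, G i // {i | x i ≠ 1}.Finite}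

variable {G}

namespace Fam

instance : CoeFun (Fam G) fun _ => ∀ i, G i := ⟨Subtype.val⟩

theorem ext {x y : Fam G} (h : ∀ i, x i = y i) : x = y := Subtype.ext (funext h)

instance : One (Fam G) := ⟨⟨fun _ => 1, by simp⟩⟩

@[simp]
theorem one_apply (i : I) : (1 : Fam G) i = 1 := rfl

/-- Change the coordinate of `x` at `i`. -/
def update (x : Fam G) (i : I) (g : G i) : Fam G :=
  ⟨Function.update x.1 i g, (x.2.insert i).subset fun j hj => by
    by_cases h : j = i
    · exact Or.inl h
    · right
      simpa [Function.update_of_ne h] using hj⟩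

@[simp]
theorem update_self (x : Fam G) (i : I) (g : G i) : x.update i g i = g :=
  Function.update_self i g x.1

theorem update_of_ne (x : Fam G) {i j : I} (h : j ≠ i) (g : G i) : x.update i g j = x j :=
  Function.update_of_ne h g x.1

instance [Countable I] [∀ i, Countable (G i)] : Countable (Fam G) := by
  classical
  have : Function.Injective fun x : Fam G => x.2.toFinset.image fun i => (⟨i, x i⟩ : Σ i, G i) := by
    intro x y h
    have key : ∀ x y : Fam G, (x.2.toFinset.image fun i => (⟨i, x i⟩ : Σ i, G i)) =
        (y.2.toFinset.image fun i => (⟨i, y i⟩ : Σ i, G i)) → ∀ i, x i ≠ 1 → x i = y i := by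
      intro x y h i hi
      have h1 : (⟨i, x i⟩ : Σ i, G i) ∈ y.2.toFinset.image fun i => (⟨i, y i⟩ : Σ i, G i) := by
        rw [← h]
        exact Finset.mem_image.2 ⟨i, by simpa using hi, rfl⟩
      obtain ⟨j, _, hj⟩ := Finset.mem_image.1 h1
      obtain ⟨rfl, hj⟩ := Sigma.mk.inj_iff.1 hj
      exact (eq_of_heq hj).symm
    refine ext fun i => ?_
    by_cases hx : x i = 1
    · by_cases hy : y i = 1
      · rw [hx, hy]
      · exact (key y x h.symm i hy).symm
    · exact key x y h i hx
  exact this.countable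

end Fam

/-- The families `x` and `y` agree above `i`. -/
def AgreeAbove (i : I) (x y : Fam G) : Prop := ∀ j, i < j → x j = y j

open Classical in
/-- The map multiplying the `i`-th coordinate by `g` on the families agreeing with `y` above
`i`. -/
def shiftFun (i : I) (g : G i) (y x : Fam G) : Fam G :=
  if AgreeAbove i x y then x.update i (g * x i) else x

theorem shiftFun_of_ne {i j : I} (h : j ≠ i) (g : G i) (y x : Fam G) :
    shiftFun i g y x j = x j := by
  rw [shiftFun]
  split_ifs
  · exact x.update_of_ne h _
  · rfl

open Classical in
theorem shiftFun_self (i : I) (g : G i) (y x : Fam G) :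
    shiftFun i g y x i = (if AgreeAbove i x y then g else 1) * x i := by
  rw [shiftFun]
  split_ifs <;> simp

theorem shiftFun_self_self (i : I) (g : G i) (y : Fam G) : shiftFun i g y y i = g * y i := by
  classical
  have h : AgreeAbove i y y := fun _ _ => rfl
  rw [shiftFun_self]
  simp only [if_pos h]

theorem agreeAbove_shiftFun (i : I) (g : G i) (y x : Fam G) : AgreeAbove i (shiftFun i g y x) x :=
  fun _ hj => shiftFun_of_ne hj.ne' g y x

theorem AgreeAbove.symm {i : I} {x y : Fam G} (h : AgreeAbove i x y) : AgreeAbove i y x :=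
  fun j hj => (h j hj).symm

theorem AgreeAbove.trans {i : I} {x y z : Fam G} (h : AgreeAbove i x y) (h' : AgreeAbove i y z) :
    AgreeAbove i x z := fun j hj => (h j hj).trans (h' j hj)

theorem AgreeAbove.congr_left {i : I} {x x' y : Fam G} (h : AgreeAbove i x x') :
    AgreeAbove i x y ↔ AgreeAbove i x' y := ⟨h.symm.trans, h.trans⟩

theorem shiftFun_shiftFun (i : I) (g h : G i) (y x : Fam G) :
    shiftFun i g y (shiftFun i h y x) = shiftFun i (g * h) y x := by
  classical
  refine Fam.ext fun j => ?_
  by_cases hj : j = i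
  · subst hj
    simp only [shiftFun_self, (agreeAbove_shiftFun j h y x).congr_left]
    split_ifs <;> simp [mul_assoc]
  · simp only [shiftFun_of_ne hj]

theorem shiftFun_one (i : I) (y x : Fam G) : shiftFun i 1 y x = x := by
  refine Fam.ext fun j => ?_
  by_cases hj : j = i
  · subst hj
    simp [shiftFun_self]
  · exact shiftFun_of_ne hj _ _ _

/-- The permutation multiplying the `i`-th coordinate by `g` on the families agreeing with `y`
above `i`. -/
def shift (i : I) (y : Fam G) : G i →* Equiv.Perm (Fam G) where
  toFun g := ⟨shiftFun i g y, shiftFun i g⁻¹ y, fun x => by simp [shiftFun_shiftFun, shiftFun_one],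
    fun x => by simp [shiftFun_shiftFun, shiftFun_one]⟩
  map_one' := Equiv.ext fun x => shiftFun_one i y x
  map_mul' g h := Equiv.ext fun x => (shiftFun_shiftFun i g h y x).symm

@[simp]
theorem shift_apply (i : I) (y : Fam G) (g : G i) (x : Fam G) :
    shift i y g x = shiftFun i g y x := rfl

/-- The change of the `i`-th coordinate under `w` only depends on the coordinates above `i`. -/
def IsTriangular (w : Equiv.Perm (Fam G)) : Prop :=
  ∀ i x y, AgreeAbove i x y → w x i * (x i)⁻¹ = w y i * (y i)⁻¹

theorem IsTriangular.agreeAbove {w : Equiv.Perm (Fam G)} (hw : IsTriangular w) {i : I}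
    {x y : Fam G} (h : AgreeAbove i x y) : AgreeAbove i (w x) (w y) := fun j hj => by
  have := hw j x y fun k hk => h k (hj.trans hk)
  rw [h j hj] at this
  exact mul_right_cancel this

theorem IsTriangular.mul {w v : Equiv.Perm (Fam G)} (hw : IsTriangular w) (hv : IsTriangular v) :
    IsTriangular (w * v) := fun i x y h => by
  have h1 := hw i (v x) (v y) (hv.agreeAbove h)
  have h2 := hv i x y h
  have e : ∀ z, (w * v) z i * (z i)⁻¹ = w (v z) i * (v z i)⁻¹ * (v z i * (z i)⁻¹) := fun z => by
    rw [Equiv.Perm.mul_apply]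
    group
  rw [e, e, h1, h2]

variable (G) in
/-- The group of triangular permutations. -/
def triangular : Subgroup (Equiv.Perm (Fam G)) where
  carrier := {w | IsTriangular w ∧ IsTriangular w⁻¹}
  mul_mem' := fun {w v} hw hv => ⟨hw.1.mul hv.1, by rw [mul_inv_rev]; exact hv.2.mul hw.2⟩
  one_mem' := by
    have : IsTriangular (1 : Equiv.Perm (Fam G)) := fun i x y _ => by simp
    exact ⟨this, by rw [inv_one]; exact this⟩
  inv_mem' := fun {w} hw => ⟨hw.2, by rw [inv_inv]; exact hw.1⟩

theorem isTriangular_shift (i : I) (y : Fam G) (g : G i) : IsTriangular (shift i y g) := by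
  classical
  intro j x z h
  by_cases hj : j = i
  · subst hj
    simp [shiftFun_self, h.congr_left]
  · simp [shiftFun_of_ne hj]

variable (G) in
/-- The iterated wreath product of the family `G`. -/
def wreath : Subgroup (Equiv.Perm (Fam G)) :=
  Subgroup.closure (Set.range fun p : Σ i, G i × Fam G => shift p.1 p.2.2 p.2.1)

theorem shift_mem (i : I) (y : Fam G) (g : G i) : shift i y g ∈ wreath G :=
  Subgroup.subset_closure ⟨⟨i, g, y⟩, rfl⟩

theorem wreath_le : wreath G ≤ triangular G := by
  rw [wreath, Subgroup.closure_le]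
  rintro _ ⟨⟨i, g, y⟩, rfl⟩
  exact ⟨isTriangular_shift i y g, by rw [← map_inv]; exact isTriangular_shift i y g⁻¹⟩

theorem isTriangular (w : wreath G) : IsTriangular (w : Equiv.Perm (Fam G)) := (wreath_le w.2).1

theorem mul_apply_one {i : I} (w v : wreath G) (hv : AgreeAbove i (v.1 1) 1) :
    (w * v).1 1 i = w.1 1 i * v.1 1 i := by
  have := isTriangular w i _ _ hv
  simp only [Fam.one_apply, inv_one, mul_one] at this
  rw [← this]
  simp

variable (G) in
/-- The elements of the iterated wreath product fixing the coordinates of `1` in `U`. -/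
def stab (U : UpperSet I) : Subgroup (wreath G) where
  carrier := {w | ∀ i ∈ U, w.1 1 i = 1}
  one_mem' := fun i _ => rfl
  mul_mem' := fun {w v} hw hv i hi => by
    rw [mul_apply_one w v fun j hj => hv j (U.upper hj.le hi), hw i hi, hv i hi, mul_one]
  inv_mem' := fun {w} hw i hi => by
    have := mul_apply_one w⁻¹ w (i := i) fun j hj => hw j (U.upper hj.le hi)
    rw [hw i hi, mul_one, inv_mul_cancel] at this
    exact this.symm

theorem mem_stab {U : UpperSet I} {w : wreath G} : w ∈ stab G U ↔ ∀ i ∈ U, w.1 1 i = 1 := Iff.rfl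

theorem agreeAbove_of_mem_stab {i : I} {w : wreath G} (hw : w ∈ stab G (UpperSet.Ioi i)) :
    AgreeAbove i (w.1 1) 1 := fun j hj => hw j hj

/-- The `i`-th coordinate of the image of `1`. -/
def stabHom (i : I) : stab G (UpperSet.Ioi i) →* G i where
  toFun w := w.1.1 1 i
  map_one' := rfl
  map_mul' w v := mul_apply_one w.1 v.1 (agreeAbove_of_mem_stab v.2)

theorem stabHom_surjective (i : I) : Function.Surjective (stabHom (G := G) i) := fun g => by
  refine ⟨⟨⟨shift i 1 g, shift_mem i 1 g⟩, fun j hj => ?_⟩, ?_⟩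
  · exact shiftFun_of_ne (ne_of_gt hj) _ _ _
  · change shiftFun i g 1 1 i = g
    rw [shiftFun_self_self]
    simp

theorem mem_stab_Ici_iff {i : I} {w : wreath G} :
    w ∈ stab G (UpperSet.Ici i) ↔ w ∈ stab G (UpperSet.Ioi i) ∧ w.1 1 i = 1 := by
  simp only [mem_stab, UpperSet.mem_Ici_iff, UpperSet.mem_Ioi_iff]
  constructor
  · exact fun h => ⟨fun j hj => h j hj.le, h i le_rfl⟩
  · rintro ⟨h1, h2⟩ j hj
    rcases hj.eq_or_lt with rfl | hj
    · exact h2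
    · exact h1 j hj

theorem stabHom_eq_one_iff {i : I} (w : stab G (UpperSet.Ioi i)) :
    stabHom i w = 1 ↔ (w : wreath G) ∈ stab G (UpperSet.Ici i) := by
  rw [mem_stab_Ici_iff]
  exact ⟨fun h => ⟨w.2, h⟩, fun h => h.2⟩

theorem normalizer_stab (i : I) [Nontrivial (G i)] :
    Subgroup.normalizer (stab G (UpperSet.Ici i) : Set (wreath G)) = stab G (UpperSet.Ioi i) := by
  have key : ∀ w ∈ stab G (UpperSet.Ioi i), ∀ n ∈ stab G (UpperSet.Ici i),
      w * n * w⁻¹ ∈ stab G (UpperSet.Ici i) := by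
    intro w hw n hn
    have hn' := (mem_stab_Ici_iff.1 hn).1
    have := (stabHom_eq_one_iff (⟨w, hw⟩ * ⟨n, hn'⟩ * ⟨w, hw⟩⁻¹)).1 (by
      rw [map_mul, map_mul, (stabHom_eq_one_iff ⟨n, hn'⟩).2 hn, mul_one, ← map_mul, mul_inv_cancel,
        map_one])
    exact this
  refine le_antisymm (fun w hw => ?_) (fun w hw => ?_)
  · intro j hj
    by_contra hne
    obtain ⟨g, hg⟩ := exists_ne (1 : G i)
    set s : wreath G := ⟨shift i (w.1 1) g, shift_mem _ _ _⟩
    have hs : s ∈ stab G (UpperSet.Ici i) := by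
      have : s.1 1 = 1 := by
        change shiftFun i g (w.1 1) 1 = 1
        rw [shiftFun, if_neg]
        intro h
        exact hne (h j hj).symm
      intro k _
      rw [this]
      rfl
    have h1 := (Subgroup.mem_normalizer_iff.1 (inv_mem hw) s).1 hs
    rw [inv_inv] at h1
    have h2 := h1 i (UpperSet.mem_Ici_iff.2 le_rfl)
    have h3 := isTriangular w⁻¹ i _ _ (agreeAbove_shiftFun i g (w.1 1) (w.1 1))
    have h4 : (w⁻¹ * s * w).1 1 = (w⁻¹).1 (shiftFun i g (w.1 1) (w.1 1)) := rfl
    have h5 : (w⁻¹).1 (w.1 1) = 1 := by simp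
    rw [h4] at h2
    rw [h2, h5, shiftFun_self_self] at h3
    simp at h3
    exact hg h3
  · rw [Subgroup.mem_normalizer_iff]
    intro n
    refine ⟨key w hw n, fun h => ?_⟩
    have := key w⁻¹ (inv_mem hw) _ h
    simpa [mul_assoc] using this

theorem finite_support (w : wreath G) : {i | w.1 1 i ≠ 1}.Finite := (w.1 1).2

end IteratedWreath

section Folner

open scoped Pointwise
open Finset

open Classical in
theorem IsAmenable.exists_folner {G : Type*} [Group G] (hG : IsAmenable G) (S : Finset G) {ε : ℝ}
    (hε : 0 < ε) :
    ∃ F : Finset G, F.Nonempty ∧ ∀ s ∈ S, (#{a ∈ F | s * a ∉ F} : ℝ) ≤ ε * #F := by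
  by_contra! hF
  set K : Finset G := insert 1 S with hK
  have grow : ∀ F : Finset G, (1 + ε) * #F ≤ #(K * F) := by
    intro F
    rcases F.eq_empty_or_nonempty with rfl | hne
    · simp
    obtain ⟨s, hs, hlt⟩ := hF F hne
    have hsub : F ∪ ({a ∈ F | s * a ∉ F}.image fun a => s * a) ⊆ K * F := by
      intro x hx
      rcases mem_union.1 hx with hx | hx
      · exact mem_mul.2 ⟨1, mem_insert_self _ _, x, hx, one_mul x⟩
      · obtain ⟨a, ha, rfl⟩ := mem_image.1 hx
        exact mul_mem_mul (mem_insert_of_mem hs) (mem_filter.1 ha).1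
    have hdisj : Disjoint F ({a ∈ F | s * a ∉ F}.image fun a => s * a) := by
      rw [disjoint_left]
      intro x hx hx'
      obtain ⟨a, ha, rfl⟩ := mem_image.1 hx'
      exact (mem_filter.1 ha).2 hx
    have hcard := card_le_card hsub
    rw [card_union_of_disjoint hdisj, card_image_of_injective _ (mul_right_injective s)] at hcard
    have : (#F : ℝ) + #{a ∈ F | s * a ∉ F} ≤ #(K * F) := by exact_mod_cast hcard
    linarith
  have growpow : ∀ (n : ℕ) (F : Finset G), (1 + ε) ^ n * #F ≤ #(K ^ n * F) := by
    intro n F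
    induction n with
    | zero => simp
    | succ n ih =>
      have := grow (K ^ n * F)
      rw [← mul_assoc, ← pow_succ'] at this
      refine le_trans ?_ this
      rw [pow_succ', mul_assoc]
      exact mul_le_mul_of_nonneg_left ih (by linarith)
  obtain ⟨n, hn⟩ := pow_unbounded_of_one_lt 2 (show 1 < 1 + ε by linarith)
  set L := K ^ n
  obtain ⟨f, hf, hfL⟩ := (Finset.all_card_le_biUnion_card_iff_exists_injective
    (fun p : G × Bool => L * {p.1})).1 (by
      intro A
      have h1 : #A ≤ #(A.image Prod.fst ×ˢ (univ : Finset Bool)) := card_le_card fun p hp =>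
        mem_product.2 ⟨mem_image_of_mem _ hp, mem_univ _⟩
      rw [card_product, card_univ, Fintype.card_bool] at h1
      have h2 : L * A.image Prod.fst ⊆ A.biUnion fun p : G × Bool => L * {p.1} := by
        intro x hx
        obtain ⟨k, hk, g, hg, rfl⟩ := mem_mul.1 hx
        obtain ⟨p, hp, rfl⟩ := mem_image.1 hg
        exact mem_biUnion.2 ⟨p, hp, mul_mem_mul hk (mem_singleton_self _)⟩
      have h3 := growpow n (A.image Prod.fst)
      have h4 := card_le_card h2
      have h5 : (#(A.image Prod.fst) * 2 : ℝ) ≤ #(L * A.image Prod.fst) := by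
        refine le_trans ?_ h3
        rw [mul_comm]
        exact mul_le_mul_of_nonneg_right hn.le (by positivity)
      have h6 : #(A.image Prod.fst) * 2 ≤ #(L * A.image Prod.fst) := by exact_mod_cast h5
      exact h1.trans (h6.trans h4))
  obtain ⟨μ, hpos, huniv, hadd, hinv⟩ := hG
  have hempty : μ ∅ = 0 := by
    have := hadd ∅ ∅ (Set.inter_self _)
    rw [Set.union_self] at this
    linarith
  have hmono : ∀ s t : Set G, s ⊆ t → μ s ≤ μ t := by
    intro s t hst
    have := hadd s (t \ s) (Set.inter_sdiff_self s t)
    rw [Set.union_sdiff_cancel hst] at this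
    linarith [hpos (t \ s)]
  have hsum : ∀ (s : G → Set G), (∀ k l x, x ∈ s k → x ∈ s l → k = l) → ∀ L : Finset G,
      μ (⋃ k ∈ L, s k) = ∑ k ∈ L, μ (s k) := by
    intro s hs L
    induction L using Finset.induction_on with
    | empty => simp [hempty]
    | insert k L hk ih =>
      rw [Finset.set_biUnion_insert, hadd, ih, Finset.sum_insert hk]
      ext x
      simp only [Set.mem_inter_iff, Set.mem_iUnion, Set.mem_empty_iff_false, iff_false]
      rintro ⟨h1, l, hl, h2⟩
      exact hk (hs k l x h1 h2 ▸ hl)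
  have hone : ∀ i : Bool, 1 ≤ μ (Set.range fun g => f (g, i)) := by
    intro i
    have h1 := hsum (fun k => {g | f (g, i) = k * g}) (by
      intro k l x hk hl
      exact mul_right_cancel (hk.symm.trans hl)) L
    have h2 := hsum (fun k => (fun x => k * x) '' {g | f (g, i) = k * g}) (by
      rintro k l _ ⟨g, hg, rfl⟩ ⟨g', hg', e⟩
      have hg : f (g, i) = k * g := hg
      have hg' : f (g', i) = l * g' := hg'
      have e : l * g' = k * g := e
      rw [← hg, ← hg'] at e
      have := congrArg Prod.fst (hf e)
      simp only at this
      subst this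
      exact mul_right_cancel (hg.symm.trans hg')) L
    have h3 : (⋃ k ∈ L, {g | f (g, i) = k * g}) = Set.univ := by
      refine Set.eq_univ_of_forall fun g => ?_
      obtain ⟨k, hk, x, hx, e⟩ := mem_mul.1 (hfL (g, i))
      rw [mem_singleton] at hx
      subst hx
      exact Set.mem_biUnion hk e.symm
    simp only [hinv] at h2
    rw [h3, huniv] at h1
    rw [h1, ← h2]
    refine hmono _ _ ?_
    simp only [Set.iUnion_subset_iff]
    rintro k - _ ⟨g, hg, rfl⟩
    exact ⟨g, hg⟩
  have h1 := hadd (Set.range fun g => f (g, true)) (Set.range fun g => f (g, false)) (by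
    ext x
    simp only [Set.mem_inter_iff, Set.mem_empty_iff_false, iff_false]
    rintro ⟨⟨g, rfl⟩, ⟨g', e⟩⟩
    have := congrArg Prod.snd (hf e)
    simp at this)
  have h2 := hmono _ _ (Set.subset_univ
    ((Set.range fun g => f (g, true)) ∪ (Set.range fun g => f (g, false))))
  linarith [hone true, hone false]

open Classical in
/-- The subgroup `N` admits almost invariant finite subsets. -/
def IsFolner {Γ : Type*} [Group Γ] (N : Subgroup Γ) : Prop :=
  ∀ S : Finset Γ, (∀ s ∈ S, s ∈ N) → ∀ ε : ℝ, 0 < ε → ∃ F : Finset Γ, F.Nonempty ∧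
    (∀ a ∈ F, a ∈ N) ∧ ∀ s ∈ S, (#{a ∈ F | s * a ∉ F} : ℝ) ≤ ε * #F

namespace IsFolner

variable {Γ Δ : Type*} [Group Γ] [Group Δ]

theorem of_isAmenable (h : IsAmenable Γ) : IsFolner (⊤ : Subgroup Γ) := fun S _ ε hε => by
  obtain ⟨F, h1, h2⟩ := h.exists_folner S hε
  exact ⟨F, h1, fun _ _ => trivial, h2⟩

theorem map {N : Subgroup Γ} (h : IsFolner N) {φ : Γ →* Δ} (hφ : Function.Injective φ) :
    IsFolner (N.map φ) := fun S hS ε hε => by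
  classical
  obtain ⟨F, h1, h2, h3⟩ := h (S.preimage φ hφ.injOn) (by
    intro s hs
    obtain ⟨t, ht, e⟩ := hS _ (mem_preimage.1 hs)
    exact hφ e ▸ ht) ε hε
  refine ⟨F.image φ, h1.image _, ?_, ?_⟩
  · intro a ha
    obtain ⟨b, hb, rfl⟩ := mem_image.1 ha
    exact ⟨b, h2 b hb, rfl⟩
  · intro s hs
    obtain ⟨t, ht, rfl⟩ := hS s hs
    have := h3 t (mem_preimage.2 hs)
    rw [card_image_of_injective _ hφ]
    refine le_trans ?_ this
    have hle : #{a ∈ F.image φ | φ t * a ∉ F.image φ} ≤ #{a ∈ F | t * a ∉ F} := by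
      rw [← card_image_of_injective {a ∈ F | t * a ∉ F} hφ]
      refine card_le_card fun x hx => ?_
      obtain ⟨hx, hx'⟩ := mem_filter.1 hx
      obtain ⟨a, ha, rfl⟩ := mem_image.1 hx
      refine mem_image_of_mem _ (mem_filter.2 ⟨ha, fun h => hx' ?_⟩)
      rw [← map_mul]
      exact mem_image_of_mem _ h
    exact_mod_cast hle

theorem comap {N : Subgroup Δ} (h : IsFolner N) {φ : Γ →* Δ} (hφ : Function.Injective φ)
    (hN : N ≤ φ.range) : IsFolner (N.comap φ) := fun S hS ε hε => by
  classical
  obtain ⟨F, h1, h2, h3⟩ := h (S.image φ) (by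
    intro s hs
    obtain ⟨t, ht, rfl⟩ := mem_image.1 hs
    exact hS t ht) ε hε
  have hF : (F.preimage φ hφ.injOn).image φ = F := by
    refine image_preimage_of_bij φ F ⟨fun x hx => hx, hφ.injOn, fun x hx => ?_⟩
    obtain ⟨t, rfl⟩ := hN (h2 x hx)
    exact ⟨t, hx, rfl⟩
  have hcard : #(F.preimage φ hφ.injOn) = #F := by
    conv_rhs => rw [← hF]
    rw [card_image_of_injective _ hφ]
  refine ⟨F.preimage φ hφ.injOn, ?_, ?_, ?_⟩
  · rw [← image_nonempty (f := φ), hF]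
    exact h1
  · exact fun a ha => h2 _ (mem_preimage.1 ha)
  · intro s hs
    refine le_trans ?_ ((h3 _ (mem_image_of_mem _ hs)).trans_eq (by rw [hcard]))
    have hle : #{a ∈ F.preimage φ hφ.injOn | s * a ∉ F.preimage φ hφ.injOn} ≤
        #{a ∈ F | φ s * a ∉ F} := by
      rw [← card_image_of_injective _ hφ]
      refine card_le_card fun x hx => ?_
      obtain ⟨a, ha, rfl⟩ := mem_image.1 hx
      simpa using ha
    exact_mod_cast hle

theorem bot : IsFolner (⊥ : Subgroup Γ) := fun S hS ε hε => by
  refine ⟨{1}, singleton_nonempty 1, by simp, fun s hs => ?_⟩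
  have : s = 1 := hS s hs
  subst this
  have : (1 : Γ) * 1 ∈ ({1} : Finset Γ) := by simp
  simp [filter_singleton, hε.le]

theorem sup {N V : Subgroup Γ} (hN : IsFolner N) (hV : IsFolner V)
    (hle : V ≤ Subgroup.normalizer (N : Set Γ)) (hbot : N ⊓ V = ⊥) : IsFolner (N ⊔ V) := by
  classical
  intro S hS ε hε
  have hdec : ∀ s ∈ S, ∃ n ∈ N, ∃ v ∈ V, n * v = s := by
    intro s hs
    have : s ∈ ((N ⊔ V : Subgroup Γ) : Set Γ) := hS s hs
    rw [Subgroup.coe_mul_of_right_le_normalizer_left _ _ hle] at this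
    exact Set.mem_mul.1 this
  choose! n hn v hv hnv using hdec
  obtain ⟨A, hA1, hA2, hA3⟩ := hV (S.image v) (by
    intro s hs
    obtain ⟨t, ht, rfl⟩ := mem_image.1 hs
    exact hv t ht) (ε / 2) (by positivity)
  obtain ⟨B, hB1, hB2, hB3⟩ := hN (image₂ (fun b s => b⁻¹ * n s * b) A S) (by
    intro s hs
    obtain ⟨b, hb, t, ht, rfl⟩ := mem_image₂.1 hs
    exact (Subgroup.mem_normalizer_iff''.1 (hle (hA2 b hb)) (n t)).1 (hn t ht)) (ε / 2)
    (by positivity)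
  have hinj : Set.InjOn (fun p : Γ × Γ => p.1 * p.2) (A ×ˢ B : Finset (Γ × Γ)) := by
    rintro ⟨a, b⟩ hab ⟨a', b'⟩ hab' e
    obtain ⟨ha, hb⟩ := mem_product.1 (mem_coe.1 hab)
    obtain ⟨ha', hb'⟩ := mem_product.1 (mem_coe.1 hab')
    simp only at e ha hb ha' hb'
    have h1 : a'⁻¹ * a = b' * b⁻¹ := by
      rw [inv_mul_eq_iff_eq_mul, ← mul_assoc, ← e]
      group
    have h2 : a'⁻¹ * a ∈ N ⊓ V := by
      refine ⟨?_, V.mul_mem (V.inv_mem (hA2 _ ha')) (hA2 _ ha)⟩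
      rw [h1]
      exact N.mul_mem (hB2 _ hb') (N.inv_mem (hB2 _ hb))
    rw [hbot, Subgroup.mem_bot, inv_mul_eq_one] at h2
    subst h2
    rw [mul_right_inj] at e
    rw [e]
  refine ⟨(A ×ˢ B).image fun p => p.1 * p.2, (hA1.product hB1).image _, ?_, ?_⟩
  · intro x hx
    obtain ⟨p, hp, rfl⟩ := mem_image.1 hx
    obtain ⟨ha, hb⟩ := mem_product.1 hp
    exact mul_mem (Subgroup.mem_sup_right (hA2 _ ha)) (Subgroup.mem_sup_left (hB2 _ hb))
  · intro s hs
    rw [card_image_of_injOn hinj, card_product]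
    have hsub : {a ∈ (A ×ˢ B).image fun p => p.1 * p.2 |
        s * a ∉ (A ×ˢ B).image fun p => p.1 * p.2} ⊆
        (({a ∈ A | v s * a ∉ A} ×ˢ B) ∪ (A ×ˢ B).filter fun p => v s * p.1 ∈ A ∧
          ((v s * p.1)⁻¹ * n s * (v s * p.1)) * p.2 ∉ B).image fun p => p.1 * p.2 := by
      intro x hx
      obtain ⟨hx, hx'⟩ := mem_filter.1 hx
      obtain ⟨⟨a, b⟩, hp, rfl⟩ := mem_image.1 hx
      refine mem_image_of_mem _ ?_
      obtain ⟨ha, hb⟩ := mem_product.1 hp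
      simp only at ha hb hx'
      rw [mem_union]
      by_cases h : v s * a ∈ A
      · right
        refine mem_filter.2 ⟨hp, h, fun hB => hx' ?_⟩
        refine mem_image.2 ⟨(v s * a, _), mem_product.2 ⟨h, hB⟩, ?_⟩
        conv_rhs => rw [← hnv s hs]
        group
      · exact Or.inl (mem_product.2 ⟨mem_filter.2 ⟨ha, h⟩, hb⟩)
    have h1 := ((card_le_card hsub).trans card_image_le).trans (card_union_le _ _)
    rw [card_product] at h1
    have h2 : #((A ×ˢ B).filter fun p => v s * p.1 ∈ A ∧
          ((v s * p.1)⁻¹ * n s * (v s * p.1)) * p.2 ∉ B) ≤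
        ∑ a ∈ A with v s * a ∈ A, #{b ∈ B | ((v s * a)⁻¹ * n s * (v s * a)) * b ∉ B} := by
      rw [← card_sigma]
      refine card_le_card_of_injOn (fun p => ⟨p.1, p.2⟩) ?_ ?_
      · intro p hp
        have hp := mem_filter.1 (mem_coe.1 hp)
        have hp1 := mem_product.1 hp.1
        exact mem_coe.2 (mem_sigma.2 ⟨mem_filter.2 ⟨hp1.1, hp.2.1⟩,
          mem_filter.2 ⟨hp1.2, hp.2.2⟩⟩)
      · rintro ⟨a, b⟩ _ ⟨a', b'⟩ _ e
        simpa using e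
    have h3 : ((∑ a ∈ A with v s * a ∈ A,
        #{b ∈ B | ((v s * a)⁻¹ * n s * (v s * a)) * b ∉ B} : ℕ) : ℝ) ≤ #A * (ε / 2 * #B) := by
      push_cast
      refine (sum_le_card_nsmul _ _ (ε / 2 * #B) ?_).trans ?_
      · intro a ha
        exact hB3 _ (mem_image₂_of_mem (mem_filter.1 ha).2 hs)
      · rw [nsmul_eq_mul]
        have : #{a ∈ A | v s * a ∈ A} ≤ #A := card_filter_le _ _
        exact mul_le_mul_of_nonneg_right (by exact_mod_cast this) (by positivity)
    have h4 := hA3 (v s) (mem_image_of_mem _ hs)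
    have h5 : (#{a ∈ (A ×ˢ B).image fun p => p.1 * p.2 |
        s * a ∉ (A ×ˢ B).image fun p => p.1 * p.2} : ℝ) ≤
        #{a ∈ A | v s * a ∉ A} * #B + ((∑ a ∈ A with v s * a ∈ A,
        #{b ∈ B | ((v s * a)⁻¹ * n s * (v s * a)) * b ∉ B} : ℕ) : ℝ) := by
      exact_mod_cast h1.trans (Nat.add_le_add_left h2 _)
    have h6 : (#{a ∈ A | v s * a ∉ A} : ℝ) * #B ≤ ε / 2 * #A * #B :=
      mul_le_mul_of_nonneg_right h4 (by positivity)
    push_cast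
    linarith

theorem iSup_of_directed {ι : Type*} {N : ι → Subgroup Γ} (h : ∀ i, IsFolner (N i))
    (hd : Directed (· ≤ ·) N) : IsFolner (⨆ i, N i) := by
  rcases isEmpty_or_nonempty ι with hι | hι
  · rw [iSup_of_empty]
    exact bot
  intro S hS ε hε
  have : ∃ i, ∀ s ∈ S, s ∈ N i := by
    classical
    induction S using Finset.induction_on with
    | empty => simp
    | insert s S _ ih =>
      obtain ⟨i, hi⟩ := ih fun t ht => hS t (mem_insert_of_mem ht)
      obtain ⟨j, hj⟩ := (Subgroup.mem_iSup_of_directed hd).1 (hS s (mem_insert_self _ _))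
      obtain ⟨k, hik, hjk⟩ := hd i j
      refine ⟨k, fun t ht => ?_⟩
      rcases mem_insert.1 ht with rfl | ht
      · exact hjk hj
      · exact hik (hi t ht)
  obtain ⟨i, hi⟩ := this
  obtain ⟨F, h1, h2, h3⟩ := h i S hi ε hε
  exact ⟨F, h1, fun a ha => Subgroup.mem_iSup_of_mem i (h2 a ha), h3⟩

theorem iSup_wellOrder {ι : Type*} [LinearOrder ι] [WellFoundedLT ι] {V : ι → Subgroup Γ}
    (hV : ∀ i, IsFolner (V i))
    (hle : ∀ i, V i ≤ Subgroup.normalizer ((⨆ j : Set.Iio i, V j : Subgroup Γ) : Set Γ))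
    (hbot : ∀ i, (⨆ j : Set.Iio i, V j) ⊓ V i = ⊥) : IsFolner (⨆ i, V i) := by
  set N : ι → Subgroup Γ := fun i => ⨆ j : Set.Iio i, V j with hN
  have hmono : ∀ i j, i < j → N i ⊔ V i ≤ N j := by
    intro i j hij
    refine sup_le (iSup_le fun k => ?_) ?_
    · exact le_iSup (fun l : Set.Iio j => V l) ⟨k, lt_trans k.2 hij⟩
    · exact le_iSup (fun l : Set.Iio j => V l) ⟨i, hij⟩
  have hmono' : Monotone fun i => N i ⊔ V i := fun i j hij => by
    rcases hij.eq_or_lt with rfl | hij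
    · exact le_rfl
    · exact (hmono i j hij).trans le_sup_left
  have key : ∀ i, IsFolner (N i) := by
    intro i
    induction i using WellFoundedLT.induction with
    | ind i ih =>
      have : N i = ⨆ j : Set.Iio i, (N j ⊔ V j) :=
        le_antisymm (iSup_mono fun j => le_sup_right) (iSup_le fun j => hmono _ _ j.2)
      rw [this]
      refine iSup_of_directed (fun j => (ih j j.2).sup (hV j) (hle j) (hbot j)) ?_
      exact (hmono'.comp (Subtype.mono_coe _)).directed_le
  have : (⨆ i, V i) = ⨆ i, (N i ⊔ V i) :=
    le_antisymm (iSup_mono fun j => le_sup_right)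
      (iSup_le fun i => sup_le (iSup_le fun k => le_iSup V k) (le_iSup V i))
  rw [this]
  exact iSup_of_directed (fun i => (key i).sup (hV i) (hle i) (hbot i)) hmono'.directed_le

theorem iSup_of_commute {ι : Type*} {V : ι → Subgroup Γ} (hV : ∀ i, IsFolner (V i))
    (hcomm : ∀ i j, i ≠ j → ∀ a ∈ V i, ∀ b ∈ V j, a * b = b * a)
    (hbot : ∀ i, (⨆ j : {j // j ≠ i}, V j) ⊓ V i = ⊥) : IsFolner (⨆ i, V i) := by
  obtain ⟨_, _⟩ := exists_wellFoundedLT ι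
  refine iSup_wellOrder hV (fun i => ?_) fun i => ?_
  · rw [Subgroup.iSup_eq_closure, Subgroup.le_normalizer_closure_iff]
    intro a ha b hb
    obtain ⟨j, hj⟩ := Set.mem_iUnion.1 hb
    rw [hcomm i j j.2.ne' a ha b hj, mul_inv_cancel_right]
    exact Subgroup.subset_closure hb
  · rw [eq_bot_iff, ← hbot i]
    refine inf_le_inf_right _ (iSup_le fun j => ?_)
    exact le_iSup (fun j : {j // j ≠ i} => V j) ⟨j, j.2.ne⟩

theorem int : IsFolner (⊤ : Subgroup (Multiplicative ℤ)) := by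
  classical
  intro S _ ε hε
  obtain ⟨n, hn⟩ := exists_nat_gt ((∑ s ∈ S, |((Multiplicative.toAdd s : ℤ) : ℝ)|) / ε)
  rw [div_lt_iff₀ hε] at hn
  have hpos : 0 < n := by
    by_contra h
    rw [Nat.eq_zero_of_not_pos h, Nat.cast_zero, zero_mul] at hn
    exact absurd hn (not_lt.2 (sum_nonneg fun _ _ => abs_nonneg _))
  have hinj : Function.Injective (Multiplicative.ofAdd : ℤ → Multiplicative ℤ) :=
    Multiplicative.ofAdd.injective
  refine ⟨(Finset.Ico (0 : ℤ) n).image Multiplicative.ofAdd, ?_, fun _ _ => trivial, ?_⟩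
  · exact ⟨_, mem_image_of_mem _ (Finset.mem_Ico.2 ⟨le_rfl, by exact_mod_cast hpos⟩)⟩
  · intro s hs
    rw [card_image_of_injective _ hinj, Int.card_Ico, sub_zero, Int.toNat_natCast]
    set m := Multiplicative.toAdd s
    have hsub : {a ∈ (Finset.Ico (0 : ℤ) n).image Multiplicative.ofAdd |
        s * a ∉ (Finset.Ico (0 : ℤ) n).image Multiplicative.ofAdd} ⊆
        (Finset.Ico 0 (-m) ∪ Finset.Ico (n - m) n).image Multiplicative.ofAdd := by
      intro x hx
      obtain ⟨hx, hx'⟩ := mem_filter.1 hx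
      obtain ⟨a, ha, rfl⟩ := mem_image.1 hx
      refine mem_image_of_mem _ ?_
      have : m + a ∉ Finset.Ico (0 : ℤ) n := fun h => hx' (mem_image.2 ⟨m + a, h, rfl⟩)
      simp only [Finset.mem_Ico, mem_union] at this ha ⊢
      omega
    have h1 := ((card_le_card hsub).trans card_image_le).trans (card_union_le _ _)
    rw [Int.card_Ico, Int.card_Ico] at h1
    have h2 : ((#{a ∈ (Finset.Ico (0 : ℤ) n).image Multiplicative.ofAdd |
        s * a ∉ (Finset.Ico (0 : ℤ) n).image Multiplicative.ofAdd} : ℤ)) ≤ |m| := by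
      rcases abs_cases m with h | h <;> omega
    have h3 : (#{a ∈ (Finset.Ico (0 : ℤ) n).image Multiplicative.ofAdd |
        s * a ∉ (Finset.Ico (0 : ℤ) n).image Multiplicative.ofAdd} : ℝ) ≤ |(m : ℝ)| := by
      exact_mod_cast h2
    have h4 := single_le_sum (f := fun s : Multiplicative ℤ => |((Multiplicative.toAdd s : ℤ) : ℝ)|)
      (fun _ _ => abs_nonneg _) hs
    change |(m : ℝ)| ≤ _ at h4
    refine le_trans (le_of_eq ?_) (h3.trans (h4.trans (hn.le.trans_eq (mul_comm _ _))))
    congr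

end IsFolner

end Folner

namespace IteratedWreath

variable {I : Type} [LinearOrder I] {G : I → Type} [∀ i, Group (G i)]

open Classical in
/-- The family `x` with the coordinates not above `i` replaced by `1`. -/
def Fam.trunc (i : I) (x : Fam G) : Fam G :=
  ⟨fun j => if i < j then x j else 1, x.2.subset fun j hj => by
    simp only [Set.mem_ofPred_eq] at hj ⊢
    split_ifs at hj with h
    · exact hj
    · exact absurd rfl hj⟩

theorem Fam.trunc_of_le {i j : I} (h : j ≤ i) (x : Fam G) : x.trunc i j = 1 := if_neg h.not_gt

theorem Fam.agreeAbove_trunc (i : I) (x : Fam G) : AgreeAbove i x (x.trunc i) :=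
  fun _ hj => (if_pos hj).symm

theorem AgreeAbove.shift_eq {i : I} {y z : Fam G} (h : AgreeAbove i y z) (g : G i) :
    shift i y g = shift i z g := by
  classical
  refine Equiv.ext fun x => ?_
  have : AgreeAbove i x y ↔ AgreeAbove i x z := ⟨fun h' => h'.trans h, fun h' => h'.trans h.symm⟩
  simp only [shift_apply, shiftFun, this]

variable (G) in
/-- The permutations preserving the coordinates in `J`. -/
def fixCoord (J : Set I) : Subgroup (Equiv.Perm (Fam G)) where
  carrier := {w | ∀ x, ∀ j ∈ J, w x j = x j}
  one_mem' := fun _ _ _ => rfl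
  mul_mem' := fun hw hv x j hj => (hw _ j hj).trans (hv x j hj)
  inv_mem' := fun {w} hw x j hj => by
    have := hw (w⁻¹ x) j hj
    simpa using this.symm

variable (G) in
/-- The group generated by the shifts of the `i`-th coordinate. -/
def level (i : I) : Subgroup (Equiv.Perm (Fam G)) :=
  ⨆ y : {y : Fam G // ∀ j ≤ i, y j = 1}, (shift i y.1).range

theorem shift_mem_level (i : I) (y : Fam G) (g : G i) : shift i y g ∈ level G i := by
  rw [(y.agreeAbove_trunc i).shift_eq]
  exact Subgroup.mem_iSup_of_mem (⟨y.trunc i, fun j hj => Fam.trunc_of_le hj y⟩ :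
    {y : Fam G // ∀ j ≤ i, y j = 1}) ⟨g, rfl⟩

theorem wreath_eq : wreath G = ⨆ i, level G i := by
  refine le_antisymm ?_ (iSup_le fun i => iSup_le fun y => ?_)
  · rw [wreath, Subgroup.closure_le]
    rintro _ ⟨⟨i, g, y⟩, rfl⟩
    exact Subgroup.mem_iSup_of_mem i (shift_mem_level i y g)
  · rintro _ ⟨g, rfl⟩
    exact shift_mem i _ g

theorem level_le_fixCoord {i : I} {J : Set I} (h : i ∉ J) : level G i ≤ fixCoord G J := by
  refine iSup_le fun y => ?_
  rintro _ ⟨g, rfl⟩ x j hj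
  exact shiftFun_of_ne (ne_of_mem_of_not_mem hj h) _ _ _

theorem fixCoord_inf_eq_bot {J K : Set I} (h : ∀ i, i ∈ J ∨ i ∈ K) :
    fixCoord G J ⊓ fixCoord G K = ⊥ := by
  rw [eq_bot_iff]
  rintro w ⟨hJ, hK⟩
  refine Equiv.ext fun x => Fam.ext fun i => ?_
  rcases h i with h | h
  · exact hJ x i h
  · exact hK x i h

theorem conj_shift {i j : I} (hj : j < i) {w : Equiv.Perm (Fam G)} (hw : w ∈ triangular G)
    (hi : w ∈ fixCoord G {i}ᶜ) (y : Fam G) (g : G j) :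
    w * shift j y g * w⁻¹ = shift j (w y) g := by
  classical
  rw [mul_inv_eq_iff_eq_mul]
  refine Equiv.ext fun x => Fam.ext fun k => ?_
  change w (shiftFun j g y x) k = shiftFun j g (w y) (w x) k
  by_cases hk : k = i
  · subst hk
    have h1 := hw.1 k (shiftFun j g y x) x fun l hl => shiftFun_of_ne (hj.trans hl).ne' _ _ _
    rw [shiftFun_of_ne hj.ne' g y x] at h1
    rw [shiftFun_of_ne hj.ne']
    exact mul_right_cancel h1
  · rw [hi _ k hk]
    by_cases hk' : k = j
    · subst hk'
      have h2 : AgreeAbove k x y ↔ AgreeAbove k (w x) (w y) := by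
        refine ⟨hw.1.agreeAbove, fun h => ?_⟩
        have := hw.2.agreeAbove h
        simpa using this
      simp only [shiftFun_self, h2]
      rw [hi x k hk]
    · rw [shiftFun_of_ne hk', shiftFun_of_ne hk', hi x k hk]

theorem isFolner_level {i : I} (h : IsAmenable (G i)) : IsFolner (level G i) := by
  have hne : ∀ y z : {y : Fam G // ∀ j ≤ i, y j = 1}, y ≠ z → ¬ AgreeAbove i y.1 z.1 := by
    intro y z hyz hA
    refine hyz (Subtype.ext (Fam.ext fun j => ?_))
    rcases lt_or_ge i j with hj | hj
    · exact hA j hj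
    · rw [y.2 j hj, z.2 j hj]
  have hself : ∀ (y : Fam G) (g : G i), shift i y g y = y → g = 1 := by
    intro y g e
    have : shiftFun i g y y i = y i := by
      conv_rhs => rw [← e]
      rfl
    rwa [shiftFun_self_self, mul_eq_right] at this
  refine IsFolner.iSup_of_commute (fun y => ?_) ?_ fun y => ?_
  · rw [MonoidHom.range_eq_map]
    refine (IsFolner.of_isAmenable h).map ?_
    rw [injective_iff_map_eq_one]
    intro g hg
    refine hself y g ?_
    rw [hg]
    rfl
  · rintro y z hyz _ ⟨g, rfl⟩ _ ⟨h, rfl⟩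
    classical
    refine Equiv.ext fun x => Fam.ext fun k => ?_
    change shiftFun i g y (shiftFun i h z x) k = shiftFun i h z (shiftFun i g y x) k
    by_cases hk : k = i
    · subst hk
      simp only [shiftFun_self, (agreeAbove_shiftFun k h z.1 x).congr_left,
        (agreeAbove_shiftFun k g y.1 x).congr_left]
      split_ifs with h1 h2 h2
      · exact absurd (h1.symm.trans h2) (hne y z hyz)
      all_goals simp
    · simp only [shiftFun_of_ne hk]
  · rw [eq_bot_iff]
    rintro w ⟨hw, ⟨g, rfl⟩⟩
    have hle : (⨆ z : {z // z ≠ y}, (shift i z.1.1).range) ≤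
        MulAction.stabilizer (Equiv.Perm (Fam G)) y.1 := by
      refine iSup_le fun z => ?_
      rintro _ ⟨g, rfl⟩
      change shiftFun i g z.1.1 y.1 = y.1
      rw [shiftFun, if_neg (hne y z z.2.symm)]
    have : g = 1 := hself y g (hle hw)
    rw [this, map_one]
    rfl

theorem level_le_triangular (i : I) : level G i ≤ triangular G :=
  le_trans (by rw [wreath_eq]; exact le_iSup (level G) i) wreath_le

theorem isFolner_wreath [WellFoundedLT I] (h : ∀ i, IsAmenable (G i)) : IsFolner (wreath G) := by
  rw [wreath_eq]
  refine IsFolner.iSup_wellOrder (fun i => isFolner_level (h i)) (fun i => ?_) fun i => ?_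
  · rw [Subgroup.iSup_eq_closure, Subgroup.le_normalizer_closure_iff]
    intro w hw v hv
    obtain ⟨j, hj⟩ := Set.mem_iUnion.1 hv
    refine Subgroup.subset_closure (Set.mem_iUnion.2 ⟨j, ?_⟩)
    have : level G j.1 ≤ (level G j.1).comap (MulAut.conj w).toMonoidHom := by
      conv_lhs => rw [level]
      refine iSup_le fun y => ?_
      rintro _ ⟨g, rfl⟩
      change w * shift j.1 y.1 g * w⁻¹ ∈ level G j.1
      rw [conj_shift j.2 (level_le_triangular i hw) (level_le_fixCoord (by simp) hw)]
      exact shift_mem_level _ _ _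
    exact this hj
  · rw [eq_bot_iff, ← fixCoord_inf_eq_bot (J := Set.Ici i) (K := {i}ᶜ) (G := G)]
    · refine inf_le_inf (iSup_le fun j => level_le_fixCoord ?_) (level_le_fixCoord (by simp))
      exact fun h => not_lt_of_ge h j.2
    · intro j
      rcases eq_or_ne j i with rfl | h
      · exact Or.inl (Set.mem_Ici.2 le_rfl)
      · exact Or.inr h

end IteratedWreath

/-- The finitely supported functions on `Γ` with values in `𝔽₂[X]`. -/
abbrev Lamp (Γ : Type) : Type := Γ →₀ Polynomial (ZMod 2)

instance {Γ : Type} [Group Γ] : DistribMulAction Γ (Lamp Γ) := Finsupp.comapDistribMulAction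

namespace Lamp

variable {Γ : Type} [Group Γ]

theorem smul_apply (g : Γ) (a : Lamp Γ) (x : Γ) : (g • a) x = a (g⁻¹ * x) :=
  Finsupp.comapSMul_apply g a x

theorem smul_mul (g : Γ) (a b : Lamp Γ) : g • (a * b) = g • a * g • b := by
  ext1 x
  simp

theorem smul_single (g x : Γ) (p : Polynomial (ZMod 2)) :
    g • (Finsupp.single x p : Lamp Γ) = Finsupp.single (g * x) p :=
  Finsupp.comapSMul_single g x p

theorem infinite_smul {D : Set Γ} (hD : D.Infinite) {a : Lamp Γ} (ha : a ≠ 0) :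
    ((fun g => g • a) '' D).Infinite := by
  classical
  intro hfin
  obtain ⟨x, hx⟩ := Finsupp.ne_iff.1 ha
  have h1 : (⋃ b ∈ (fun g => g • a) '' D, (b.support : Set Γ)).Finite :=
    hfin.biUnion fun b _ => b.support.finite_toSet
  refine hD (Set.Finite.of_finite_image (f := fun g => g * x) (h1.subset ?_)
    (mul_left_injective x).injOn)
  rintro _ ⟨g, hg, rfl⟩
  refine Set.mem_biUnion (Set.mem_image_of_mem _ hg) ?_
  simpa [smul_apply] using hx

end Lamp

/-- The semidirect product of the Heisenberg group over `Lamp Γ` by `Γ`. -/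
@[ext]
structure HeisExt (Γ : Type) where
  /-- The first coordinate of the Heisenberg group. -/
  a : Lamp Γ
  /-- The second coordinate of the Heisenberg group. -/
  b : Lamp Γ
  /-- The central coordinate of the Heisenberg group. -/
  c : Lamp Γ
  /-- The coordinate in `Γ`. -/
  g : Γ

namespace HeisExt

open Finsupp Polynomial

variable {Γ : Type} [Group Γ]

instance : Mul (HeisExt Γ) :=
  ⟨fun q r => ⟨q.a + q.g • r.a, q.b + q.g • r.b, q.c + q.g • r.c + q.a * q.g • r.b, q.g * r.g⟩⟩

instance : One (HeisExt Γ) := ⟨⟨0, 0, 0, 1⟩⟩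

instance : Inv (HeisExt Γ) :=
  ⟨fun q => ⟨q.g⁻¹ • -q.a, q.g⁻¹ • -q.b, q.g⁻¹ • (-q.c + q.a * q.b), q.g⁻¹⟩⟩

@[simp] theorem mul_a (q r : HeisExt Γ) : (q * r).a = q.a + q.g • r.a := rfl
@[simp] theorem mul_b (q r : HeisExt Γ) : (q * r).b = q.b + q.g • r.b := rfl
@[simp] theorem mul_c (q r : HeisExt Γ) : (q * r).c = q.c + q.g • r.c + q.a * q.g • r.b := rfl
@[simp] theorem mul_g (q r : HeisExt Γ) : (q * r).g = q.g * r.g := rfl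
@[simp] theorem one_a : (1 : HeisExt Γ).a = 0 := rfl
@[simp] theorem one_b : (1 : HeisExt Γ).b = 0 := rfl
@[simp] theorem one_c : (1 : HeisExt Γ).c = 0 := rfl
@[simp] theorem one_g : (1 : HeisExt Γ).g = 1 := rfl
@[simp] theorem inv_a (q : HeisExt Γ) : q⁻¹.a = q.g⁻¹ • -q.a := rfl
@[simp] theorem inv_b (q : HeisExt Γ) : q⁻¹.b = q.g⁻¹ • -q.b := rfl
@[simp] theorem inv_c (q : HeisExt Γ) : q⁻¹.c = q.g⁻¹ • (-q.c + q.a * q.b) := rfl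
@[simp] theorem inv_g (q : HeisExt Γ) : q⁻¹.g = q.g⁻¹ := rfl

instance : Group (HeisExt Γ) :=
  Group.ofLeftAxioms
    (fun q r s => by
      ext1
      · simp [add_assoc, mul_smul]
      · simp [add_assoc, mul_smul]
      · simp only [mul_c, mul_a, mul_b, mul_g, smul_add, mul_smul, Lamp.smul_mul, add_mul, mul_add]
        abel
      · simp [mul_assoc])
    (fun q => by ext1 <;> simp)
    (fun q => by
      ext1
      · simp
      · simp
      · simp only [mul_c, inv_c, inv_a, inv_g, one_c, ← Lamp.smul_mul, ← smul_add]
        rw [smul_eq_zero_iff_eq]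
        ext1 x
        simp
      · simp)

/-- The projection onto `Γ`. -/
def proj : HeisExt Γ →* Γ where
  toFun q := q.g
  map_one' := rfl
  map_mul' _ _ := rfl

@[simp] theorem proj_apply (q : HeisExt Γ) : proj q = q.g := rfl

/-- The inclusion of `Γ`. -/
def lift : Γ →* HeisExt Γ where
  toFun g := ⟨0, 0, 0, g⟩
  map_one' := rfl
  map_mul' g h := by ext1 <;> simp

theorem proj_surjective : Function.Surjective (proj (Γ := Γ)) := fun g => ⟨lift g, rfl⟩

instance [Countable Γ] : Countable (HeisExt Γ) := by
  have : Countable (ZMod 2)[X] := by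
    rw [← Cardinal.mk_le_aleph0_iff]
    exact Polynomial.cardinalMk_le_max.trans (max_le Cardinal.mk_le_aleph0 le_rfl)
  have : Function.Injective fun q : HeisExt Γ => (q.a, q.b, q.c, q.g) := by
    intro q r h
    simpa [HeisExt.ext_iff] using h
  exact this.countable

/-- The abelian subgroup of the elements `(a, b, c)` of the Heisenberg group with `a` supported off
`N` and `b` supported on `N`. -/
def cartan (N : Subgroup Γ) : Subgroup (HeisExt Γ) where
  carrier := {q | q.g = 1 ∧ (∀ x ∈ N, q.a x = 0) ∧ ∀ x ∉ N, q.b x = 0}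
  one_mem' := ⟨rfl, fun _ _ => rfl, fun _ _ => rfl⟩
  mul_mem' := fun {q r} hq hr => ⟨by simp [hq.1, hr.1],
    fun x hx => by simp [hq.1, hq.2.1 x hx, hr.2.1 x hx],
    fun x hx => by simp [hq.1, hq.2.2 x hx, hr.2.2 x hx]⟩
  inv_mem' := fun {q} hq => ⟨by simp [hq.1], fun x hx => by simp [hq.1, hq.2.1 x hx],
    fun x hx => by simp [hq.1, hq.2.2 x hx]⟩

variable {N : Subgroup Γ}

theorem cartan_comm {q r : HeisExt Γ} (hq : q ∈ cartan N) (hr : r ∈ cartan N) :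
    q * r = r * q := by
  have key : ∀ q ∈ cartan N, ∀ r ∈ cartan N, q.a * r.b = 0 := by
    intro q hq r hr
    ext1 x
    by_cases hx : x ∈ N
    · simp [hq.2.1 x hx]
    · simp [hr.2.2 x hx]
  ext1
  · simp [hq.1, hr.1, add_comm]
  · simp [hq.1, hr.1, add_comm]
  · simp [hq.1, hr.1, key q hq r hr, key r hr q hq, add_comm]
  · simp [hq.1, hr.1]

theorem cartan_le : cartan N ≤ N.comap proj := fun q hq => by
  have : q.g = 1 := hq.1
  simp [this, one_mem]

/-- A central element of the Heisenberg group. -/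
def central (c : Lamp Γ) : HeisExt Γ := ⟨0, 0, c, 1⟩

theorem central_mem_cartan (c : Lamp Γ) : central c ∈ cartan N :=
  ⟨rfl, fun _ _ => rfl, fun _ _ => rfl⟩

theorem infinite_of_injective {P : HeisExt Γ → Prop} (q : HeisExt Γ) (x : Γ)
    (h : (ZMod 2)[X] → HeisExt Γ) (hP : ∀ p, P (h p))
    (hinj : Function.Injective fun p => (h p * q * (h p)⁻¹).c x) :
    {y | ∃ h, P h ∧ y = h * q * h⁻¹}.Infinite := by
  have h1 : Function.Injective fun p => h p * q * (h p)⁻¹ :=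
    Function.Injective.of_comp (f := fun q : HeisExt Γ => q.c x) hinj
  exact (Set.infinite_range_of_injective h1).mono (by rintro _ ⟨p, rfl⟩; exact ⟨h p, hP p, rfl⟩)

theorem infinite_conj_of_ne {q : HeisExt Γ} (hq : q.g ≠ 1) :
    {y | ∃ h ∈ cartan N, y = h * q * h⁻¹}.Infinite := by
  refine infinite_of_injective q 1 (fun p => central (single 1 p))
    (fun p => central_mem_cartan _) fun p p' h => ?_
  have hq' : q.g⁻¹ * 1 ≠ 1 := by simpa using hq
  simpa [central, Lamp.smul_single, Finsupp.single_apply, hq] using h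

theorem infinite_conj_cartan {q : HeisExt Γ} (hq : q ∉ cartan N) :
    {y | ∃ h ∈ cartan N, y = h * q * h⁻¹}.Infinite := by
  by_cases hg : q.g = 1
  swap
  · exact infinite_conj_of_ne hg
  have : (∃ x ∈ N, q.a x ≠ 0) ∨ ∃ x ∉ N, q.b x ≠ 0 := by
    by_contra! h
    exact hq ⟨hg, h.1, h.2⟩
  rcases this with ⟨x, hx, hne⟩ | ⟨x, hx, hne⟩
  · refine infinite_of_injective q x (fun p => ⟨0, single x p, 0, 1⟩) (fun p => ?_)
      fun p p' h => ?_
    · refine ⟨rfl, fun _ _ => rfl, fun y hy => ?_⟩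
      exact Finsupp.single_eq_of_ne (ne_of_mem_of_not_mem hx hy).symm
    · simpa [hg, hne] using h
  · refine infinite_of_injective q x (fun p => ⟨single x p, 0, 0, 1⟩) (fun p => ?_)
      fun p p' h => ?_
    · refine ⟨rfl, fun y hy => ?_, fun _ _ => rfl⟩
      exact Finsupp.single_eq_of_ne (ne_of_mem_of_not_mem hy hx)
    · simpa [hg, hne] using h

theorem comap_le_normalizer_cartan :
    N.comap proj ≤ Subgroup.normalizer (cartan N : Set (HeisExt Γ)) := by
  rw [Subgroup.le_normalizer_iff]
  intro k hk q hq
  have hk : k.g ∈ N := hk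
  obtain ⟨h1, h2, h3⟩ := hq
  have hiff : ∀ x, k.g⁻¹ * x ∈ N ↔ x ∈ N := fun x => N.mul_mem_cancel_left (inv_mem hk)
  refine ⟨by simp [h1], fun x hx => ?_, fun x hx => ?_⟩
  · simp [h1, h2 _ ((hiff x).2 hx)]
  · simp [h1, h3 _ fun h => hx ((hiff x).1 h)]

theorem exists_seq {k : HeisExt Γ} (hk : k ∉ N.comap proj) : ∃ h : ℕ → HeisExt Γ,
    (∀ i, h i ∈ cartan N) ∧ ∀ i j, i ≠ j → k * h i * (h j)⁻¹ * k⁻¹ ∉ cartan N := by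
  have hk : k.g ∉ N := hk
  refine ⟨fun i => ⟨0, single 1 (X ^ i), 0, 1⟩, fun i => ⟨rfl, fun _ _ => rfl, fun y hy => ?_⟩,
    fun i j hij hmem => ?_⟩
  · exact Finsupp.single_eq_of_ne (ne_of_mem_of_not_mem (one_mem N) hy).symm
  · have := hmem.2.2 k.g hk
    simp [add_neg_eq_zero] at this
    have h2 : (X ^ i : (ZMod 2)[X]) = X ^ j := by linear_combination this
    have h3 := congrArg natDegree h2
    rw [natDegree_X_pow, natDegree_X_pow] at h3
    exact hij h3

theorem cartan_ne : cartan N ≠ N.comap proj := fun h => by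
  have h1 : (⟨single 1 1, 0, 0, 1⟩ : HeisExt Γ) ∈ N.comap proj := N.one_mem
  rw [← h] at h1
  have := h1.2.1 1 N.one_mem
  simp at this

theorem infinite_conj (hN : (N : Set Γ).Infinite) {q : HeisExt Γ} (hq : q ≠ 1) :
    {y | ∃ h ∈ N.comap proj, y = h * q * h⁻¹}.Infinite := by
  by_cases hg : q.g = 1
  swap
  · exact (infinite_conj_of_ne (N := N) hg).mono fun y hy => by
      obtain ⟨h, hh, e⟩ := hy
      exact ⟨h, cartan_le hh, e⟩
  have key : ∀ φ : HeisExt Γ → Lamp Γ, (∀ g, φ (lift g * q * (lift g)⁻¹) = g • φ q) → φ q ≠ 0 →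
      {y | ∃ h ∈ N.comap proj, y = h * q * h⁻¹}.Infinite := by
    intro φ hφ h0
    refine Set.Infinite.of_image φ ((Lamp.infinite_smul hN h0).mono ?_)
    rintro _ ⟨g, hg, rfl⟩
    exact ⟨_, ⟨lift g, hg, rfl⟩, hφ g⟩
  by_cases ha : q.a = 0
  · by_cases hb : q.b = 0
    · refine key c (fun g => ?_) fun hc => hq (HeisExt.ext ha hb hc hg)
      simp [lift, hg]
    · refine key b (fun g => ?_) hb
      simp [lift, hg]
  · refine key a (fun g => ?_) ha
    simp [lift, hg]

end HeisExt

theorem exists_index {α : Ordinal} (hα : α.card ≤ Cardinal.aleph0) :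
    ∃ (I : Type) (_ : LinearOrder I) (_ : WellFoundedLT I) (_ : Countable I) (f : I → Ordinal),
      StrictMono f ∧ Set.range f = Set.Ico 1 α := by
  have h1 : Countable (Set.Iio α) := by
    rw [← Cardinal.mk_le_aleph0_iff, Cardinal.mk_Iio_ordinal]
    exact Cardinal.lift_le_aleph0.2 hα
  have h2 : Countable (Set.Ico 1 α) := Set.Countable.mono (fun x hx => hx.2) h1
  have h3 : Small.{0} (Set.Ico 1 α) := Countable.toSmall _
  let e := (equivShrink (Set.Ico 1 α)).symm
  let L : LinearOrder (Shrink.{0} (Set.Ico 1 α)) := LinearOrder.lift' e e.injective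
  have hmono : StrictMono fun i => (e i : Ordinal) := fun i j h => h
  refine ⟨Shrink.{0} (Set.Ico 1 α), L, hmono.wellFoundedLT, e.injective.countable, _, hmono, ?_⟩
  rw [show (fun i => (e i : Ordinal)) = Subtype.val ∘ e from rfl, e.surjective.range_comp,
    Subtype.range_val]

theorem Subgroup.countable_closure {G : Type*} [Group G] {s : Set G} (hs : s.Countable) :
    Countable (Subgroup.closure s) := by
  have := hs.to_subtype
  have h : (FreeGroup.lift ((↑) : s → G)).range = Subgroup.closure s := by
    rw [FreeGroup.range_lift_eq_closure, Subtype.range_coe]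
  rw [← h]
  exact (FreeGroup.lift ((↑) : s → G)).rangeRestrict_surjective.countable

namespace IteratedWreath

variable {I : Type} [LinearOrder I] {G : I → Type} [∀ i, Group (G i)]

instance [Countable I] [∀ i, Countable (G i)] : Countable (wreath G) :=
  Subgroup.countable_closure (Set.countable_range _)

/-- The indices whose image under a monotone map is at least `β`. -/
def upper {f : I → Ordinal} (hf : Monotone f) (β : Ordinal) : UpperSet I :=
  ⟨{i | β ≤ f i}, fun _ _ h hi => le_trans hi (hf h)⟩

theorem stab_upper_mono {f : I → Ordinal} (hf : Monotone f) {β γ : Ordinal} (h : β ≤ γ) :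
    stab G (upper hf β) ≤ stab G (upper hf γ) := fun _ hw i hi => hw i (h.trans hi)

theorem upper_apply {f : I → Ordinal} (hf : StrictMono f) (i : I) :
    upper hf.monotone (f i) = UpperSet.Ici i := by
  ext j
  exact hf.le_iff_le

theorem upper_apply_add_one {f : I → Ordinal} (hf : StrictMono f) (i : I) :
    upper hf.monotone (f i + 1) = UpperSet.Ioi i := by
  ext j
  exact (Order.add_one_le_iff).trans hf.lt_iff_lt

theorem exists_lt_mem_stab {f : I → Ordinal} (hf : Monotone f) {β : Ordinal}
    (hβ : Order.IsSuccLimit β) {w : wreath G} (hw : w ∈ stab G (upper hf β)) :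
    ∃ γ < β, w ∈ stab G (upper hf γ) := by
  have hfin := finite_support w
  refine ⟨hfin.toFinset.sup fun i => f i + 1, ?_, fun i hi => ?_⟩
  · rw [Finset.sup_lt_iff hβ.bot_lt]
    intro i hi
    refine hβ.add_one_lt ?_
    by_contra h
    exact (hfin.mem_toFinset.1 hi) (hw i (not_lt.1 h))
  · by_contra h
    have h1 := Finset.le_sup (f := fun i => f i + 1) (hfin.mem_toFinset.2 h)
    exact absurd (lt_of_lt_of_le (Order.lt_add_one_iff.2 le_rfl) (h1.trans hi)) (lt_irrefl _)

end IteratedWreath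

/-- The tower of subgroups of `HeisExt Γ` obtained from a tower of subgroups of `Γ`. -/
def HeisExt.subgroupTower {α : Ordinal} {G : Ordinal → Type} [∀ β, Group (G β)] {Γ : Type} [Group Γ]
    (N : Ordinal → Subgroup Γ) (hinf : (N 1 : Set Γ).Infinite) (hmono : Monotone N)
    (hnorm : ∀ β, 1 ≤ β → β < α → Subgroup.normalizer (N β : Set Γ) = N (β + 1))
    (hhom : ∀ β, 1 ≤ β → β < α → ∃ ψ : N (β + 1) →* G β,
      Function.Surjective ψ ∧ ∀ k, ψ k = 1 ↔ (k : Γ) ∈ N β)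
    (hlim : ∀ β, Order.IsSuccLimit β → β ≤ α → ∀ g ∈ N β, ∃ γ < β, g ∈ N γ)
    (htop : N α = ⊤) (hα : 1 < α) : SubgroupTower α G (HeisExt Γ) where
  group β := if β = 0 then cartan (N 1) else (N β).comap proj
  comm g hg h hh := by
    rw [if_pos rfl] at hg hh
    exact cartan_comm hg hh
  infinite_conj_zero g hg := by
    simp only [if_true] at hg ⊢
    exact infinite_conj_cartan hg
  one_le_normalizer := by
    rw [if_neg one_ne_zero, if_pos rfl]
    exact comap_le_normalizer_cartan
  exists_seq k hk := by
    rw [if_neg one_ne_zero] at hk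
    simp only [if_true]
    exact exists_seq hk
  zero_ne_one := by
    rw [if_neg one_ne_zero, if_pos rfl]
    exact cartan_ne
  infinite_conj g hg := by
    simp only [if_neg (one_ne_zero (α := Ordinal))]
    exact infinite_conj hinf hg
  one_le β hβ := by
    rw [if_neg one_ne_zero, if_neg (zero_lt_one.trans_le hβ).ne']
    exact Subgroup.comap_mono (hmono hβ)
  normalizer_eq β hβ hβα := by
    rw [if_neg (zero_lt_one.trans_le hβ).ne', if_neg (by simp), ← hnorm β hβ hβα,
      Subgroup.comap_normalizer_eq_of_surjective _ proj_surjective]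
  exists_hom β hβ hβα := by
    obtain ⟨ψ, h1, h2⟩ := hhom β hβ hβα
    rw [if_neg (zero_lt_one.trans_le hβ).ne', if_neg (by simp)]
    refine ⟨ψ.comp (proj.subgroupComap (N (β + 1))), h1.comp ?_, fun k => h2 _⟩
    exact fun g => ⟨⟨lift g, g.2⟩, rfl⟩
  limit β hβ hβα g := by
    have h0 : β ≠ 0 := hβ.bot_lt.ne'
    rw [if_neg h0]
    constructor
    · intro hg
      obtain ⟨γ, hγ, h⟩ := hlim β hβ hβα _ hg
      have h1 : 1 < β := by
        have := hβ.add_one_lt hβ.bot_lt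
        simpa using this
      refine ⟨max γ 1, max_lt hγ h1, ?_⟩
      rw [if_neg (zero_lt_one.trans_le (le_max_right γ 1)).ne']
      exact hmono (le_max_left γ 1) h
    · rintro ⟨γ, hγ, h⟩
      split_ifs at h with h'
      · have h1 : 1 ≤ β := Order.one_le_iff_pos.2 hβ.bot_lt
        exact hmono h1 (cartan_le h)
      · exact hmono hγ.le h
  top := by
    rw [if_neg (zero_lt_one.trans hα).ne', htop, Subgroup.comap_top]

open IteratedWreath in
theorem exists_subgroupTower (α : Ordinal) (hα : 1 < α) (hαcount : α.card ≤ Cardinal.aleph0)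
    (G : Ordinal → Type) [∀ β, Group (G β)]
    (hGcount : ∀ β, 1 ≤ β → β < α → Countable (G β))
    (hGnontriv : ∀ β, 1 ≤ β → β < α → Nontrivial (G β))
    (hGamen : ∀ β, 1 ≤ β → β < α → IsAmenable (G β)) :
    ∃ (Γ : Type) (_ : Group Γ) (_ : Countable Γ), IsFolner (⊤ : Subgroup Γ) ∧
      Nonempty (SubgroupTower α G (HeisExt Γ)) := by
  obtain ⟨I, _, _, _, f, hf, hrange⟩ := exists_index hαcount
  have hmem : ∀ i, 1 ≤ f i ∧ f i < α := fun i => by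
    have : f i ∈ Set.Ico 1 α := by
      rw [← hrange]
      exact Set.mem_range_self i
    exact this
  have hsurj : ∀ β, 1 ≤ β → β < α → ∃ i, f i = β := fun β h1 h2 => by
    have : β ∈ Set.range f := hrange ▸ ⟨h1, h2⟩
    exact this
  have : ∀ i, Countable (G (f i)) := fun i => hGcount _ (hmem i).1 (hmem i).2
  have : ∀ i, Nontrivial (G (f i)) := fun i => hGnontriv _ (hmem i).1 (hmem i).2
  set W := wreath fun i => G (f i)
  refine ⟨W × Multiplicative ℤ, inferInstance, inferInstance, ?_, ?_⟩
  · have h1 : IsFolner (⊤ : Subgroup W) := by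
      have := (isFolner_wreath (G := fun i => G (f i)) fun i =>
        hGamen _ (hmem i).1 (hmem i).2).comap (φ := W.subtype) Subtype.val_injective (by simp [W])
      rwa [Subgroup.comap_subtype, Subgroup.subgroupOf_self] at this
    have h2 := h1.map (φ := MonoidHom.inl W (Multiplicative ℤ)) (fun x y h => by simpa using h)
    have h3 := IsFolner.int.map (φ := MonoidHom.inr W (Multiplicative ℤ))
      (fun x y h => by simpa using h)
    have h4 := h2.sup h3 (by
      rw [Subgroup.le_normalizer_iff]
      rintro _ ⟨a, -, rfl⟩ _ ⟨b, -, rfl⟩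
      exact ⟨b, trivial, by ext <;> simp⟩) (by
      rw [eq_bot_iff]
      rintro _ ⟨⟨a, -, rfl⟩, ⟨b, -, e⟩⟩
      have := congrArg Prod.fst e
      simp only [MonoidHom.inr_apply, MonoidHom.inl_apply] at this
      simp [← this])
    convert h4
    rw [eq_comm, eq_top_iff]
    rintro ⟨a, b⟩ -
    have : ((a, b) : W × Multiplicative ℤ) = (a, 1) * (1, b) := by simp
    rw [this]
    exact mul_mem (Subgroup.mem_sup_left ⟨a, trivial, rfl⟩) (Subgroup.mem_sup_right ⟨b, trivial, rfl⟩)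
  · refine ⟨HeisExt.subgroupTower
      (fun β => (stab (fun i => G (f i)) (upper hf.monotone β)).comap (MonoidHom.fst _ _))
      ?_ ?_ ?_ ?_ ?_ ?_ hα⟩
    · refine (Set.infinite_range_of_injective
        (f := fun n : Multiplicative ℤ => ((1, n) : W × Multiplicative ℤ))
        (fun x y h => by simpa using h)).mono ?_
      rintro _ ⟨n, rfl⟩
      exact one_mem (stab (fun i => G (f i)) (upper hf.monotone 1))
    · exact fun β γ h => Subgroup.comap_mono (stab_upper_mono hf.monotone h)
    · intro β h1 h2
      obtain ⟨i, rfl⟩ := hsurj β h1 h2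
      rw [upper_apply hf, upper_apply_add_one hf, ← normalizer_stab,
        Subgroup.comap_normalizer_eq_of_surjective _ Prod.fst_surjective]
    · intro β h1 h2
      obtain ⟨i, rfl⟩ := hsurj β h1 h2
      rw [upper_apply hf, upper_apply_add_one hf]
      set p := (MonoidHom.fst W (Multiplicative ℤ)).subgroupComap
        (stab (fun i => G (f i)) (UpperSet.Ioi i))
      refine ⟨(stabHom (G := fun i => G (f i)) i).comp p, ?_, fun k => ?_⟩
      · exact (stabHom_surjective (G := fun i => G (f i)) i).comp fun w => ⟨⟨(w, 1), w.2⟩, rfl⟩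
      · exact stabHom_eq_one_iff (G := fun i => G (f i)) (p k)
    · intro β hβ _ g hg
      exact exists_lt_mem_stab hf.monotone hβ hg
    · rw [eq_top_iff]
      intro g _ i hi
      exact absurd (hmem i).2 (not_lt.2 hi)

namespace HeisExt

open Ell2 GroupVN

variable {Γ : Type} [Group Γ]

theorem central_zero : central (0 : Lamp Γ) = 1 := rfl

theorem central_add (c d : Lamp Γ) : central (c + d) = central c * central d := by
  ext1 <;> simp [central]

theorem mul_central (q : HeisExt Γ) (c : Lamp Γ) :
    q * central c = central (q.g • c) * q := by
  ext1 <;> simp [central, add_comm]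

theorem central_injective : Function.Injective (central (Γ := Γ)) := fun c d h => by
  simpa [central] using h

theorem Lamp.neg_eq (c : Lamp Γ) : -c = c := by
  ext1 x
  rw [Finsupp.neg_apply, CharTwo.neg_eq]

theorem central_inv (c : Lamp Γ) : (central c)⁻¹ = central c := by
  rw [inv_eq_iff_mul_eq_one, ← central_add, ← central_zero]
  nth_rw 1 [← Lamp.neg_eq c]
  rw [neg_add_cancel]

variable (Γ) in
/-- The dual group of `Lamp Γ`. -/
abbrev Dual : Type := Lamp Γ →+ ZMod 2

/-- The nontrivial character of `ZMod 2`. -/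
def sgn (t : ZMod 2) : ℂ := if t = 0 then 1 else -1

theorem sgn_zero : sgn 0 = 1 := if_pos rfl

theorem sgn_add (s t : ZMod 2) : sgn (s + t) = sgn s * sgn t := by
  have h : ∀ s t : ZMod 2, (s + t = 0 ↔ (s = 0 ↔ t = 0)) := by decide
  simp only [sgn, h]
  by_cases hs : s = 0 <;> by_cases ht : t = 0 <;> simp [hs, ht]

theorem sgn_injective : Function.Injective sgn := by
  have h : ∀ s t : ZMod 2, ((s = 0 ↔ t = 0) → s = t) := by decide
  intro s t hst
  refine h s t ?_
  simp only [sgn] at hst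
  by_cases hs : s = 0 <;> by_cases ht : t = 0 <;> simp_all <;> norm_num at hst

theorem conj_sgn (t : ZMod 2) : starRingEnd ℂ (sgn t) = sgn t := by
  rw [sgn]
  split_ifs <;> simp

/-- Evaluation of an element of the group algebra of `Lamp Γ` at the characters. -/
def ev : AddMonoidAlgebra ℂ (Lamp Γ) →ₐ[ℂ] (Dual Γ → ℂ) :=
  AddMonoidAlgebra.lift ℂ _ _
    { toFun := fun c x => sgn (x c.toAdd)
      map_one' := by
        ext x
        simp [sgn_zero]
      map_mul' := fun c d => by
        ext x
        simp [sgn_add] }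

theorem ev_single (c : Lamp Γ) (z : ℂ) (x : Dual Γ) :
    ev (AddMonoidAlgebra.single c z) x = z * sgn (x c) := by
  rw [ev, AddMonoidAlgebra.lift_single]
  rfl

/-- The representation of the group algebra of `Lamp Γ` on `ℓ²`, as the centre of the Heisenberg
group. -/
def rep : AddMonoidAlgebra ℂ (Lamp Γ) →ₐ[ℂ] (Ell2 (HeisExt Γ) →L[ℂ] Ell2 (HeisExt Γ)) :=
  AddMonoidAlgebra.lift ℂ _ _
    { toFun := fun c => left (central c.toAdd)
      map_one' := left_one
      map_mul' := fun c d => by rw [toAdd_mul, central_add, left_mul] }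

theorem rep_single (c : Lamp Γ) (z : ℂ) :
    rep (AddMonoidAlgebra.single c z) = z • left (central c) := by
  rw [rep, AddMonoidAlgebra.lift_single]
  rfl

theorem rep_eq_sum (a : AddMonoidAlgebra ℂ (Lamp Γ)) :
    rep a = ∑ c ∈ a.coeff.support, a.coeff c • left (central c) := by
  rw [rep, AddMonoidAlgebra.lift_apply]
  rfl

theorem exists_dual_ne {c d : Lamp Γ} (h : c ≠ d) : ∃ x : Dual Γ, x c ≠ x d := by
  obtain ⟨u, hu⟩ := Finsupp.ne_iff.1 h
  obtain ⟨i, hi⟩ : ∃ i, (c u).coeff i ≠ (d u).coeff i := by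
    by_contra! h
    exact hu (Polynomial.ext h)
  exact ⟨(Polynomial.lcoeff (ZMod 2) i).toAddMonoidHom.comp (Finsupp.applyAddHom u), hi⟩

theorem ev_injective : Function.Injective (ev (Γ := Γ)) := by
  let χ : Lamp Γ → (Multiplicative (Dual Γ) →* ℂ) := fun c =>
    { toFun := fun x => sgn (x.toAdd c)
      map_one' := sgn_zero
      map_mul' := fun x y => sgn_add _ _ }
  have hχ : Function.Injective χ := fun c d h => by
    by_contra hne
    obtain ⟨x, hx⟩ := exists_dual_ne hne
    exact hx (sgn_injective (DFunLike.congr_fun h (Multiplicative.ofAdd x)))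
  have key := (linearIndependent_monoidHom (Multiplicative (Dual Γ)) ℂ).comp χ hχ
  rw [injective_iff_map_eq_zero]
  intro a ha
  have h0 := linearIndependent_iff.1 key a.coeff ?_
  · ext c
    simp [h0]
  · refine Eq.trans ?_ ha
    rw [ev, AddMonoidAlgebra.lift_apply, Finsupp.linearCombination_apply]
    rfl

/-- A function on the dual depends only on finitely many coordinates. -/
def Cyl {β : Type*} (f : Dual Γ → β) : Prop :=
  ∃ S : Finset (Lamp Γ), ∀ x y : Dual Γ, (∀ c ∈ S, x c = y c) → f x = f y

namespace Cyl

variable {β δ : Type*} {f : Dual Γ → β}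

theorem const (b : β) : Cyl fun _ : Dual Γ => b := ⟨∅, fun _ _ _ => rfl⟩

theorem eval (c : Lamp Γ) : Cyl fun x : Dual Γ => x c :=
  ⟨{c}, fun _ _ h => h c (Finset.mem_singleton_self c)⟩

theorem comp (hf : Cyl f) (φ : β → δ) : Cyl fun x => φ (f x) := by
  obtain ⟨S, hS⟩ := hf
  exact ⟨S, fun x y h => congrArg φ (hS x y h)⟩

theorem pi {ι : Type*} [Finite ι] {β : ι → Type*} {f : ∀ i, Dual Γ → β i} (hf : ∀ i, Cyl (f i)) :
    Cyl fun x i => f i x := by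
  classical
  have := Fintype.ofFinite ι
  choose S hS using hf
  refine ⟨Finset.univ.biUnion S, fun x y h => funext fun i => hS i x y fun c hc => ?_⟩
  exact h c (Finset.mem_biUnion.2 ⟨i, Finset.mem_univ i, hc⟩)

theorem comp₂ {ε : Type*} {g : Dual Γ → δ} (hf : Cyl f) (hg : Cyl g) (φ : β → δ → ε) :
    Cyl fun x => φ (f x) (g x) := by
  classical
  obtain ⟨S, hS⟩ := hf
  obtain ⟨T, hT⟩ := hg
  refine ⟨S ∪ T, fun x y h => ?_⟩
  change φ (f x) (g x) = φ (f y) (g y)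
  rw [hS x y fun c hc => h c (Finset.mem_union_left _ hc),
    hT x y fun c hc => h c (Finset.mem_union_right _ hc)]

theorem forall_finset {ι : Type*} {p : ι → Dual Γ → Prop} (D : Finset ι) (hp : ∀ i, Cyl (p i)) :
    Cyl fun x => ∀ i ∈ D, p i x := by
  have := (pi (ι := D) fun i => hp i).comp fun q => ∀ i, q i
  simpa using this

theorem exists_finset {ι : Type*} {p : ι → Dual Γ → Prop} (D : Finset ι) (hp : ∀ i, Cyl (p i)) :
    Cyl fun x => ∃ i ∈ D, p i x := by
  have := (pi (ι := D) fun i => hp i).comp fun q => ∃ i, q i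
  simpa using this

/-- Composition with an affine map of the dual. -/
theorem comp_affine (hf : Cyl f) (φ : Lamp Γ →+ Lamp Γ) (x₀ : Dual Γ) :
    Cyl fun x : Dual Γ => f (x.comp φ + x₀) := by
  classical
  obtain ⟨S, hS⟩ := hf
  refine ⟨S.image φ, fun x y h => hS _ _ fun c hc => ?_⟩
  have := h (φ c) (Finset.mem_image_of_mem _ hc)
  simp [this]

theorem finite_range (hf : Cyl f) : (Set.range f).Finite := by
  classical
  obtain ⟨S, hS⟩ := hf
  have hfin : (Set.range fun x : Dual Γ => fun c : S => x c).Finite := Set.toFinite _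
  have key : ∀ p ∈ Set.range fun x : Dual Γ => fun c : S => x c, ∃ b, ∀ x : Dual Γ,
      (fun c : S => x c) = p → f x = b := by
    rintro _ ⟨y, rfl⟩
    exact ⟨f y, fun x hx => hS x y fun c hc => congrFun hx ⟨c, hc⟩⟩
  have : Nonempty β := ⟨f 0⟩
  choose! F hF using key
  refine (hfin.image F).subset ?_
  rintro _ ⟨x, rfl⟩
  exact ⟨_, ⟨x, rfl⟩, (hF _ ⟨x, rfl⟩ x rfl).symm⟩

theorem mem_range {f : Dual Γ → ℂ} (hf : Cyl f) : f ∈ ev.range := by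
  classical
  obtain ⟨S, hS⟩ := hf
  have hchar : ∀ c (t : ZMod 2), (fun x : Dual Γ => if x c = t then (1 : ℂ) else 0) ∈ ev.range := by
    intro c t
    refine ⟨AddMonoidAlgebra.single 0 (1 / 2) + AddMonoidAlgebra.single c (sgn t / 2), ?_⟩
    ext x
    have h : ∀ s t : ZMod 2, (s = t ↔ (s = 0 ↔ t = 0)) := by decide
    change ev _ x = _
    simp only [map_add, Pi.add_apply, ev_single, map_zero, h (x c) t, sgn]
    by_cases h1 : x c = 0 <;> by_cases h2 : t = 0 <;> simp [h1, h2] <;> norm_num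
  choose F hF using fun p : S → ZMod 2 =>
    show ∃ z : ℂ, ∀ x : Dual Γ, (∀ c : S, x c = p c) → f x = z by
      by_cases h : ∃ y : Dual Γ, ∀ c : S, y c = p c
      · obtain ⟨y, hy⟩ := h
        exact ⟨f y, fun x hx => hS x y fun c hc => (hx ⟨c, hc⟩).trans (hy ⟨c, hc⟩).symm⟩
      · exact ⟨0, fun x hx => (h ⟨x, hx⟩).elim⟩
  have hsum : f = ∑ p : S → ZMod 2, F p • ∏ c : S,
      fun x : Dual Γ => if x c = p c then (1 : ℂ) else 0 := by
    ext x
    rw [Finset.sum_apply, Finset.sum_eq_single fun c : S => x c]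
    · simp [hF (fun c : S => x c) x fun c => rfl]
    · intro p _ hp
      obtain ⟨c, hc⟩ := Function.ne_iff.1 hp
      rw [Pi.smul_apply, Finset.prod_apply,
        Finset.prod_eq_zero (Finset.mem_univ c) (if_neg (Ne.symm hc)), smul_zero]
    · simp
  rw [hsum]
  exact sum_mem fun p _ => Subalgebra.smul_mem _ (prod_mem fun (c : S) _ => hchar c (p c)) _

end Cyl

end HeisExt

namespace HeisExt

open Ell2 GroupVN

variable {Γ : Type} [Group Γ]

/-- The action of `Γ` on the dual of `Lamp Γ`. -/
def act (g : Γ) (x : Dual Γ) : Dual Γ := x.comp (DistribSMul.toAddMonoidHom (Lamp Γ) g⁻¹)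

theorem act_apply (g : Γ) (x : Dual Γ) (c : Lamp Γ) : act g x c = x (g⁻¹ • c) := rfl

theorem act_act (g h : Γ) (x : Dual Γ) : act g (act h x) = act (g * h) x := by
  refine DFunLike.ext _ _ fun c => ?_
  simp [act_apply, mul_smul]

theorem act_one (x : Dual Γ) : act 1 x = x := by
  refine DFunLike.ext _ _ fun c => ?_
  simp [act_apply]

theorem Cyl.act {β : Type*} {f : Dual Γ → β} (hf : Cyl f) (g : Γ) :
    Cyl fun x => f (HeisExt.act g x) := by
  have := hf.comp_affine (DistribSMul.toAddMonoidHom (Lamp Γ) g⁻¹) 0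
  simp only [add_zero] at this
  exact this

open Classical in
/-- The operator in the centre of the Heisenberg group algebra with a given Fourier transform. -/
def op (f : Dual Γ → ℂ) : Ell2 (HeisExt Γ) →L[ℂ] Ell2 (HeisExt Γ) :=
  if h : ∃ a, ev a = f then rep h.choose else 0

theorem op_ev (a : AddMonoidAlgebra ℂ (Lamp Γ)) : op (ev a) = rep a := by
  have h : ∃ b, ev b = ev a := ⟨a, rfl⟩
  rw [op, dif_pos h, ev_injective h.choose_spec]

theorem Cyl.exists_ev {f : Dual Γ → ℂ} (hf : Cyl f) : ∃ a, ev a = f := hf.mem_range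

theorem op_one : op (fun _ : Dual Γ => 1) = 1 := by
  rw [← map_one rep, ← op_ev, map_one]
  rfl

theorem op_zero : op (fun _ : Dual Γ => 0) = 0 := by
  rw [← map_zero rep, ← op_ev, map_zero]
  rfl

theorem op_mul {f g : Dual Γ → ℂ} (hf : Cyl f) (hg : Cyl g) :
    op (fun x => f x * g x) = op f * op g := by
  obtain ⟨a, rfl⟩ := hf.exists_ev
  obtain ⟨b, rfl⟩ := hg.exists_ev
  rw [op_ev, op_ev, ← map_mul, ← op_ev, map_mul]
  rfl

theorem op_add {f g : Dual Γ → ℂ} (hf : Cyl f) (hg : Cyl g) :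
    op (fun x => f x + g x) = op f + op g := by
  obtain ⟨a, rfl⟩ := hf.exists_ev
  obtain ⟨b, rfl⟩ := hg.exists_ev
  rw [op_ev, op_ev, ← map_add, ← op_ev, map_add]
  rfl

theorem Cyl.sum {ι : Type*} (D : Finset ι) {f : ι → Dual Γ → ℂ} (hf : ∀ i, Cyl (f i)) :
    Cyl fun x => ∑ i ∈ D, f i x := by
  classical
  induction D using Finset.induction_on with
  | empty => simpa using Cyl.const (0 : ℂ)
  | insert i D hi ih =>
    simp only [Finset.sum_insert hi]
    exact (hf i).comp₂ ih (· + ·)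

theorem op_sum {ι : Type*} (D : Finset ι) {f : ι → Dual Γ → ℂ} (hf : ∀ i, Cyl (f i)) :
    op (fun x => ∑ i ∈ D, f i x) = ∑ i ∈ D, op (f i) := by
  classical
  induction D using Finset.induction_on with
  | empty => simpa using op_zero
  | insert i D hi ih =>
    simp only [Finset.sum_insert hi]
    rw [op_add (hf i) (Cyl.sum D hf), ih]

theorem star_op {f : Dual Γ → ℂ} (hf : Cyl f) :
    star (op f) = op fun x => starRingEnd ℂ (f x) := by
  obtain ⟨a, rfl⟩ := hf.exists_ev
  obtain ⟨b, hb, hb'⟩ : ∃ b, (ev b = fun x => starRingEnd ℂ (ev a x)) ∧ rep b = star (rep a) := by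
    clear hf
    induction a using AddMonoidAlgebra.induction_linear with
    | zero => exact ⟨0, by ext x; simp, by simp⟩
    | add a a' ha ha' =>
      obtain ⟨b, hb, hb'⟩ := ha
      obtain ⟨d, hd, hd'⟩ := ha'
      refine ⟨b + d, ?_, ?_⟩
      · ext x
        simp [hb, hd]
      · simp [hb', hd']
    | single c z =>
      refine ⟨AddMonoidAlgebra.single c (starRingEnd ℂ z), ?_, ?_⟩
      · ext x
        rw [ev_single, ev_single, map_mul, conj_sgn]
      · rw [rep_single, rep_single, star_smul, star_left, central_inv]
        rfl
  rw [op_ev, ← hb', ← op_ev, hb]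

theorem op_mem_groupVN (f : Dual Γ → ℂ) : op f ∈ groupVN (HeisExt Γ) := by
  rw [op]
  split_ifs with h
  · rw [rep_eq_sum]
    exact sum_mem fun c _ => (groupVN (HeisExt Γ)).toStarSubalgebra.smul_mem
      (left_mem_groupVN _) _
  · exact zero_mem _

theorem left_mul_op {f : Dual Γ → ℂ} (hf : Cyl f) (q : HeisExt Γ) :
    left q * op f = op (fun x => f (act q.g⁻¹ x)) * left q := by
  obtain ⟨a, rfl⟩ := hf.exists_ev
  obtain ⟨b, hb, hb'⟩ : ∃ b, (ev b = fun x => ev a (act q.g⁻¹ x)) ∧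
      left q * rep a = rep b * left q := by
    clear hf
    induction a using AddMonoidAlgebra.induction_linear with
    | zero => exact ⟨0, by ext x; simp, by simp⟩
    | add a a' ha ha' =>
      obtain ⟨b, hb, hb'⟩ := ha
      obtain ⟨d, hd, hd'⟩ := ha'
      refine ⟨b + d, ?_, ?_⟩
      · ext x
        simp [hb, hd]
      · simp [mul_add, add_mul, hb', hd']
    | single c z =>
      refine ⟨AddMonoidAlgebra.single (q.g • c) z, ?_, ?_⟩
      · ext x
        rw [ev_single, ev_single, act_apply, inv_inv]
      · rw [rep_single, rep_single, mul_smul_comm, smul_mul_assoc, ← left_mul, ← left_mul,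
          mul_central]
  rw [op_ev, hb', ← hb, op_ev]

theorem coef_op_affine {f : Dual Γ → ℂ} (hf : Cyl f) {φ : Lamp Γ →+ Lamp Γ}
    (hφ : Function.Injective φ) (x₀ : Dual Γ) :
    coef (op fun x : Dual Γ => f (x.comp φ + x₀)) 1 1 = coef (op f) 1 1 := by
  obtain ⟨a, rfl⟩ := hf.exists_ev
  obtain ⟨b, hb, hb'⟩ : ∃ b, (ev b = fun x : Dual Γ => ev a (x.comp φ + x₀)) ∧
      coef (rep b) 1 1 = coef (rep a) 1 1 := by
    clear hf
    induction a using AddMonoidAlgebra.induction_linear with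
    | zero => exact ⟨0, by ext x; simp, by simp⟩
    | add a a' ha ha' =>
      obtain ⟨b, hb, hb'⟩ := ha
      obtain ⟨d, hd, hd'⟩ := ha'
      refine ⟨b + d, ?_, ?_⟩
      · ext x
        simp [hb, hd]
      · simp [hb', hd']
    | single c z =>
      refine ⟨AddMonoidAlgebra.single (φ c) (z * sgn (x₀ c)), ?_, ?_⟩
      · ext x
        rw [ev_single, ev_single, AddMonoidHom.add_apply, sgn_add, AddMonoidHom.comp_apply]
        ring
      · classical
        rw [rep_single, rep_single, coef_smul, coef_smul, coef_left, coef_left, mul_one, mul_one,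
          ← central_zero, central_injective.eq_iff, central_injective.eq_iff]
        by_cases hc : c = 0
        · simp [hc, sgn_zero]
        · rw [if_neg fun h => hc (hφ (h.symm.trans (map_zero φ).symm)), if_neg (Ne.symm hc)]
          simp
  rw [op_ev, ← hb, op_ev, hb']

/-- The integral of a real cylinder function against Haar measure on the dual. -/
def mean (f : Dual Γ → ℝ) : ℝ := (coef (op fun x => (f x : ℂ)) 1 1).re

theorem Cyl.ofReal {f : Dual Γ → ℝ} (hf : Cyl f) : Cyl fun x => (f x : ℂ) :=
  hf.comp _

theorem norm_op_basis_sq {f : Dual Γ → ℂ} (hf : Cyl f) (q : HeisExt Γ) :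
    ‖op f (basis q)‖ ^ 2 = mean fun x => ‖f x‖ ^ 2 := by
  have h1 : (op fun x => (((‖f x‖ ^ 2 : ℝ)) : ℂ)) = star (op f) * op f := by
    rw [star_op hf, ← op_mul (hf.comp _) hf]
    congr 1
    ext x
    rw [← Complex.normSq_eq_conj_mul_self, Complex.normSq_eq_norm_sq]
  have h2 := coef_eq (op_mem_groupVN fun x => (((‖f x‖ ^ 2 : ℝ)) : ℂ)) q q
  rw [mul_inv_cancel] at h2
  rw [mean, ← h2, h1, coef_eq_inner, mul_apply_eq_comp, ContinuousLinearMap.star_eq_adjoint,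
    ContinuousLinearMap.adjoint_inner_right, inner_self_eq_norm_sq_to_K]
  norm_cast

theorem mean_nonneg {f : Dual Γ → ℝ} (hf : Cyl f) (h : ∀ x, 0 ≤ f x) : 0 ≤ mean f := by
  have h1 : Cyl fun x => ((√(f x) : ℝ) : ℂ) := hf.comp fun t => ((√t : ℝ) : ℂ)
  have := norm_op_basis_sq h1 1
  have h2 : (fun x => ‖((√(f x) : ℝ) : ℂ)‖ ^ 2) = f := by
    ext x
    rw [Complex.norm_real, Real.norm_eq_abs, sq_abs, Real.sq_sqrt (h x)]
  rw [h2] at this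
  rw [← this]
  positivity

theorem mean_add {f g : Dual Γ → ℝ} (hf : Cyl f) (hg : Cyl g) :
    mean (fun x => f x + g x) = mean f + mean g := by
  simp only [mean, Complex.ofReal_add]
  rw [op_add hf.ofReal hg.ofReal, coef_add, Complex.add_re]

theorem mean_const (r : ℝ) : mean (fun _ : Dual Γ => r) = r := by
  have : (fun _ : Dual Γ => (r : ℂ)) = ev (algebraMap ℂ _ r) := by
    rw [AlgHom.commutes]
    rfl
  rw [mean, this, op_ev, AlgHom.commutes, Algebra.algebraMap_eq_smul_one, coef_smul, coef_one]
  simp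

theorem mean_mono {f g : Dual Γ → ℝ} (hf : Cyl f) (hg : Cyl g) (h : ∀ x, f x ≤ g x) :
    mean f ≤ mean g := by
  have hfg : Cyl fun x => g x - f x := hg.comp₂ hf (· - ·)
  have h1 := mean_nonneg hfg fun x => sub_nonneg.2 (h x)
  have h2 := mean_add hfg hf
  simp only [sub_add_cancel] at h2
  linarith

theorem Cyl.sum_real {ι : Type*} (D : Finset ι) {f : ι → Dual Γ → ℝ} (hf : ∀ i, Cyl (f i)) :
    Cyl fun x => ∑ i ∈ D, f i x := by
  classical
  induction D using Finset.induction_on with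
  | empty => simpa using Cyl.const (0 : ℝ)
  | insert i D hi ih =>
    simp only [Finset.sum_insert hi]
    exact (hf i).comp₂ ih (· + ·)

theorem mean_sum {ι : Type*} (D : Finset ι) {f : ι → Dual Γ → ℝ} (hf : ∀ i, Cyl (f i)) :
    mean (fun x => ∑ i ∈ D, f i x) = ∑ i ∈ D, mean (f i) := by
  classical
  induction D using Finset.induction_on with
  | empty => simp [mean_const]
  | insert i D hi ih =>
    simp only [Finset.sum_insert hi]
    rw [mean_add (hf i) (Cyl.sum_real D hf), ih]

theorem mean_affine {f : Dual Γ → ℝ} (hf : Cyl f) {φ : Lamp Γ →+ Lamp Γ}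
    (hφ : Function.Injective φ) (x₀ : Dual Γ) :
    mean (fun x : Dual Γ => f (x.comp φ + x₀)) = mean f := by
  rw [mean, coef_op_affine hf.ofReal hφ, mean]

open Classical in
/-- The indicator function of a predicate on the dual. -/
def ind (p : Dual Γ → Prop) (x : Dual Γ) : ℝ := if p x then 1 else 0

theorem Cyl.ind {p : Dual Γ → Prop} (hp : Cyl p) : Cyl (HeisExt.ind p) := by
  classical
  exact hp.comp fun t => if t then (1 : ℝ) else 0

theorem ind_nonneg (p : Dual Γ → Prop) (x : Dual Γ) : 0 ≤ ind p x := by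
  rw [ind]
  split_ifs <;> norm_num

/-- The Haar measure of a cylinder set. -/
def prob (p : Dual Γ → Prop) : ℝ := mean (ind p)

/-- The spectral projection attached to a cylinder set. -/
def pj (p : Dual Γ → Prop) : Ell2 (HeisExt Γ) →L[ℂ] Ell2 (HeisExt Γ) :=
  op fun x => (ind p x : ℂ)

theorem prob_nonneg {p : Dual Γ → Prop} (hp : Cyl p) : 0 ≤ prob p :=
  mean_nonneg hp.ind (ind_nonneg p)

/-- The union bound. -/
theorem prob_le_sum {ι : Type*} (D : Finset ι) {p : Dual Γ → Prop} {q : ι → Dual Γ → Prop}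
    (hp : Cyl p) (hq : ∀ i, Cyl (q i)) (h : ∀ x, p x → ∃ i ∈ D, q i x) :
    prob p ≤ ∑ i ∈ D, prob (q i) := by
  have := mean_mono hp.ind (Cyl.sum_real D fun i => (hq i).ind) fun x => ?_
  · rwa [mean_sum D fun i => (hq i).ind] at this
  · by_cases hx : p x
    · obtain ⟨i, hi, hix⟩ := h x hx
      refine le_trans ?_ (Finset.single_le_sum (fun j _ => ind_nonneg (q j) x) hi)
      simp [ind, hx, hix]
    · rw [show ind p x = 0 from if_neg hx]
      exact Finset.sum_nonneg fun j _ => ind_nonneg (q j) x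

theorem sum_prob_le_one {ι : Type*} (D : Finset ι) {q : ι → Dual Γ → Prop}
    (hq : ∀ i, Cyl (q i)) (h : ∀ x, ∀ i ∈ D, ∀ j ∈ D, q i x → q j x → i = j) :
    ∑ i ∈ D, prob (q i) ≤ 1 := by
  classical
  have := mean_mono (Cyl.sum_real D fun i => (hq i).ind) (Cyl.const (1 : ℝ)) fun x => ?_
  · rwa [mean_sum D fun i => (hq i).ind, mean_const] at this
  · by_cases hx : ∃ i ∈ D, q i x
    · obtain ⟨i, hi, hix⟩ := hx
      rw [Finset.sum_eq_single_of_mem i hi fun j hj hne => ?_]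
      · simp [ind, hix]
      · exact if_neg fun hj' => hne (h x j hj i hi hj' hix)
    · have h0 : ∀ i ∈ D, ind (q i) x = 0 := fun i hi => if_neg fun h => hx ⟨i, hi, h⟩
      rw [Finset.sum_eq_zero h0]
      exact zero_le_one

theorem prob_affine {p : Dual Γ → Prop} (hp : Cyl p) {φ : Lamp Γ →+ Lamp Γ}
    (hφ : Function.Injective φ) (x₀ : Dual Γ) :
    prob (fun x : Dual Γ => p (x.comp φ + x₀)) = prob p :=
  mean_affine hp.ind hφ x₀

theorem prob_act {p : Dual Γ → Prop} (hp : Cyl p) (g : Γ) :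
    prob (fun x => p (act g x)) = prob p := by
  have := prob_affine hp (φ := DistribSMul.toAddMonoidHom (Lamp Γ) g⁻¹)
    (MulAction.injective g⁻¹) 0
  simp only [add_zero] at this
  exact this

theorem pj_and {p q : Dual Γ → Prop} (hp : Cyl p) (hq : Cyl q) :
    pj (fun x => p x ∧ q x) = pj p * pj q := by
  rw [pj, pj, pj, ← op_mul hp.ind.ofReal hq.ind.ofReal]
  congr 1
  ext x
  by_cases h1 : p x <;> by_cases h2 : q x <;> simp [ind, h1, h2]

theorem pj_true : pj (fun _ : Dual Γ => True) = 1 := by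
  simpa [pj, ind] using op_one

theorem pj_false : pj (fun _ : Dual Γ => False) = 0 := by
  simpa [pj, ind] using op_zero

theorem star_pj {p : Dual Γ → Prop} (hp : Cyl p) : star (pj p) = pj p := by
  rw [pj, star_op hp.ind.ofReal]
  simp

theorem sum_pj {ι : Type*} (D : Finset ι) {f : Dual Γ → ι} {p : Dual Γ → Prop} (hf : Cyl f)
    (hp : Cyl p) (h : ∀ x, p x → f x ∈ D) :
    ∑ i ∈ D, pj (fun x => p x ∧ f x = i) = pj p := by
  classical
  have hc : ∀ i, Cyl fun x => p x ∧ f x = i := fun i => hp.comp₂ hf fun a b => a ∧ b = i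
  simp only [pj]
  rw [← op_sum D fun i => (hc i).ind.ofReal]
  congr 1
  ext x
  by_cases hx : p x
  · rw [Finset.sum_eq_single_of_mem (f x) (h x hx)]
    · simp [ind, hx]
    · intro i _ hne
      simp [ind, hne.symm]
  · simp [ind, hx]

theorem left_mul_pj {p : Dual Γ → Prop} (hp : Cyl p) (q : HeisExt Γ) :
    left q * pj p = pj (fun x => p (act q.g⁻¹ x)) * left q :=
  left_mul_op hp.ind.ofReal q

theorem norm_pj_basis_sq {p : Dual Γ → Prop} (hp : Cyl p) (q : HeisExt Γ) :
    ‖pj p (basis q)‖ ^ 2 = prob p := by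
  rw [pj, norm_op_basis_sq hp.ind.ofReal, prob]
  congr 1
  ext x
  rw [ind]
  split_ifs <;> simp

theorem exists_pj_eq_sum {p : Dual Γ → Prop} (hp : Cyl p) :
    ∃ (Z : Finset (Lamp Γ)) (a : Lamp Γ → ℂ), pj p = ∑ c ∈ Z, a c • left (central c) := by
  obtain ⟨a, ha⟩ := hp.ind.ofReal.exists_ev
  exact ⟨_, _, by rw [pj, ← ha, op_ev, rep_eq_sum]⟩

end HeisExt

namespace HeisExt

open Finsupp Polynomial

variable {Γ : Type} [Group Γ]

/-- The label of a group element, read off from the first `b` coordinates of a character. -/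
def label (b : ℕ) (u : Γ) (x : Dual Γ) : Fin (Fintype.card (Fin b → ZMod 2)) :=
  Fintype.equivFin (Fin b → ZMod 2) fun i => x (single u (X ^ (i : ℕ)))

theorem label_act (b : ℕ) (g u : Γ) (x : Dual Γ) : label b (g * u) (act g x) = label b u x := by
  simp [label, act_apply]

theorem label_eq_label_iff {b : ℕ} {u v : Γ} {x : Dual Γ} :
    label b u x = label b v x ↔
      ∀ i : Fin b, x (single u (X ^ (i : ℕ))) = x (single v (X ^ (i : ℕ))) := by
  rw [label, label, (Fintype.equivFin _).apply_eq_iff_eq, funext_iff]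

theorem cyl_label (b : ℕ) (u : Γ) : Cyl (label b u) :=
  (Cyl.pi fun i : Fin b => Cyl.eval (single u (X ^ (i : ℕ)))).comp (Fintype.equivFin _)

theorem cyl_label_eq (b : ℕ) (u v : Γ) : Cyl fun x => label b u x = label b v x :=
  (cyl_label b u).comp₂ (cyl_label b v) (· = ·)

theorem prob_label_eq (b : ℕ) {u v : Γ} (huv : u ≠ v) :
    2 ^ b * prob (fun x => label b u x = label b v x) ≤ 1 := by
  classical
  let y : (Fin b → ZMod 2) → Dual Γ := fun t => ∑ i : Fin b, (AddMonoidHom.mulLeft (t i)).comp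
    ((lcoeff (ZMod 2) (i : ℕ)).toAddMonoidHom.comp (applyAddHom u))
  have hy : ∀ t w (j : Fin b), y t (single w (X ^ (j : ℕ))) = if w = u then t j else 0 := by
    intro t w j
    simp only [y, AddMonoidHom.finsetSum_apply, AddMonoidHom.comp_apply, applyAddHom_apply,
      LinearMap.toAddMonoidHom_coe, lcoeff_apply, AddMonoidHom.coe_mulLeft]
    by_cases hw : w = u
    · simp [hw, coeff_X_pow, Fin.val_inj]
    · simp [hw]
  have hcyl : ∀ t, Cyl fun x => label b u (x + y t) = label b v (x + y t) := fun t => by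
    simpa using (cyl_label_eq b u v).comp_affine (AddMonoidHom.id _) (y t)
  have key := sum_prob_le_one Finset.univ hcyl fun x t _ t' _ ht ht' => by
    rw [label_eq_label_iff] at ht ht'
    ext1 i
    have h1 := ht i
    have h2 := ht' i
    simp only [AddMonoidHom.add_apply, hy, if_true, huv.symm, if_false, add_zero] at h1 h2
    exact add_left_cancel (h1.trans h2.symm)
  have hprob : ∀ t, prob (fun x => label b u (x + y t) = label b v (x + y t)) =
      prob fun x => label b u x = label b v x := fun t => by
    simpa using prob_affine (cyl_label_eq b u v) (φ := AddMonoidHom.id _) (fun _ _ h => h) (y t)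
  simpa [hprob] using key

/-- The label of `u` is the strict minimum over `U`. -/
def minAt (b : ℕ) (U : Finset Γ) (u : Γ) (x : Dual Γ) : Prop :=
  u ∈ U ∧ ∀ v ∈ U, v ≠ u → label b u x < label b v x

theorem cyl_minAt (b : ℕ) (U : Finset Γ) (u : Γ) : Cyl (minAt b U u) := by
  have h1 : ∀ v, Cyl fun x => v ≠ u → label b u x < label b v x := fun v =>
    (cyl_label b u).comp₂ (cyl_label b v) fun s t => v ≠ u → s < t
  exact (Cyl.forall_finset U h1).comp fun p => u ∈ U ∧ p

theorem minAt_unique {b : ℕ} {U : Finset Γ} {u v : Γ} {x : Dual Γ} (hu : minAt b U u x)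
    (hv : minAt b U v x) : u = v := by
  by_contra h
  exact lt_asymm (hu.2 v hv.1 (Ne.symm h)) (hv.2 u hu.1 h)

theorem prob_minAt (b : ℕ) (U : Finset Γ) {u : Γ} (hu : u ∈ U) :
    U.card * prob (minAt b U u) ≤ 1 := by
  classical
  have hprob : ∀ v ∈ U, prob (minAt b U v) = prob (minAt b U u) := by
    intro v hv
    have hinj : Function.Injective (mapDomain.addMonoidHom (Equiv.swap u v) : Lamp Γ →+ Lamp Γ) :=
      mapDomain_injective (Equiv.swap u v).injective
    rw [← prob_affine (cyl_minAt b U u) hinj 0]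
    congr 1
    ext x
    have hl : ∀ w, label b w (x.comp (mapDomain.addMonoidHom (Equiv.swap u v)) + 0) =
        label b (Equiv.swap u v w) x := by
      intro w
      simp [label, mapDomain_single]
    have hU : ∀ w, Equiv.swap u v w ∈ U ↔ w ∈ U := by
      intro w
      by_cases h1 : w = u
      · simp [h1, hu, hv]
      · by_cases h2 : w = v
        · simp [h2, hu, hv]
        · rw [Equiv.swap_apply_of_ne_of_ne h1 h2]
    rw [minAt, minAt]
    simp only [hl, hu, hv, true_and, Equiv.swap_apply_left]
    constructor
    · intro h w hw hne
      refine h _ ((hU w).2 hw) fun h' => hne ?_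
      rw [Equiv.swap_apply_eq_iff] at h'
      simpa using h'
    · intro h w hw hne
      have := h _ ((hU w).2 hw) fun h' => hne ?_
      · simpa using this
      · rw [Equiv.swap_apply_eq_iff] at h'
        simpa using h'
  have key := sum_prob_le_one U (fun v => cyl_minAt b U v)
    fun x v _ w _ hv hw => minAt_unique hv hw
  rw [Finset.sum_congr rfl hprob] at key
  simpa using key

theorem exists_minAt {b : ℕ} {U : Finset Γ} (hU : U.Nonempty) {x : Dual Γ}
    (h : ∀ u ∈ U, ∀ v ∈ U, u ≠ v → label b u x ≠ label b v x) : ∃ u, minAt b U u x := by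
  obtain ⟨u, hu, hmin⟩ := U.exists_min_image (fun u => label b u x) hU
  exact ⟨u, hu, fun v hv hne => lt_of_le_of_ne (hmin v hv) (h u hu v hv hne.symm)⟩

open Classical in
/-- Two group elements are close if they are equal or if their translates of `K` have strictly
minimal labels at the same place. -/
def near (b : ℕ) (K : Finset Γ) (x : Dual Γ) (g h : Γ) : Prop :=
  g = h ∨ ∃ u ∈ K.image (g * ·), minAt b (K.image (g * ·)) u x ∧ minAt b (K.image (h * ·)) u x

theorem cyl_near (b : ℕ) (K : Finset Γ) (g h : Γ) : Cyl fun x => near b K x g h := by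
  classical
  refine (Cyl.exists_finset (K.image (g * ·)) fun u => ?_).comp fun p => g = h ∨ p
  exact (cyl_minAt b _ u).comp₂ (cyl_minAt b _ u) (· ∧ ·)

theorem near_equivalence (b : ℕ) (K : Finset Γ) (x : Dual Γ) : Equivalence (near b K x) where
  refl _ := Or.inl rfl
  symm := by
    rintro g h (rfl | ⟨u, -, h1, h2⟩)
    · exact Or.inl rfl
    · exact Or.inr ⟨u, h2.1, h2, h1⟩
  trans := by
    rintro g h k (rfl | ⟨u, hu, h1, h2⟩) (rfl | ⟨v, hv, h3, h4⟩)
    · exact Or.inl rfl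
    · exact Or.inr ⟨v, hv, h3, h4⟩
    · exact Or.inr ⟨u, hu, h1, h2⟩
    · obtain rfl := minAt_unique h2 h3
      exact Or.inr ⟨u, hu, h1, h4⟩

theorem near_act (b : ℕ) (K : Finset Γ) (x : Dual Γ) (k g h : Γ) :
    near b K (act k x) (k * g) (k * h) ↔ near b K x g h := by
  classical
  have hm : ∀ g u, minAt b (K.image (k * g * ·)) (k * u) (act k x) ↔
      minAt b (K.image (g * ·)) u x := by
    intro g u
    simp only [minAt, Finset.mem_image, forall_exists_index, and_imp, forall_apply_eq_imp_iff₂,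
      mul_assoc, mul_right_inj, label_act, ne_eq]
  constructor
  · rintro (h1 | ⟨u, hu, h1, h2⟩)
    · exact Or.inl (mul_left_cancel h1)
    · rw [← mul_inv_cancel_left k u, hm] at h1 h2
      exact Or.inr ⟨_, h1.1, h1, h2⟩
  · rintro (rfl | ⟨u, hu, h1, h2⟩)
    · exact Or.inl rfl
    · rw [← hm] at h1 h2
      exact Or.inr ⟨_, h1.1, h1, h2⟩

theorem prob_near (b : ℕ) (K : Finset Γ) (g h : Γ) :
    prob (fun x => ¬ near b K x g h) = prob fun x => ¬ near b K x 1 (g⁻¹ * h) := by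
  rw [← prob_act ((cyl_near b K g h).comp Not) g]
  congr 1
  ext x
  rw [← near_act b K x g 1, mul_one, mul_inv_cancel_left]

open Classical in
theorem prob_not_near (b : ℕ) (K : Finset Γ) (hK : K.Nonempty) (g : Γ) {ε : ℝ}
    (h1 : ((K.filter fun a => g * a ∉ K).card : ℝ) ≤ ε * K.card)
    (h2 : ((K.filter fun a => g⁻¹ * a ∉ K).card : ℝ) ≤ ε * K.card) :
    prob (fun x => ¬ near b K x 1 g) ≤ 4 * K.card ^ 2 / 2 ^ b + 2 * ε := by
  set V : Finset Γ := K ∪ K.image (g * ·) with hV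
  set B : Finset Γ := (K.filter fun a => g⁻¹ * a ∉ K) ∪ (K.filter fun a => g * a ∉ K).image (g * ·)
    with hB
  have hBV : B ⊆ V := by
    refine Finset.union_subset_union (Finset.filter_subset _ _)
      (Finset.image_subset_image (Finset.filter_subset _ _))
  have hKV : (K.card : ℝ) ≤ V.card := by
    exact_mod_cast Finset.card_le_card Finset.subset_union_left
  have hVK : (V.card : ℝ) ≤ 2 * K.card := by
    have := (Finset.card_union_le K (K.image (g * ·))).trans
      (Nat.add_le_add_left Finset.card_image_le _)
    rw [two_mul]
    exact_mod_cast this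
  have hK0 : (0 : ℝ) < K.card := by exact_mod_cast hK.card_pos
  have hBc : (B.card : ℝ) ≤ 2 * ε * V.card := by
    have h3 : (B.card : ℝ) ≤ (K.filter fun a => g⁻¹ * a ∉ K).card +
        (K.filter fun a => g * a ∉ K).card := by
      exact_mod_cast (Finset.card_union_le _ _).trans (Nat.add_le_add_left Finset.card_image_le _)
    have hε : 0 ≤ ε := by
      by_contra! h
      have : (0 : ℝ) ≤ (K.filter fun a => g * a ∉ K).card := Nat.cast_nonneg _
      nlinarith
    nlinarith
  let p : (Γ × Γ) ⊕ Γ → Dual Γ → Prop := Sum.elim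
    (fun q x => label b q.1 x = label b q.2 x) (fun u => minAt b V u)
  have hp : ∀ i, Cyl (p i) := by
    rintro (q | u)
    · exact cyl_label_eq b q.1 q.2
    · exact cyl_minAt b V u
  have key := prob_le_sum (p := fun x => ¬ near b K x 1 g) (V.offDiag.disjSum B)
    ((cyl_near b K 1 g).comp Not) hp ?_
  swap
  · intro x hx
    by_contra! hno
    have hlab : ∀ u ∈ V, ∀ v ∈ V, u ≠ v → label b u x ≠ label b v x := fun u hu v hv hne =>
      hno (Sum.inl (u, v)) (Finset.inl_mem_disjSum.2 (Finset.mem_offDiag.2 ⟨hu, hv, hne⟩))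
    obtain ⟨u, hu⟩ := exists_minAt (hK.mono Finset.subset_union_left) hlab
    have huB : u ∉ B := fun h => hno (Sum.inr u) (Finset.inr_mem_disjSum.2 h) hu
    have huK : u ∈ K ∧ g⁻¹ * u ∈ K := by
      simp only [hB, Finset.mem_union, Finset.mem_filter, Finset.mem_image, not_or, not_exists,
        not_and, not_not] at huB
      rcases Finset.mem_union.1 hu.1 with h | h
      · exact ⟨h, huB.1 h⟩
      · obtain ⟨a, ha, rfl⟩ := Finset.mem_image.1 h
        have : g * a ∈ K := by
          by_contra h'
          exact huB.2 a ⟨ha, h'⟩ rfl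
        exact ⟨this, by simpa using ha⟩
    have hK1 : K.image ((1 : Γ) * ·) = K := by simp
    refine hx (Or.inr ⟨u, by rw [hK1]; exact huK.1, ⟨by rw [hK1]; exact huK.1, ?_⟩,
      Finset.mem_image.2 ⟨_, huK.2, by simp⟩, ?_⟩)
    · rw [hK1]
      exact fun v hv hne => hu.2 v (Finset.mem_union_left _ hv) hne
    · exact fun v hv hne => hu.2 v (Finset.mem_union_right _ hv) hne
  have hV0 : (0 : ℝ) < V.card := hK0.trans_le hKV
  rw [Finset.sum_disjSum] at key
  have hs1 : ∑ q ∈ V.offDiag, prob (p (Sum.inl q)) ≤ 4 * K.card ^ 2 / 2 ^ b := by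
    have h3 : ∀ q ∈ V.offDiag, prob (p (Sum.inl q)) ≤ 1 / 2 ^ b := by
      intro q hq
      rw [le_div_iff₀ (by positivity), mul_comm]
      exact prob_label_eq b (Finset.mem_offDiag.1 hq).2.2
    refine (Finset.sum_le_card_nsmul _ _ _ h3).trans ?_
    have h4 : (V.offDiag.card : ℝ) ≤ 4 * K.card ^ 2 := by
      have : (V.offDiag.card : ℝ) ≤ V.card * V.card := by
        rw [Finset.offDiag_card]
        exact_mod_cast Nat.sub_le _ _
      nlinarith
    rw [nsmul_eq_mul, mul_one_div]
    gcongr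
  have hs2 : ∑ u ∈ B, prob (p (Sum.inr u)) ≤ 2 * ε := by
    have h3 : ∀ u ∈ B, prob (p (Sum.inr u)) ≤ 1 / V.card := by
      intro u hu
      rw [le_div_iff₀ hV0, mul_comm]
      exact prob_minAt b V (hBV hu)
    refine (Finset.sum_le_card_nsmul _ _ _ h3).trans ?_
    rw [nsmul_eq_mul, mul_one_div, div_le_iff₀ hV0]
    exact hBc
  linarith

theorem exists_near (hF : IsFolner (⊤ : Subgroup Γ)) (S : Finset Γ) {ε : ℝ} (hε : 0 < ε) :
    ∃ b K, ∀ g ∈ S, prob (fun x => ¬ near b K x 1 g) ≤ ε := by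
  classical
  obtain ⟨K, hK, -, hS⟩ := hF (S ∪ S.image (·⁻¹)) (fun _ _ => Subgroup.mem_top _) (ε / 4)
    (by positivity)
  obtain ⟨b, hb⟩ := exists_nat_gt (4 * (K.card : ℝ) ^ 2 / (ε / 2))
  have hb2 : 4 * (K.card : ℝ) ^ 2 / 2 ^ b ≤ ε / 2 := by
    have : (b : ℝ) ≤ 2 ^ b := by exact_mod_cast Nat.lt_two_pow_self.le
    rw [div_lt_iff₀ (by positivity)] at hb
    rw [div_le_iff₀ (by positivity)]
    nlinarith
  refine ⟨b, K, fun g hg => ?_⟩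
  have := prob_not_near b K hK g (ε := ε / 4)
    (le_trans (le_of_eq (by congr)) (hS g (Finset.mem_union_left _ hg)))
    (le_trans (le_of_eq (by congr)) (hS g⁻¹ (Finset.mem_union_right _ (Finset.mem_image_of_mem _ hg))))
  linarith

variable (Γ) in
/-- An equivariant family of finite equivalence relations on `Γ`, continuously parametrised by the
dual of `Lamp Γ`. -/
structure FinRel where
  /-- The relation. -/
  rel : Dual Γ → Γ → Γ → Prop
  equiv : ∀ x, Equivalence (rel x)
  rel_act : ∀ x k g h, rel (act k x) (k * g) (k * h) ↔ rel x g h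
  /-- A finite set containing the class of `1`. -/
  bound : Finset Γ
  mem_bound : ∀ x h, rel x 1 h → h ∈ bound
  cyl : ∀ g h, Cyl fun x => rel x g h

/-- The relation of equality. -/
def FinRel.eq : FinRel Γ where
  rel _ g h := g = h
  equiv _ := eq_equivalence
  rel_act _ k _ _ := mul_right_inj k
  bound := {1}
  mem_bound _ _ hh := Finset.mem_singleton.2 hh.symm
  cyl _ _ := Cyl.const _

theorem FinRel.mem_bound' (E : FinRel Γ) {x : Dual Γ} {g h : Γ} (hgh : E.rel x g h) :
    g⁻¹ * h ∈ E.bound := by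
  refine E.mem_bound (act g⁻¹ x) _ ?_
  rw [← inv_mul_cancel g, E.rel_act]
  exact hgh

/-- The relation whose classes are unions of classes of `E` that are contained in a single class of
`near`. -/
def FinRel.merge (E : FinRel Γ) (b : ℕ) (K : Finset Γ) : FinRel Γ where
  rel x g h := E.rel x g h ∨ ∀ g' h', E.rel x g g' → E.rel x h h' → near b K x g' h'
  equiv x :=
    { refl := fun g => Or.inl ((E.equiv x).refl g)
      symm := by
        rintro _ _ (h1 | h1)
        · exact Or.inl ((E.equiv x).symm h1)
        · exact Or.inr fun g' h' hg hh => (near_equivalence b K x).symm (h1 h' g' hh hg)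
      trans := by
        rintro g h k (h1 | h1) (h2 | h2)
        · exact Or.inl ((E.equiv x).trans h1 h2)
        · exact Or.inr fun g' k' hg hk =>
            h2 g' k' ((E.equiv x).trans ((E.equiv x).symm h1) hg) hk
        · exact Or.inr fun g' k' hg hk => h1 g' k' hg ((E.equiv x).trans h2 hk)
        · exact Or.inr fun g' k' hg hk => (near_equivalence b K x).trans
            (h1 g' h hg ((E.equiv x).refl h)) (h2 h k' ((E.equiv x).refl h) hk) }
  rel_act x k g h := by
    rw [E.rel_act]
    refine or_congr_right ⟨fun H g' h' hg hh => ?_, fun H g' h' hg hh => ?_⟩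
    · rw [← near_act b K x k]
      exact H _ _ ((E.rel_act x k g g').2 hg) ((E.rel_act x k h h').2 hh)
    · rw [← mul_inv_cancel_left k g', E.rel_act] at hg
      rw [← mul_inv_cancel_left k h', E.rel_act] at hh
      rw [← mul_inv_cancel_left k g', ← mul_inv_cancel_left k h', near_act]
      exact H _ _ hg hh
  bound := by
    classical
    exact E.bound ∪ insert 1 (K.biUnion fun k => K.image fun l => k * l⁻¹)
  mem_bound x h hh := by
    classical
    rcases hh with hh | hh
    · exact Finset.mem_union_left _ (E.mem_bound x h hh)
    · refine Finset.mem_union_right _ ?_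
      rcases hh 1 h ((E.equiv x).refl 1) ((E.equiv x).refl h) with rfl | ⟨u, hu, h1, h2⟩
      · exact Finset.mem_insert_self _ _
      · obtain ⟨l, hl, rfl⟩ := Finset.mem_image.1 h2.1
        obtain ⟨k, hk, hkl⟩ := Finset.mem_image.1 hu
        refine Finset.mem_insert_of_mem (Finset.mem_biUnion.2 ⟨k, hk, Finset.mem_image.2 ⟨l, hl, ?_⟩⟩)
        rw [mul_inv_eq_iff_eq_mul, ← hkl, one_mul]
  cyl g h := by
    have h1 : Cyl fun x => ∀ s ∈ E.bound, ∀ t ∈ E.bound,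
        (E.rel x g (g * s) ∧ E.rel x h (h * t)) → near b K x (g * s) (h * t) := by
      refine Cyl.forall_finset _ fun s => Cyl.forall_finset _ fun t => ?_
      exact ((E.cyl _ _).comp₂ (E.cyl _ _) (· ∧ ·)).comp₂ (cyl_near b K _ _) fun p q => p → q
    convert (E.cyl g h).comp₂ h1 (· ∨ ·) using 3 with x
    constructor
    · intro H s _ t _ hst
      exact H _ _ hst.1 hst.2
    · intro H g' h' hg hh
      have := H _ (E.mem_bound' hg) _ (E.mem_bound' hh)
      simp only [mul_inv_cancel_left] at this
      exact this ⟨hg, hh⟩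

theorem FinRel.exists_refine (hF : IsFolner (⊤ : Subgroup Γ)) (E : FinRel Γ) (F : Finset Γ) {ε : ℝ}
    (hε : 0 < ε) : ∃ E' : FinRel Γ, (∀ x g h, E.rel x g h → E'.rel x g h) ∧
      ∀ g ∈ F, prob (fun x => ¬ E'.rel x 1 g) ≤ ε := by
  classical
  have hcard : (0 : ℝ) < (E.bound ×ˢ E.bound).card := by
    have : (1 : Γ) ∈ E.bound := E.mem_bound 0 1 ((E.equiv 0).refl 1)
    exact_mod_cast Finset.card_pos.2 ⟨(1, 1), Finset.mem_product.2 ⟨this, this⟩⟩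
  obtain ⟨b, K, hK⟩ := exists_near hF
    (F.biUnion fun g => (E.bound ×ˢ E.bound).image fun q => q.1⁻¹ * (g * q.2))
    (ε := ε / (E.bound ×ˢ E.bound).card)
    (div_pos hε hcard)
  refine ⟨E.merge b K, fun x g h hgh => Or.inl hgh, fun g hg => ?_⟩
  have key := prob_le_sum (E.bound ×ˢ E.bound) (((E.merge b K).cyl 1 g).comp Not)
    (fun q => (cyl_near b K q.1 (g * q.2)).comp Not) ?_
  swap
  · intro x hx
    by_contra! hno
    refine hx (Or.inr fun g' h' hg' hh' => ?_)
    have := hno (g', g⁻¹ * h')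
      (Finset.mem_product.2 ⟨E.mem_bound x g' hg', E.mem_bound' hh'⟩)
    simpa using this
  refine key.trans ((Finset.sum_le_card_nsmul _ _ (ε / (E.bound ×ˢ E.bound).card)
    fun q hq => ?_).trans ?_)
  · rw [prob_near]
    exact hK _ (Finset.mem_biUnion.2 ⟨g, hg, Finset.mem_image_of_mem _ hq⟩)
  · rw [nsmul_eq_mul]
    exact (mul_div_cancel₀ _ hcard.ne').le

theorem exists_finRel_seq [Countable Γ] (hF : IsFolner (⊤ : Subgroup Γ)) :
    ∃ E : ℕ → FinRel Γ, (∀ m n, m ≤ n → ∀ x g h, (E m).rel x g h → (E n).rel x g h) ∧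
      ∀ g, Filter.Tendsto (fun n => prob fun x => ¬ (E n).rel x 1 g) Filter.atTop (nhds 0) := by
  classical
  obtain ⟨e, he⟩ := exists_surjective_nat Γ
  have hstep : ∀ (n : ℕ) (E : FinRel Γ), ∃ E' : FinRel Γ,
      (∀ x g h, E.rel x g h → E'.rel x g h) ∧
      ∀ g ∈ (Finset.range n).image e, prob (fun x => ¬ E'.rel x 1 g) ≤ 1 / ((n : ℝ) + 1) :=
    fun n E => E.exists_refine hF _ (by positivity)
  choose Φ hΦ hΦ' using hstep
  let E : ℕ → FinRel Γ := fun n => Nat.rec FinRel.eq (fun n E => Φ n E) n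
  refine ⟨E, fun m n hmn => ?_, fun g => ?_⟩
  · induction hmn with
    | refl => exact fun _ _ _ h => h
    | step _ ih => exact fun x g h hgh => hΦ _ _ x g h (ih x g h hgh)
  · rw [← Filter.tendsto_add_atTop_iff_nat 1]
    obtain ⟨k, rfl⟩ := he g
    refine squeeze_zero' (Filter.Eventually.of_forall fun n =>
      prob_nonneg (((E (n + 1)).cyl 1 (e k)).comp Not)) ?_ tendsto_one_div_add_atTop_nhds_zero_nat
    filter_upwards [Filter.eventually_gt_atTop k] with n hn
    exact hΦ' n (E n) (e k) (Finset.mem_image_of_mem _ (Finset.mem_range.2 hn))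

end HeisExt

/-- The star subalgebra spanned by a set whose span contains `1` and its products and adjoints. -/
def StarSubalgebra.ofSpan {A : Type*} [Ring A] [StarRing A] [Algebra ℂ A] [StarModule ℂ A]
    (B : Set A) (h1 : 1 ∈ Submodule.span ℂ B)
    (hmul : ∀ x ∈ B, ∀ y ∈ B, x * y ∈ Submodule.span ℂ B)
    (hstar : ∀ x ∈ B, star x ∈ Submodule.span ℂ B) : StarSubalgebra ℂ A where
  toSubalgebra := (Submodule.span ℂ B).toSubalgebra h1 (by
    intro x y hx hy
    have : Submodule.span ℂ B * Submodule.span ℂ B ≤ Submodule.span ℂ B := by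
      rw [Submodule.span_mul_span, Submodule.span_le]
      rintro _ ⟨x, hx, y, hy, rfl⟩
      exact hmul x hx y hy
    exact this (Submodule.mul_mem_mul hx hy))
  star_mem' := by
    intro x hx
    change star x ∈ Submodule.span ℂ B
    replace hx : x ∈ Submodule.span ℂ B := hx
    induction hx using Submodule.span_induction with
    | mem x h => exact hstar x h
    | zero => simp
    | add x y hx hy ihx ihy => rw [star_add]; exact add_mem ihx ihy
    | smul c x hx ih => rw [star_smul]; exact Submodule.smul_mem _ _ ih

namespace HeisExt

open Ell2 GroupVN Pointwise

variable {Γ : Type} [Group Γ]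

/-- The Heisenberg group over `Lamp Γ` is locally finite. -/
theorem finite_closure {S : Set (HeisExt Γ)} (hS : S.Finite) (h1 : ∀ s ∈ S, s.g = 1) :
    (Subgroup.closure S : Set (HeisExt Γ)).Finite := by
  have hfin : ∀ D : Set (Lamp Γ), D.Finite →
      (Submodule.span (ZMod 2) D : Set (Lamp Γ)).Finite := by
    intro D hD
    have := Module.Finite.span_of_finite (ZMod 2) hD
    have := Module.finite_of_finite (ZMod 2) (M := Submodule.span (ZMod 2) D)
    exact Set.toFinite _
  obtain ⟨V, hV⟩ : ∃ V, V = Submodule.span (ZMod 2) (HeisExt.a '' S) := ⟨_, rfl⟩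
  obtain ⟨W, hW⟩ : ∃ W, W = Submodule.span (ZMod 2) (HeisExt.b '' S) := ⟨_, rfl⟩
  obtain ⟨Z, hZ⟩ : ∃ Z, Z = Submodule.span (ZMod 2)
    (HeisExt.c '' S ∪ Set.image2 (fun v w : Lamp Γ => v * w) V W) := ⟨_, rfl⟩
  have hVf : (V : Set (Lamp Γ)).Finite := hV ▸ hfin _ (hS.image _)
  have hWf : (W : Set (Lamp Γ)).Finite := hW ▸ hfin _ (hS.image _)
  have hZf : (Z : Set (Lamp Γ)).Finite := hZ ▸ hfin _ ((hS.image _).union (hVf.image2 _ hWf))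
  have hVW : ∀ v ∈ V, ∀ w ∈ W, v * w ∈ Z := fun v hv w hw =>
    hZ ▸ Submodule.subset_span (Or.inr ⟨v, hv, w, hw, rfl⟩)
  have key : ∀ q ∈ Subgroup.closure S, q.a ∈ V ∧ q.b ∈ W ∧ q.c ∈ Z ∧ q.g = 1 := by
    intro q hq
    induction hq using Subgroup.closure_induction with
    | mem x hx =>
      refine ⟨hV ▸ Submodule.subset_span ⟨x, hx, rfl⟩, hW ▸ Submodule.subset_span ⟨x, hx, rfl⟩,
        hZ ▸ Submodule.subset_span (Or.inl ⟨x, hx, rfl⟩), h1 x hx⟩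
    | one => exact ⟨V.zero_mem, W.zero_mem, Z.zero_mem, rfl⟩
    | mul x y _ _ hx hy =>
      obtain ⟨a1, b1, c1, g1⟩ := hx
      obtain ⟨a2, b2, c2, g2⟩ := hy
      simp only [mul_a, mul_b, mul_c, mul_g, g1, g2, one_smul, mul_one]
      exact ⟨add_mem a1 a2, add_mem b1 b2, add_mem (add_mem c1 c2) (hVW _ a1 _ b2), trivial⟩
    | inv x _ hx =>
      obtain ⟨a1, b1, c1, g1⟩ := hx
      simp only [inv_a, inv_b, inv_c, inv_g, g1, inv_one, one_smul]
      exact ⟨neg_mem a1, neg_mem b1, add_mem (neg_mem c1) (hVW _ a1 _ b1), trivial⟩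
  refine Set.Finite.subset (Set.Finite.image (fun p : Lamp Γ × Lamp Γ × Lamp Γ =>
    (⟨p.1, p.2.1, p.2.2, 1⟩ : HeisExt Γ)) (hVf.prod (hWf.prod hZf))) fun q hq => ?_
  obtain ⟨ha, hb, hc, hg⟩ := key q hq
  exact ⟨(q.a, q.b, q.c), ⟨ha, hb, hc⟩, by ext1 <;> simp [hg]⟩

/-- The group generated by the conjugates of `S` by the elements of `T`. -/
def conjGroup (S : Set (HeisExt Γ)) (T : Set Γ) : Subgroup (HeisExt Γ) :=
  Subgroup.closure (Set.image2 (fun t s => lift t * s * (lift t)⁻¹) T S)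

theorem conjGroup_mono {S S' : Set (HeisExt Γ)} {T T' : Set Γ} (hS : S ⊆ S') (hT : T ⊆ T') :
    conjGroup S T ≤ conjGroup S' T' :=
  Subgroup.closure_mono (Set.image2_subset hT hS)

theorem mem_conjGroup {S : Set (HeisExt Γ)} {T : Set Γ} (hT : 1 ∈ T) {s : HeisExt Γ}
    (hs : s ∈ S) : s ∈ conjGroup S T :=
  Subgroup.subset_closure ⟨1, hT, s, hs, by simp⟩

theorem conj_mem_conjGroup {S : Set (HeisExt Γ)} {T : Set Γ} {q : HeisExt Γ}
    (hq : q ∈ conjGroup S T) (g : Γ) : lift g * q * (lift g)⁻¹ ∈ conjGroup S (g • T) := by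
  rw [conjGroup] at hq
  induction hq using Subgroup.closure_induction with
  | mem x hx =>
    obtain ⟨t, ht, s, hs, rfl⟩ := hx
    refine Subgroup.subset_closure ⟨g * t, Set.smul_mem_smul_set ht, s, hs, ?_⟩
    simp only [map_mul, mul_inv_rev, mul_assoc]
  | one => simp [one_mem]
  | mul x y _ _ hx hy => simpa [mul_assoc] using mul_mem hx hy
  | inv x _ hx => simpa [mul_assoc] using inv_mem hx

theorem finite_conjGroup {S : Set (HeisExt Γ)} {T : Set Γ} (hS : S.Finite)
    (h1 : ∀ s ∈ S, s.g = 1) (hT : T.Finite) : (conjGroup S T : Set (HeisExt Γ)).Finite := by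
  refine finite_closure (hT.image2 _ hS) ?_
  rintro _ ⟨t, -, s, hs, rfl⟩
  simp [h1 s hs, lift]

/-- The group elements acting as partial isometries with source `T`. -/
def arrows (S : Set (HeisExt Γ)) (T : Set Γ) : Set (HeisExt Γ) :=
  {q | q.g⁻¹ ∈ T ∧ (lift q.g)⁻¹ * q ∈ conjGroup S T}

theorem finite_arrows {S : Set (HeisExt Γ)} {T : Set Γ} (hS : S.Finite)
    (h1 : ∀ s ∈ S, s.g = 1) (hT : T.Finite) : (arrows S T).Finite := by
  refine (hT.image2 (fun t q => lift t⁻¹ * q) (finite_conjGroup hS h1 hT)).subset ?_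
  rintro q ⟨h1, h2⟩
  exact ⟨_, h1, _, h2, by simp⟩

theorem one_mem_arrows {S : Set (HeisExt Γ)} {T : Set Γ} (hT : 1 ∈ T) : 1 ∈ arrows S T := by
  refine ⟨by simpa using hT, ?_⟩
  simp [one_mem]

theorem mul_mem_arrows {S : Set (HeisExt Γ)} {T : Set Γ} {q r : HeisExt Γ}
    (hq : q ∈ arrows S T) (hr : r ∈ arrows S (q.g • T)) : r * q ∈ arrows S T := by
  constructor
  · have := Set.mem_smul_set_iff_inv_smul_mem.1 hr.1
    simpa using this
  · have := conj_mem_conjGroup hr.2 q.g⁻¹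
    rw [inv_smul_smul] at this
    simpa [mul_assoc] using mul_mem this hq.2

theorem inv_mem_arrows {S : Set (HeisExt Γ)} {T : Set Γ} (hT : 1 ∈ T) {q : HeisExt Γ}
    (hq : q ∈ arrows S T) : q⁻¹ ∈ arrows S (q.g • T) := by
  constructor
  · rw [Set.mem_smul_set_iff_inv_smul_mem]
    simpa using hT
  · have := conj_mem_conjGroup (inv_mem hq.2) q.g
    simpa [mul_assoc] using this

theorem pj_add_pj_not {p : Dual Γ → Prop} (hp : Cyl p) : pj p + pj (fun x => ¬ p x) = 1 := by
  classical
  have hf : Cyl fun x => decide (p x) := hp.comp fun t => decide t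
  have := sum_pj Finset.univ hf (Cyl.const True) fun x _ => Finset.mem_univ _
  rw [pj_true] at this
  rw [← this, Fintype.sum_bool]
  simp

namespace FinRel

variable (E : FinRel Γ)

/-- The equivalence class of `1`. -/
def cell (x : Dual Γ) : Set Γ := {h | E.rel x 1 h}

theorem one_mem_cell (x : Dual Γ) : 1 ∈ E.cell x := (E.equiv x).refl 1

theorem finite_cell (x : Dual Γ) : (E.cell x).Finite :=
  E.bound.finite_toSet.subset fun h hh => E.mem_bound x h hh

theorem cyl_cell : Cyl E.cell := by
  have := (Cyl.pi (ι := E.bound) fun h => E.cyl 1 h).comp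
    fun p => {h : Γ | ∃ hh : h ∈ E.bound, p ⟨h, hh⟩}
  convert this using 2 with x
  ext h
  exact ⟨fun hh => ⟨E.mem_bound x h hh, hh⟩, fun hh => hh.2⟩

theorem cyl_cell_eq (A : Set Γ) : Cyl fun x => E.cell x = A := E.cyl_cell.comp fun B => B = A

theorem cell_act {x : Dual Γ} {g : Γ} (hg : g⁻¹ ∈ E.cell x) : E.cell (act g x) = g • E.cell x := by
  ext h
  rw [Set.mem_smul_set_iff_inv_smul_mem, smul_eq_mul]
  have h1 := E.rel_act x g g⁻¹ (g⁻¹ * h)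
  rw [mul_inv_cancel, mul_inv_cancel_left] at h1
  refine h1.trans ⟨fun h => (E.equiv x).trans hg h, fun h => ?_⟩
  exact (E.equiv x).trans ((E.equiv x).symm hg) h

theorem cell_act_inv_eq_iff {x : Dual Γ} {A : Set Γ} {g : Γ} (h1 : 1 ∈ A) (hg : g⁻¹ ∈ A) :
    E.cell (act g⁻¹ x) = A ↔ E.cell x = g • A := by
  constructor
  · rintro rfl
    rw [← E.cell_act hg, act_act, mul_inv_cancel, act_one]
  · intro h
    rw [E.cell_act, h, inv_smul_smul]
    rw [h, Set.mem_smul_set_iff_inv_smul_mem]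
    simpa using h1

theorem left_mul_pj {A : Set Γ} {q : HeisExt Γ} (h1 : 1 ∈ A) (hg : q.g⁻¹ ∈ A) :
    left q * pj (fun x => E.cell x = A) = pj (fun x => E.cell x = q.g • A) * left q := by
  rw [HeisExt.left_mul_pj (E.cyl_cell_eq A)]
  simp only [E.cell_act_inv_eq_iff h1 hg]

/-- Spanning partial isometries of the finite-dimensional algebra attached to `E` and `S`. -/
def units (S : Set (HeisExt Γ)) : Set (Ell2 (HeisExt Γ) →L[ℂ] Ell2 (HeisExt Γ)) :=
  {T | ∃ A ∈ Set.range E.cell, ∃ q ∈ arrows S A, T = left q * pj fun x => E.cell x = A}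

variable {S : Set (HeisExt Γ)}

theorem finite_units (hS : S.Finite) (h1 : ∀ s ∈ S, s.g = 1) : (E.units S).Finite := by
  have : E.units S ⊆ ⋃ A ∈ Set.range E.cell,
      (fun q => left q * pj fun x => E.cell x = A) '' arrows S A := by
    rintro _ ⟨A, hA, q, hq, rfl⟩
    exact Set.mem_biUnion hA ⟨q, hq, rfl⟩
  refine (E.cyl_cell.finite_range.biUnion ?_).subset this
  rintro _ ⟨x, rfl⟩
  exact (finite_arrows hS h1 (E.finite_cell x)).image _

theorem sum_pj_cell {p : Dual Γ → Prop} (hp : Cyl p) :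
    ∑ A ∈ E.cyl_cell.finite_range.toFinset, pj (fun x => p x ∧ E.cell x = A) = pj p :=
  sum_pj _ E.cyl_cell hp fun x _ => (Set.Finite.mem_toFinset _).2 ⟨x, rfl⟩

theorem one_mem_span_units : 1 ∈ Submodule.span ℂ (E.units S) := by
  rw [← pj_true, ← E.sum_pj_cell (Cyl.const True)]
  refine Submodule.sum_mem _ fun A hA => Submodule.subset_span ?_
  obtain ⟨x, rfl⟩ := (Set.Finite.mem_toFinset _).1 hA
  exact ⟨_, ⟨x, rfl⟩, 1, one_mem_arrows (E.one_mem_cell x), by simp [left_one]⟩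

theorem mul_mem_span_units {T U : Ell2 (HeisExt Γ) →L[ℂ] Ell2 (HeisExt Γ)} (hT : T ∈ E.units S)
    (hU : U ∈ E.units S) : T * U ∈ Submodule.span ℂ (E.units S) := by
  obtain ⟨A, -, q, hq, rfl⟩ := hT
  obtain ⟨_, ⟨x, rfl⟩, r, hr, rfl⟩ := hU
  have hmul := E.left_mul_pj (E.one_mem_cell x) hr.1
  by_cases hA : A = r.g • E.cell x
  · subst hA
    refine Submodule.subset_span ⟨_, ⟨x, rfl⟩, q * r, mul_mem_arrows hr hq, ?_⟩
    rw [left_mul, mul_assoc, mul_assoc, hmul, ← mul_assoc (pj _), ← pj_and (E.cyl_cell_eq _)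
      (E.cyl_cell_eq _)]
    simp only [and_self]
  · convert Submodule.zero_mem _
    rw [hmul, mul_assoc, ← mul_assoc (pj _), ← pj_and (E.cyl_cell_eq _) (E.cyl_cell_eq _)]
    have : (fun y => E.cell y = A ∧ E.cell y = r.g • E.cell x) = fun _ => False := by
      ext y
      simp only [iff_false]
      rintro ⟨rfl, h⟩
      exact hA h
    rw [this, pj_false, zero_mul, mul_zero]

theorem star_mem_span_units {T : Ell2 (HeisExt Γ) →L[ℂ] Ell2 (HeisExt Γ)} (hT : T ∈ E.units S) :
    star T ∈ Submodule.span ℂ (E.units S) := by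
  obtain ⟨_, ⟨x, rfl⟩, q, hq, rfl⟩ := hT
  refine Submodule.subset_span ⟨q.g • E.cell x, ⟨act q.g x, E.cell_act hq.1⟩, q⁻¹,
    inv_mem_arrows (E.one_mem_cell x) hq, ?_⟩
  rw [E.left_mul_pj (E.one_mem_cell x) hq.1, star_mul, star_pj (E.cyl_cell_eq _), star_left]

variable (S) in
/-- The star algebra attached to `E` and `S`. -/
def algebra : StarSubalgebra ℂ (Ell2 (HeisExt Γ) →L[ℂ] Ell2 (HeisExt Γ)) :=
  StarSubalgebra.ofSpan (E.units S) E.one_mem_span_units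
    (fun _ hT _ hU => E.mul_mem_span_units hT hU) fun _ hT => E.star_mem_span_units hT

theorem finiteDimensional_algebra (hS : S.Finite) (h1 : ∀ s ∈ S, s.g = 1) :
    FiniteDimensional ℂ (E.algebra S) :=
  FiniteDimensional.span_of_finite ℂ (E.finite_units hS h1)

theorem algebra_subset_groupVN :
    (E.algebra S : Set (Ell2 (HeisExt Γ) →L[ℂ] Ell2 (HeisExt Γ))) ⊆ groupVN (HeisExt Γ) := by
  intro T hT
  have hT' : T ∈ Submodule.span ℂ (E.units S) := hT
  have : Submodule.span ℂ (E.units S) ≤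
      Subalgebra.toSubmodule (groupVN (HeisExt Γ)).toStarSubalgebra.toSubalgebra := by
    rw [Submodule.span_le]
    rintro _ ⟨A, -, q, -, rfl⟩
    exact (groupVN (HeisExt Γ)).toStarSubalgebra.mul_mem (left_mem_groupVN q) (op_mem_groupVN _)
  exact this hT'

theorem algebra_mono {E' : FinRel Γ} {S' : Set (HeisExt Γ)}
    (hE : ∀ x g h, E.rel x g h → E'.rel x g h) (hS : S ⊆ S')
    (hpj : ∀ A ∈ Set.range E.cell, pj (fun x => E.cell x = A) ∈
      Submodule.span ℂ ((fun c => left (central c)) '' {c | central c ∈ S'})) :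
    E.algebra S ≤ E'.algebra S' := by
  have : Submodule.span ℂ (E.units S) ≤ Submodule.span ℂ (E'.units S') := by
    rw [Submodule.span_le]
    rintro _ ⟨A, hA, q, hq, rfl⟩
    rw [← E'.sum_pj_cell (E.cyl_cell_eq A), Finset.mul_sum]
    refine Submodule.sum_mem _ fun A' hA' => ?_
    obtain ⟨y, rfl⟩ := (Set.Finite.mem_toFinset _).1 hA'
    by_cases hne : ∃ x, E.cell x = A ∧ E'.cell x = E'.cell y
    · obtain ⟨x, rfl, hx⟩ := hne
      have hsub : E.cell x ⊆ E'.cell y := hx ▸ fun h hh => hE x 1 h hh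
      rw [pj_and (E.cyl_cell_eq _) (E'.cyl_cell_eq _)]
      have key := hpj _ hA
      revert key
      generalize pj (fun z => E.cell z = E.cell x) = P
      intro key
      induction key using Submodule.span_induction with
      | mem P hP =>
        obtain ⟨c, hc, rfl⟩ := hP
        refine Submodule.subset_span ⟨_, ⟨y, rfl⟩, q * central c, ⟨?_, ?_⟩, ?_⟩
        · simpa [central] using hsub hq.1
        · have := mul_mem (conjGroup_mono hS hsub hq.2)
            (mem_conjGroup (E'.one_mem_cell y) hc)
          simpa [mul_assoc, central] using this
        · rw [left_mul, mul_assoc]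
      | zero => simp
      | add P Q _ _ hP hQ => rw [add_mul, mul_add]; exact add_mem hP hQ
      | smul c P _ hP =>
        rw [smul_mul_assoc, mul_smul_comm]
        exact Submodule.smul_mem _ _ hP
    · push Not at hne
      have : (fun x => E.cell x = A ∧ E'.cell x = E'.cell y) = fun _ => False := by
        ext x
        simpa using hne x
      rw [this, pj_false, mul_zero]
      exact Submodule.zero_mem _
  exact this

theorem left_mul_pj_mem_algebra {q : HeisExt Γ} (hq : (lift q.g)⁻¹ * q ∈ S) :
    left q * pj (fun x => E.rel x 1 q.g⁻¹) ∈ E.algebra S := by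
  change _ ∈ Submodule.span ℂ (E.units S)
  rw [← E.sum_pj_cell (E.cyl 1 _), Finset.mul_sum]
  refine Submodule.sum_mem _ fun A hA => ?_
  obtain ⟨y, rfl⟩ := (Set.Finite.mem_toFinset _).1 hA
  have hiff : ∀ x, E.cell x = E.cell y → (E.rel x 1 q.g⁻¹ ↔ q.g⁻¹ ∈ E.cell y) := by
    intro x hx
    rw [← hx]
    rfl
  by_cases hy : q.g⁻¹ ∈ E.cell y
  · have : (fun x => E.rel x 1 q.g⁻¹ ∧ E.cell x = E.cell y) = fun x => E.cell x = E.cell y := by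
      ext x
      exact ⟨fun h => h.2, fun h => ⟨(hiff x h).2 hy, h⟩⟩
    rw [this]
    exact Submodule.subset_span ⟨_, ⟨y, rfl⟩, q, ⟨hy, mem_conjGroup (E.one_mem_cell y) hq⟩, rfl⟩
  · have : (fun x => E.rel x 1 q.g⁻¹ ∧ E.cell x = E.cell y) = fun _ => False := by
      ext x
      simp only [iff_false]
      rintro ⟨h1, h2⟩
      exact hy ((hiff x h2).1 h1)
    rw [this, pj_false, mul_zero]
    exact Submodule.zero_mem _

theorem exists_finset_central : ∃ Z : Finset (Lamp Γ), ∀ A ∈ Set.range E.cell,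
    pj (fun x => E.cell x = A) ∈
      Submodule.span ℂ ((fun c => left (central c)) '' (Z : Set (Lamp Γ))) := by
  classical
  choose Z a hZ using fun A => exists_pj_eq_sum (E.cyl_cell_eq A)
  refine ⟨E.cyl_cell.finite_range.toFinset.biUnion Z, fun A hA => ?_⟩
  rw [hZ]
  refine Submodule.sum_mem _ fun c hc => Submodule.smul_mem _ _ (Submodule.subset_span ⟨c, ?_, rfl⟩)
  exact Finset.mem_biUnion.2 ⟨A, (Set.Finite.mem_toFinset _).2 hA, hc⟩

end FinRel

/-- An operator commuting with compressions of `left q` by projections tending to `1` commutes with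
`left q`. -/
theorem commute_left_of_tendsto {p : ℕ → Dual Γ → Prop} (hp : ∀ n, Cyl (p n))
    (hlim : Filter.Tendsto (fun n => prob fun x => ¬ p n x) Filter.atTop (nhds 0))
    {q : HeisExt Γ} {T : Ell2 (HeisExt Γ) →L[ℂ] Ell2 (HeisExt Γ)}
    (hT : ∀ᶠ n in Filter.atTop, left q * pj (p n) * T = T * (left q * pj (p n))) :
    left q * T = T * left q := by
  refine coef_ext fun x y => ?_
  rw [← sub_eq_zero, ← coef_sub]
  have hnot : ∀ n, Cyl fun x => ¬ p n x := fun n => (hp n).comp Not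
  have hbd : ∀ᶠ n in Filter.atTop, ‖coef (left q * T - T * left q) x y‖ ≤
      (‖T‖ + ‖T‖ * ‖left q‖) * √(prob fun x => ¬ p n x) := by
    filter_upwards [hT] with n hn
    have hbasis : ∀ r, ‖pj (fun x => ¬ p n x) (basis r)‖ = √(prob fun x => ¬ p n x) := by
      intro r
      rw [← norm_pj_basis_sq (hnot n) r, Real.sqrt_sq (norm_nonneg _)]
    have hb1 : ∀ r : HeisExt Γ, ‖basis r‖ = 1 := by
      intro r
      have := norm_pj_basis_sq (Cyl.const True) r
      rw [pj_true] at this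
      have h2 := inner_basis_left r (basis r)
      rw [basis_apply, if_pos rfl, inner_self_eq_norm_sq_to_K] at h2
      have h3 : ‖basis r‖ ^ 2 = 1 := Complex.ofReal_injective (by simpa using h2)
      nlinarith [norm_nonneg (basis r)]
    have hdec : left q * T - T * left q = left q * pj (fun x => ¬ p n x) * T -
        T * left q * pj (fun x => ¬ p n x) := by
      have h1 : left q = left q * pj (p n) + left q * pj (fun x => ¬ p n x) := by
        rw [← mul_add, pj_add_pj_not (hp n), mul_one]
      calc left q * T - T * left q
          = (left q * pj (p n) + left q * pj (fun x => ¬ p n x)) * T -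
            T * (left q * pj (p n) + left q * pj (fun x => ¬ p n x)) := by rw [← h1]
        _ = _ := by rw [add_mul, mul_add, hn, mul_assoc T]; abel
    rw [hdec, coef_sub, add_mul]
    refine (norm_sub_le _ _).trans (add_le_add ?_ ?_)
    · have h1 : coef (left q * pj (fun x => ¬ p n x) * T) x y =
          inner ℂ (pj (fun x => ¬ p n x) (basis (q⁻¹ * x))) (T (basis y)) := by
        rw [coef, mul_assoc, mul_apply_eq_comp, apply_eq_inner, star_left, left_basis,
          mul_apply_eq_comp, ← ContinuousLinearMap.adjoint_inner_left,
          ← ContinuousLinearMap.star_eq_adjoint, star_pj (hnot n)]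
      rw [h1, mul_comm]
      refine (norm_inner_le_norm _ _).trans ?_
      rw [hbasis]
      refine mul_le_mul_of_nonneg_left ?_ (Real.sqrt_nonneg _)
      simpa [hb1] using T.le_opNorm (basis y)
    · rw [coef_eq_inner]
      refine (norm_inner_le_norm _ _).trans ?_
      rw [hb1, one_mul, mul_apply_eq_comp, ← hbasis y]
      refine ((T * left q).le_opNorm _).trans ?_
      exact mul_le_mul_of_nonneg_right (norm_mul_le _ _) (norm_nonneg _)
  have hlim' : Filter.Tendsto (fun n => (‖T‖ + ‖T‖ * ‖left q‖) * √(prob fun x => ¬ p n x))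
      Filter.atTop (nhds 0) := by
    have := (hlim.sqrt).const_mul (‖T‖ + ‖T‖ * ‖left q‖)
    simpa using this
  exact norm_le_zero_iff.1 (ge_of_tendsto hlim' hbd)

theorem isHyperfinite [Countable Γ] (hF : IsFolner (⊤ : Subgroup Γ)) :
    IsHyperfinite (groupVN (HeisExt Γ)) := by
  obtain ⟨E, hE, hlim⟩ := exists_finRel_seq hF
  obtain ⟨e, he⟩ := exists_surjective_nat (HeisExt Γ)
  choose Z hZ using fun n => (E n).exists_finset_central
  let S : ℕ → Set (HeisExt Γ) := fun n =>
    {q | q.g = 1 ∧ ∃ m < n, e m = q ∨ ∃ c ∈ Z m, central c = q}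
  have hSmono : ∀ m n, m ≤ n → S m ⊆ S n := fun m n hmn q hq =>
    ⟨hq.1, hq.2.imp fun k hk => ⟨hk.1.trans_le hmn, hk.2⟩⟩
  have hSfin : ∀ n, (S n).Finite := by
    intro n
    have : S n ⊆ ⋃ m ∈ Set.Iio n, ({e m} ∪ central '' (Z m : Set (Lamp Γ))) := by
      rintro q ⟨-, m, hm, h⟩
      refine Set.mem_biUnion (show m ∈ Set.Iio n from hm) ?_
      rcases h with h | ⟨c, hc, h⟩
      · exact Or.inl h.symm
      · exact Or.inr ⟨c, hc, h⟩
    exact ((Set.finite_Iio n).biUnion fun m _ =>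
      (Set.finite_singleton _).union ((Z m).finite_toSet.image _)).subset this
  refine ⟨fun n => (E n).algebra (S n), monotone_nat_of_le_succ fun n => ?_,
    fun n => (E n).finiteDimensional_algebra (hSfin n) fun s hs => hs.1,
    fun n => (E n).algebra_subset_groupVN, Set.Subset.antisymm ?_ ?_⟩
  · refine (E n).algebra_mono (hE n _ n.le_succ) (hSmono n _ n.le_succ) fun A hA => ?_
    refine Submodule.span_mono (Set.image_mono fun c hc => ?_) (hZ n A hA)
    exact ⟨rfl, n, n.lt_succ_self, Or.inr ⟨c, hc, rfl⟩⟩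
  · rw [← subVN_top, ← vNGen_subVN, subVN_top]
    exact vNGen_mono (Set.iUnion_subset fun n => (E n).algebra_subset_groupVN)
  · rw [← subVN_top, subVN_eq, ← vNGen_vNGen (⋃ n, _)]
    refine vNGen_mono ?_
    rintro _ ⟨q, -, rfl⟩
    intro T hT
    refine (commute_left_of_tendsto (fun n => (E n).cyl 1 q.g⁻¹) (hlim q.g⁻¹) ?_).symm
    obtain ⟨m, hm⟩ := he ((lift q.g)⁻¹ * q)
    filter_upwards [Filter.eventually_gt_atTop m] with n hn
    refine hT _ (Set.mem_iUnion.2 ⟨n, (E n).left_mul_pj_mem_algebra ⟨?_, m, hn, Or.inl hm⟩⟩)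
    simp [lift]

end HeisExt

/-- for every countable ordinal `α > 1` and every family of nontrivial
countable discrete amenable groups `G_β` (`1 ≤ β < α`) there is a masa `A` in a
hyperfinite II₁ factor `R` whose normalizer tower has length exactly `α`, ends at `R`,
is semi-regular (`𝒩¹(A) = N_R(A)''` is a factor distinct from `R`), and realises each
`G_β` as the quotient of the group of unitary normalisers `N_R(𝒩^β(A))` by the unitary
group `U(𝒩^β(A))` (encoded by a surjective multiplicative map with the appropriate
kernel, together with normality of `U(𝒩^β(A))` in `N_R(𝒩^β(A))`). -/
theorem exists_masa_with_tower_length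
    (α : Ordinal) (hα : 1 < α) (hαcount : α.card ≤ Cardinal.aleph0)
    (G : Ordinal → Type) [∀ β, Group (G β)]
    (hGcount : ∀ β, 1 ≤ β → β < α → Countable (G β))
    (hGnontriv : ∀ β, 1 ≤ β → β < α → Nontrivial (G β))
    (hGamen : ∀ β, 1 ≤ β → β < α → IsAmenable (G β)) :
    ∃ (𝓗 : Type) (_ : NormedAddCommGroup 𝓗) (_ : InnerProductSpace ℂ 𝓗)
      (_ : CompleteSpace 𝓗) (R : VonNeumannAlgebra 𝓗) (A : Set (𝓗 →L[ℂ] 𝓗)),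
      -- R is a hyperfinite II₁ factor
      IsHyperfinite R ∧ IsIIOneFactor R ∧
      -- A is a masa in R
      A ⊆ (R : Set (𝓗 →L[ℂ] 𝓗)) ∧ Set.centralizer A ∩ (R : Set (𝓗 →L[ℂ] 𝓗)) = A ∧
      -- (i) the tower reaches R exactly at stage α
      tower R A α = (R : Set (𝓗 →L[ℂ] 𝓗)) ∧
      (∀ β : Ordinal, β < α → tower R A β ≠ tower R A (β + 1)) ∧
      -- (ii) A is semi-regular: 𝒩¹(A) = N_R(A)'' is a factor distinct from R
      tower R A 1 = vNGen (normSet R A) ∧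
      IsFactorSet (tower R A 1) ∧ tower R A 1 ≠ (R : Set (𝓗 →L[ℂ] 𝓗)) ∧
      -- (iii) N_R(𝒩^β(A)) / U(𝒩^β(A)) ≅ G_β for 1 ≤ β < α
      (∀ β : Ordinal, 1 ≤ β → β < α →
        -- U(𝒩^β(A)) is normal in N_R(𝒩^β(A))
        (∀ u ∈ normSet R (tower R A β), ∀ a ∈ tower R A β,
          a ∈ unitary (𝓗 →L[ℂ] 𝓗) → u * a * star u ∈ tower R A β) ∧
        -- the quotient is isomorphic to G_β
        ∃ φ : (𝓗 →L[ℂ] 𝓗) → G β,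
          (∀ u ∈ normSet R (tower R A β), ∀ v ∈ normSet R (tower R A β),
            φ (u * v) = φ u * φ v) ∧
          (∀ g : G β, ∃ u ∈ normSet R (tower R A β), φ u = g) ∧
          (∀ u ∈ normSet R (tower R A β), (φ u = 1 ↔ u ∈ tower R A β))) := by
  obtain ⟨Γ, _, _, hF, ⟨t⟩⟩ := exists_subgroupTower α hα hαcount G hGcount hGnontriv hGamen
  exact t.exists_masa hα hGnontriv (HeisExt.isHyperfinite hF)

end
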